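/- Let q ≡ 1 (mod 6) be a fixed prime power. As g → ∞, (1/|𝔥(3g)|) ∑_{χ∈𝔥(3g)} L(1/3, χ) is asymptotic to C_q·g, where C_q = ∏_P (1 − (|P|(|P|+1))^{−1}), the product running over monic irreducibles P. -/

import Mathlib

open Polynomial Finset Filter
open scoped Classical

noncomputable section

/-- The monic polynomial `X^n + ∑_{i<n} c i · X^i`; as `c` ranges over `Fin n → Fq`
this parametrizes the monic polynomials of degree `n` over `Fq`. -/
def monicOf {Fq : Type} [Field Fq] (n : ℕ) (c : Fin n → Fq) : Polynomial Fq :=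
  X ^ n + ∑ i : Fin n, C (c i) * X ^ (i : ℕ)

/-- Sum of `φ` over the monic polynomials of degree `n` in `Fq[T]`. -/
def sumMonic {Fq : Type} [Field Fq] [Fintype Fq] (n : ℕ) (φ : Polynomial Fq → ℂ) : ℂ :=
  ∑ c : Fin n → Fq, φ (monicOf n c)

/-- Sum of `φ` over the squarefree monic polynomials of degree `n` in `Fq[T]`. -/
def sumSqfree {Fq : Type} [Field Fq] [Fintype Fq] (n : ℕ) (φ : Polynomial Fq → ℂ) : ℂ :=
  ∑ c : Fin n → Fq, if Squarefree (monicOf n c) then φ (monicOf n c) else 0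

/-- `L(s,χ) = ∑_{F monic} χ(F)|F|^{-s}`, grouped by degree.  For the characters in this
paper the coefficient sums vanish in large degree, so this is a finite sum giving the
analytic continuation of the Dirichlet series. -/
def Lval {Fq : Type} [Field Fq] [Fintype Fq] (q : ℕ) (s : ℝ) (χ : Polynomial Fq → ℂ) : ℂ :=
  ∑' n : ℕ, sumMonic n χ * ((q : ℝ) ^ (-s * (n : ℝ)) : ℝ)

/-- `𝓛(u,χ) = ∑_{F monic} χ(F) u^{deg F}`, grouped by degree. -/
def Lu {Fq : Type} [Field Fq] [Fintype Fq] (u : ℂ) (χ : Polynomial Fq → ℂ) : ℂ :=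
  ∑' n : ℕ, sumMonic n χ * u ^ n

/-- `chi` is the family of cubic residue symbols `chi F = χ_F` on `Fq[T]` determined by the
isomorphism `Ω` from the cube roots of unity of `Fq^*` to `μ₃ ⊂ ℂ^*`. -/
structure IsCubicSymbol (q : ℕ) {Fq : Type} [Field Fq] [Fintype Fq]
    (Ω : Fq → ℂ) (chi : Polynomial Fq → Polynomial Fq → ℂ) : Prop where
  omega_mul : ∀ a b : Fq, a ^ 3 = 1 → b ^ 3 = 1 → Ω (a * b) = Ω a * Ω b
  omega_cube : ∀ a : Fq, a ^ 3 = 1 → (Ω a) ^ 3 = 1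
  omega_inj : ∀ a b : Fq, a ^ 3 = 1 → b ^ 3 = 1 → Ω a = Ω b → a = b
  omega_surj : ∀ z : ℂ, z ^ 3 = 1 → ∃ a : Fq, a ^ 3 = 1 ∧ Ω a = z
  chi_one : ∀ a : Polynomial Fq, chi 1 a = 1
  chi_mul_left : ∀ F G a : Polynomial Fq, F.Monic → G.Monic →
    chi (F * G) a = chi F a * chi G a
  chi_prime_dvd : ∀ P a : Polynomial Fq, P.Monic → Irreducible P → P ∣ a → chi P a = 0
  chi_prime_not_dvd : ∀ P a : Polynomial Fq, P.Monic → Irreducible P → ¬ P ∣ a →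
    ∃ c : Fq, c ^ 3 = 1 ∧ Ω c = chi P a ∧ P ∣ (a ^ ((q ^ P.natDegree - 1) / 3) - C c)

/-- The monic irreducible polynomials over `Fq`. -/
def MonicIrred (Fq : Type) [Field Fq] : Type := {P : Polynomial Fq // P.Monic ∧ Irreducible P}

/-- `|P| = q^{deg P}` as a real number. -/
def normP {Fq : Type} [Field Fq] (q : ℕ) (P : MonicIrred Fq) : ℝ := (q : ℝ) ^ P.1.natDegree

/-- `C_q = ∏_P (1 - 1/(|P|(|P|+1)))`. -/
def Cq (q : ℕ) (Fq : Type) [Field Fq] : ℝ :=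
  ∏' P : MonicIrred Fq, (1 - (normP q P * (normP q P + 1))⁻¹)

/-- `M_q(s) = ζ_q(3s) ∏_P (1 - |P|^{-3s}/(|P|+1))`. -/
def Mq (q : ℕ) (Fq : Type) [Field Fq] (s : ℝ) : ℝ :=
  (1 - (q : ℝ) ^ (1 - 3 * s))⁻¹ *
    ∏' P : MonicIrred Fq, (1 - (normP q P) ^ (-3 * s) * (normP q P + 1)⁻¹)

set_option linter.unusedSectionVars false

section
variable {K : Type} [Field K] [Fintype K]

/-- The polynomials of degree less than `n`. -/
def low (K : Type) [Field K] [Fintype K] (n : ℕ) : Finset K[X] :=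
  Finset.univ.image (fun c : Fin n → K => ∑ i : Fin n, C (c i) * X ^ (i : ℕ))

/-- The monic polynomials of degree `n`. -/
def monics (K : Type) [Field K] [Fintype K] (n : ℕ) : Finset K[X] :=
  (low K n).image (fun g => X ^ n + g)

lemma coeff_sum_fin (n : ℕ) (c : Fin n → K) (i : ℕ) :
    (∑ j : Fin n, C (c j) * X ^ (j : ℕ)).coeff i = if h : i < n then c ⟨i, h⟩ else 0 := by
  rw [finsetSum_coeff]
  split_ifs with h
  · rw [Finset.sum_eq_single ⟨i, h⟩]
    · simp
    · intro b _ hb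
      rw [coeff_C_mul, coeff_X_pow, if_neg (fun h => hb (Fin.ext h.symm)), mul_zero]
    · simp
  · refine Finset.sum_eq_zero fun b _ => ?_
    rw [coeff_C_mul, coeff_X_pow, if_neg (by omega), mul_zero]

lemma sum_fin_injective (n : ℕ) :
    Function.Injective (fun c : Fin n → K => ∑ i : Fin n, C (c i) * X ^ (i : ℕ)) := by
  intro c d h
  funext i
  have := congrArg (fun p : K[X] => p.coeff (i : ℕ)) h
  simpa only [coeff_sum_fin, dif_pos i.2] using this

lemma mem_low {n : ℕ} {x : K[X]} : x ∈ low K n ↔ x.degree < n := by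
  unfold low
  rw [Finset.mem_image, degree_lt_iff_coeff_zero]
  constructor
  · rintro ⟨c, -, rfl⟩ m hm
    rw [coeff_sum_fin, dif_neg (by omega)]
  · intro h
    refine ⟨fun i => x.coeff i, mem_univ _, ?_⟩
    ext i
    rw [coeff_sum_fin]
    split_ifs with hi
    · rfl
    · exact (h i (by omega)).symm

lemma add_mem_low {n : ℕ} {a b : K[X]} (ha : a ∈ low K n) (hb : b ∈ low K n) :
    a + b ∈ low K n := by
  rw [mem_low, ← mem_degreeLT] at *
  exact add_mem ha hb

lemma sub_mem_low {n : ℕ} {a b : K[X]} (ha : a ∈ low K n) (hb : b ∈ low K n) :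
    a - b ∈ low K n := by
  rw [mem_low, ← mem_degreeLT] at *
  exact sub_mem ha hb

lemma low_mono {m n : ℕ} (h : m ≤ n) {a : K[X]} (ha : a ∈ low K m) : a ∈ low K n := by
  rw [mem_low] at *
  exact ha.trans_le (by exact_mod_cast h)

lemma card_low (n : ℕ) : (low K n).card = Fintype.card K ^ n := by
  unfold low
  rw [Finset.card_image_of_injective _ (sum_fin_injective n)]
  simp

lemma mem_monics {n : ℕ} {f : K[X]} : f ∈ monics K n ↔ f.Monic ∧ f.natDegree = n := by
  unfold monics
  rw [Finset.mem_image]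
  constructor
  · rintro ⟨g, hg, rfl⟩
    rw [mem_low] at hg
    refine ⟨monic_X_pow_add (by simpa using hg), ?_⟩
    rw [natDegree_add_eq_left_of_degree_lt] <;> simp [hg]
  · rintro ⟨hf, rfl⟩
    refine ⟨f - X ^ f.natDegree, ?_, by ring⟩
    rw [mem_low, ← degree_eq_natDegree hf.ne_zero]
    refine degree_sub_lt_left ?_ hf.ne_zero ?_
    · rw [degree_X_pow, degree_eq_natDegree hf.ne_zero]
    · rw [leadingCoeff_X_pow, hf.leadingCoeff]

lemma card_monics (n : ℕ) : (monics K n).card = Fintype.card K ^ n := by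
  unfold monics
  rw [Finset.card_image_of_injective _ (add_right_injective _), card_low]

lemma sum_monics {M : Type*} [AddCommMonoid M] (n : ℕ) (φ : K[X] → M) :
    ∑ f ∈ monics K n, φ f = ∑ g ∈ low K n, φ (X ^ n + g) := by
  unfold monics
  rw [Finset.sum_image (fun _ _ _ _ h => add_right_injective _ h)]

lemma sumMonic_eq (n : ℕ) (φ : K[X] → ℂ) : sumMonic n φ = ∑ f ∈ monics K n, φ f := by
  rw [sum_monics, low, Finset.sum_image (fun _ _ _ _ h => sum_fin_injective n h)]
  rfl

lemma sumSqfree_eq (n : ℕ) (φ : K[X] → ℂ) :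
    sumSqfree n φ = ∑ f ∈ (monics K n).filter Squarefree, φ f := by
  rw [Finset.sum_filter, ← sumMonic_eq]
  rfl

/-- `φ` only depends on its argument modulo `F`. -/
def PeriodicMod {M : Type*} (F : K[X]) (φ : K[X] → M) : Prop :=
  ∀ a b, F ∣ a - b → φ a = φ b

lemma PeriodicMod.of_dvd {M : Type*} {F G : K[X]} {φ : K[X] → M} (h : PeriodicMod F φ)
    (hFG : F ∣ G) : PeriodicMod G φ := fun a b hab => h a b (hFG.trans hab)

lemma PeriodicMod.mod {M : Type*} {F : K[X]} {φ : K[X] → M} (h : PeriodicMod F φ) (a : K[X]) :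
    φ (a %ₘ F) = φ a := h _ _ (dvd_modByMonic_sub a F)

lemma modByMonic_mem_low {F : K[X]} (hF : F.Monic) (a : K[X]) : a %ₘ F ∈ low K F.natDegree := by
  rw [mem_low, ← degree_eq_natDegree hF.ne_zero]
  exact degree_modByMonic_lt _ hF

lemma eq_of_mem_low_of_dvd {F a b : K[X]} (hF : F.Monic) {n : ℕ} (hn : n ≤ F.natDegree)
    (ha : a ∈ low K n) (hb : b ∈ low K n) (h : F ∣ a - b) : a = b := by
  by_contra hne
  have h1 : (a - b).degree < F.degree := by
    refine (mem_low.1 (sub_mem_low ha hb)).trans_le ?_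
    rw [degree_eq_natDegree hF.ne_zero]
    exact_mod_cast hn
  exact absurd (degree_le_of_dvd h (sub_ne_zero.2 hne)) (not_le.2 h1)

lemma sum_residues {ι M : Type*} [AddCommMonoid M] {F : K[X]} (hF : F.Monic) {φ : K[X] → M}
    (hφ : PeriodicMod F φ) (T : Finset ι) (σ : ι → K[X])
    (hT : T.card = Fintype.card K ^ F.natDegree)
    (hσ : ∀ i ∈ T, ∀ j ∈ T, F ∣ σ i - σ j → i = j) :
    ∑ i ∈ T, φ (σ i) = ∑ x ∈ low K F.natDegree, φ x := by
  have hinj : Set.InjOn (fun i => σ i %ₘ F) T := by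
    intro i hi j hj h
    refine hσ i hi j hj ?_
    have h1 := dvd_modByMonic_sub (σ i) F
    have h2 := dvd_modByMonic_sub (σ j) F
    simp only at h
    rw [h] at h1
    have := dvd_sub h2 h1
    rwa [sub_sub_sub_cancel_left] at this
  have him : T.image (fun i => σ i %ₘ F) = low K F.natDegree := by
    apply Finset.eq_of_subset_of_card_le
    · intro x hx
      obtain ⟨i, -, rfl⟩ := Finset.mem_image.1 hx
      exact modByMonic_mem_low hF _
    · rw [Finset.card_image_of_injOn hinj, hT, card_low]
  rw [← him, Finset.sum_image hinj]
  exact Finset.sum_congr rfl fun i _ => (hφ.mod _).symm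

lemma sum_low_residues {M : Type*} [AddCommMonoid M] {F : K[X]} (hF : F.Monic) {φ : K[X] → M}
    (hφ : PeriodicMod F φ) {n : ℕ} (hn : F.natDegree ≤ n) (c : K[X]) :
    ∑ g ∈ low K n, φ (c + g) =
      Fintype.card K ^ (n - F.natDegree) • ∑ x ∈ low K F.natDegree, φ x := by
  have hbij : ∑ g ∈ low K n, φ (c + g) =
      ∑ p ∈ low K (n - F.natDegree) ×ˢ low K F.natDegree, φ (c + (F * p.1 + p.2)) := by
    have hmem : ∀ p ∈ low K (n - F.natDegree) ×ˢ low K F.natDegree, F * p.1 + p.2 ∈ low K n := by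
      rintro ⟨p, r⟩ h
      rw [Finset.mem_product] at h
      refine add_mem_low ?_ (low_mono hn h.2)
      rw [mem_low, degree_mul, degree_eq_natDegree hF.ne_zero]
      by_cases hp : p = 0
      · simp [hp]
      · have h1 := h.1
        simp only at h1
        rw [mem_low, degree_eq_natDegree hp] at h1
        rw [degree_eq_natDegree hp]
        have : p.natDegree < n - F.natDegree := by exact_mod_cast h1
        exact_mod_cast (by omega : F.natDegree + p.natDegree < n)
    have hinj : Set.InjOn (fun p : K[X] × K[X] => F * p.1 + p.2)
        (low K (n - F.natDegree) ×ˢ low K F.natDegree : Finset (K[X] × K[X])) := by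
      rintro ⟨p, r⟩ h ⟨p', r'⟩ h' he
      simp only at he
      rw [Finset.mem_coe, Finset.mem_product] at h h'
      have hr : r = r' := eq_of_mem_low_of_dvd hF le_rfl h.2 h'.2
        ⟨p' - p, by linear_combination he⟩
      subst hr
      have := mul_left_cancel₀ hF.ne_zero (add_right_cancel he)
      rw [this]
    have him : (low K (n - F.natDegree) ×ˢ low K F.natDegree).image
        (fun p : K[X] × K[X] => F * p.1 + p.2) = low K n := by
      apply Finset.eq_of_subset_of_card_le
      · intro x hx
        obtain ⟨p, hp, rfl⟩ := Finset.mem_image.1 hx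
        exact hmem p hp
      · rw [Finset.card_image_of_injOn hinj, Finset.card_product, card_low, card_low, card_low,
          ← pow_add, Nat.sub_add_cancel hn]
    rw [← him, Finset.sum_image hinj]
  rw [hbij, Finset.sum_product]
  have : ∀ p ∈ low K (n - F.natDegree),
      ∑ r ∈ low K F.natDegree, φ (c + (F * p + r)) = ∑ x ∈ low K F.natDegree, φ x := by
    intro p _
    refine sum_residues hF hφ _ (fun r => c + (F * p + r)) (card_low _) ?_
    intro i hi j hj h
    refine eq_of_mem_low_of_dvd hF le_rfl hi hj ?_
    convert h using 1
    ring
  rw [Finset.sum_congr rfl this, Finset.sum_const, card_low]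

lemma sum_monics_residues {M : Type*} [AddCommMonoid M] {F : K[X]} (hF : F.Monic) {φ : K[X] → M}
    (hφ : PeriodicMod F φ) {n : ℕ} (hn : F.natDegree ≤ n) :
    ∑ f ∈ monics K n, φ f =
      Fintype.card K ^ (n - F.natDegree) • ∑ x ∈ low K F.natDegree, φ x := by
  rw [sum_monics, sum_low_residues hF hφ hn]

lemma sum_residues_mul {M : Type*} [AddCommMonoid M] {F : K[X]} (hF : F.Monic) {φ : K[X] → M}
    (hφ : PeriodicMod F φ) {c : K[X]} (hc : IsCoprime F c) :
    ∑ x ∈ low K F.natDegree, φ (c * x) = ∑ x ∈ low K F.natDegree, φ x := by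
  refine sum_residues hF hφ _ (fun x => c * x) (card_low _) ?_
  intro i hi j hj h
  refine eq_of_mem_low_of_dvd hF le_rfl hi hj ?_
  rw [← mul_sub] at h
  exact hc.dvd_of_dvd_mul_left h

/-- An inverse of `a` modulo `F` (when it exists). -/
def invMod (F a : K[X]) : K[X] :=
  if h : ∃ b, F ∣ a * b - 1 then h.choose else 0

lemma invMod_spec {F a : K[X]} (h : IsCoprime F a) : F ∣ a * invMod F a - 1 := by
  have hex : ∃ b, F ∣ a * b - 1 := by
    obtain ⟨u, v, huv⟩ := h
    exact ⟨v, -u, by linear_combination huv⟩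
  rw [invMod, dif_pos hex]
  exact hex.choose_spec

lemma isCoprime_of_dvd_mul_sub_one {F a b : K[X]} (h : F ∣ a * b - 1) : IsCoprime F b := by
  obtain ⟨c, hc⟩ := h
  exact ⟨-c, a, by linear_combination hc⟩

lemma isCoprime_invMod {F a : K[X]} (h : IsCoprime F a) : IsCoprime F (invMod F a) :=
  isCoprime_of_dvd_mul_sub_one (invMod_spec h)

lemma isCoprime_congr {F a b : K[X]} (h : F ∣ a - b) : IsCoprime F a ↔ IsCoprime F b := by
  obtain ⟨c, hc⟩ := h
  have : a = b + F * c := by linear_combination hc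
  rw [this, IsCoprime.add_mul_left_right_iff]

lemma sum_residues_inv {M : Type*} [AddCommMonoid M] {F : K[X]} (hF : F.Monic) {φ : K[X] → M}
    (hφ : PeriodicMod F φ) :
    ∑ x ∈ (low K F.natDegree).filter (IsCoprime F), φ (invMod F x) =
      ∑ x ∈ (low K F.natDegree).filter (IsCoprime F), φ x := by
  have hφ' : PeriodicMod F (fun x => if IsCoprime F x then φ x else 0) := by
    intro a b h
    simp only [isCoprime_congr h, hφ a b h]
  have key := sum_residues hF hφ' (low K F.natDegree)
    (fun x => if IsCoprime F x then invMod F x else x) (card_low _) ?_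
  · rw [Finset.sum_filter, Finset.sum_filter, ← key]
    refine Finset.sum_congr rfl fun x _ => ?_
    by_cases hx : IsCoprime F x
    · simp [hx, isCoprime_invMod hx]
    · simp [hx]
  · intro i hi j hj h
    refine eq_of_mem_low_of_dvd hF le_rfl hi hj ?_
    by_cases h1 : IsCoprime F i <;> by_cases h2 : IsCoprime F j
    · rw [if_pos h1, if_pos h2] at h
      obtain ⟨u, hu⟩ := invMod_spec h1
      obtain ⟨v, hv⟩ := invMod_spec h2
      obtain ⟨w, hw⟩ := h
      have : F * (j * u - i * v - i * j * w) = i - j := by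
        linear_combination (-j) * hu + i * hv + i * j * hw
      exact ⟨_, this.symm⟩
    · rw [if_pos h1, if_neg h2] at h
      exact absurd ((isCoprime_congr h).1 (isCoprime_invMod h1)) h2
    · rw [if_neg h1, if_pos h2] at h
      exact absurd ((isCoprime_congr h).2 (isCoprime_invMod h2)) h1
    · rwa [if_neg h1, if_neg h2] at h
end

section
variable {K : Type} [Field K] [Fintype K]

/-- The residue functional modulo a monic polynomial `F`: the coefficient of `1/T` in `a/F`. -/
def rs (F a : K[X]) : K := (a %ₘ F).coeff (F.natDegree - 1)

lemma rs_add (F a b : K[X]) : rs F (a + b) = rs F a + rs F b := by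
  simp [rs, add_modByMonic]

lemma rs_eq_zero_of_mem_low {F a : K[X]} (hF : F.Monic) (ha : a ∈ low K (F.natDegree - 1)) :
    rs F a = 0 := by
  have h2 := low_mono (Nat.sub_le _ 1) ha
  rw [mem_low] at ha h2
  rw [rs, (modByMonic_eq_self_iff hF).2 (by rwa [degree_eq_natDegree hF.ne_zero])]
  exact coeff_eq_zero_of_degree_lt ha

lemma rs_eq_coeff {F a : K[X]} (hF : F.Monic) (ha : a ∈ low K F.natDegree) :
    rs F a = a.coeff (F.natDegree - 1) := by
  rw [mem_low] at ha
  rw [rs, (modByMonic_eq_self_iff hF).2 (by rwa [degree_eq_natDegree hF.ne_zero])]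

lemma rs_periodic {F : K[X]} (hF : F.Monic) : PeriodicMod F (rs F) := by
  intro a b h
  have : (a - b) %ₘ F = 0 := (modByMonic_eq_zero_iff_dvd hF).2 h
  rw [sub_modByMonic, sub_eq_zero] at this
  rw [rs, rs, this]

lemma rs_one (a : K[X]) : rs 1 a = 0 := by simp [rs]

lemma rs_mul_mul {F G : K[X]} (hF : F.Monic) (hG : G.Monic) (a : K[X]) :
    rs (F * G) (a * G) = rs F a := by
  have h1 : F * G ∣ a * G - (a %ₘ F) * G := by
    rw [← sub_mul]
    refine mul_dvd_mul_right ?_ _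
    rw [← neg_sub, dvd_neg]
    exact dvd_modByMonic_sub a F
  rw [rs_periodic (hF.mul hG) _ _ h1, ← (rs_periodic hF) _ _ (dvd_modByMonic_sub a F)]
  set r := a %ₘ F with hr
  have hr : r ∈ low K F.natDegree := modByMonic_mem_low hF a
  have hn := hF.natDegree_mul hG
  rw [rs_eq_coeff hF hr]
  rcases Nat.eq_zero_or_pos F.natDegree with h0 | h0
  · have : r = 0 := by
      rw [mem_low, h0] at hr
      simpa using hr
    rw [this]
    simp [rs]
  have hrd : r.natDegree ≤ F.natDegree - 1 := by
    rw [mem_low] at hr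
    by_cases hr0 : r = 0
    · simp [hr0]
    · have := (natDegree_lt_iff_degree_lt hr0).2 hr
      omega
  rw [rs_eq_coeff (hF.mul hG), hn, show F.natDegree + G.natDegree - 1 =
    (F.natDegree - 1) + G.natDegree by omega, coeff_mul_add_eq_of_natDegree_le hrd le_rfl,
    hG.coeff_natDegree, mul_one]
  rw [mem_low, degree_mul, hn, degree_eq_natDegree hG.ne_zero]
  rw [mem_low] at hr
  push_cast
  exact WithBot.add_lt_add_right (by simp) hr

lemma rs_mul_eq {F G a b : K[X]} (hF : F.Monic) (hG : G.Monic)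
    (h : F * G ∣ a * F + b * G - 1) (V : K[X]) :
    rs (F * G) V = rs F (V * b) + rs G (V * a) := by
  have h1 : F * G ∣ V - (V * b * G + V * a * F) := by
    obtain ⟨c, hc⟩ := h
    exact ⟨-V * c, by linear_combination (-V) * hc⟩
  rw [rs_periodic (hF.mul hG) _ _ h1, rs_add, rs_mul_mul hF hG, mul_comm F G,
    rs_mul_mul hG hF]

lemma dvd_inv_combination {F G : K[X]} (h : IsCoprime F G) :
    F * G ∣ invMod G F * F + invMod F G * G - 1 := by
  refine h.mul_dvd ?_ ?_
  · obtain ⟨c, hc⟩ := invMod_spec h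
    exact ⟨c + invMod G F, by linear_combination hc⟩
  · obtain ⟨c, hc⟩ := invMod_spec h.symm
    exact ⟨c + invMod F G, by linear_combination hc⟩

/-- The additive character `a ↦ ψ (res (a / F))`. -/
def ee (ψ : AddChar K ℂ) (F a : K[X]) : ℂ := ψ (rs F a)

variable {ψ : AddChar K ℂ}

lemma ee_add (F a b : K[X]) : ee ψ F (a + b) = ee ψ F a * ee ψ F b := by
  rw [ee, rs_add, AddChar.map_add_eq_mul]; rfl

lemma ee_periodic {F : K[X]} (hF : F.Monic) : PeriodicMod F (ee ψ F) :=
  fun a b h => by rw [ee, rs_periodic hF a b h]; rfl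

lemma ee_zero (F : K[X]) : ee ψ F 0 = 1 := by simp [ee, rs]

lemma norm_ee (F a : K[X]) : ‖ee ψ F a‖ = 1 := AddChar.norm_apply ψ _

lemma ee_one (a : K[X]) : ee ψ 1 a = 1 := by simp [ee, rs_one]

lemma ee_mul_ee_neg (F a : K[X]) : ee ψ F a * ee ψ F (-a) = 1 := by
  rw [← ee_add, add_neg_cancel, ee_zero]

lemma conj_ee (F a : K[X]) : (starRingEnd ℂ) (ee ψ F a) = ee ψ F (-a) := by
  have h1 := ee_mul_ee_neg (ψ := ψ) F a
  have h2 : ee ψ F a * (starRingEnd ℂ) (ee ψ F a) = 1 := by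
    rw [Complex.mul_conj, Complex.normSq_eq_norm_sq, norm_ee]; simp
  have h3 : ee ψ F a ≠ 0 := by
    intro h; rw [h] at h1; simp at h1
  exact mul_left_cancel₀ h3 (h2.trans h1.symm)

/-- Detection of residues of small degree by additive characters. -/
lemma sum_low_ee (hψ : ψ ≠ 1) {Q : K[X]} (hQ : Q.Monic) {n L : ℕ} (hL : Q.natDegree = n + L)
    (x : K[X]) :
    ∑ W ∈ low K L, ee ψ Q (W * x) =
      if x %ₘ Q ∈ low K n then (Fintype.card K : ℂ) ^ L else 0 := by
  have hred : ∀ W, ee ψ Q (W * x) = ee ψ Q (W * (x %ₘ Q)) := by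
    intro W
    refine (ee_periodic hQ _ _ ?_).symm
    rw [← mul_sub]
    exact (dvd_modByMonic_sub x Q).mul_left _
  simp only [hred]
  set r := x %ₘ Q with hr
  have hrl : r ∈ low K Q.natDegree := modByMonic_mem_low hQ x
  split_ifs with h
  · rw [Finset.sum_eq_card_nsmul (b := (1 : ℂ)), card_low]
    · simp
    · intro W hW
      rw [ee, rs_eq_zero_of_mem_low hQ, AddChar.map_zero_eq_one]
      by_cases hW0 : W = 0
      · simp [mem_low, hW0]
      by_cases hr0 : r = 0
      · simp [mem_low, hr0]
      rw [mem_low, degree_eq_natDegree hr0] at h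
      rw [mem_low, degree_eq_natDegree hW0] at hW
      rw [mem_low, degree_mul, degree_eq_natDegree hr0, degree_eq_natDegree hW0]
      have h' : r.natDegree < n := by exact_mod_cast h
      have hW' : W.natDegree < L := by exact_mod_cast hW
      exact_mod_cast (by omega : W.natDegree + r.natDegree < Q.natDegree - 1)
  · have hr0 : r ≠ 0 := by
      rintro h0
      rw [h0] at h
      simp [mem_low] at h
    rw [mem_low, degree_eq_natDegree hr0] at h hrl
    have h1 : n ≤ r.natDegree := by
      by_contra hc
      exact h (by exact_mod_cast not_le.1 hc)
    have h2 : r.natDegree < Q.natDegree := by exact_mod_cast hrl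
    obtain ⟨c, hc⟩ : ∃ c, ψ c ≠ 1 := by
      by_contra hc
      push Not at hc
      exact hψ (by ext a; simp [hc a])
    have hlc : r.leadingCoeff ≠ 0 := leadingCoeff_ne_zero.2 hr0
    set W₀ : K[X] := C (c / r.leadingCoeff) * X ^ (Q.natDegree - 1 - r.natDegree) with hW₀
    have hW₀l : W₀ ∈ low K L := by
      rw [mem_low]
      refine (degree_C_mul_X_pow_le _ _).trans_lt ?_
      exact_mod_cast (by omega : Q.natDegree - 1 - r.natDegree < L)
    have hval : ee ψ Q (W₀ * r) = ψ c := by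
      rw [ee, rs_eq_coeff hQ, hW₀]
      · congr 1
        rw [mul_assoc, coeff_C_mul, coeff_X_pow_mul', if_pos (by omega),
          show Q.natDegree - 1 - (Q.natDegree - 1 - r.natDegree) = r.natDegree by omega]
        exact div_mul_cancel₀ _ hlc
      · rw [mem_low, degree_mul]
        refine (add_le_add_left (degree_C_mul_X_pow_le _ _) _).trans_lt ?_
        rw [degree_eq_natDegree hr0]
        exact_mod_cast (by omega :
          Q.natDegree - 1 - r.natDegree + r.natDegree < Q.natDegree)
    have hshift : ∑ W ∈ low K L, ee ψ Q (W * r) = ∑ W ∈ low K L, ee ψ Q ((W + W₀) * r) := by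
      symm
      refine Finset.sum_bij' (fun W _ => W + W₀) (fun W _ => W - W₀) ?_ ?_ ?_ ?_ ?_
      · intro W hW; exact add_mem_low hW hW₀l
      · intro W hW; exact sub_mem_low hW hW₀l
      · intro W _; ring
      · intro W _; ring
      · intro W _; rfl
    simp only [add_mul, ee_add, hval] at hshift
    rw [← Finset.sum_mul] at hshift
    have : (∑ W ∈ low K L, ee ψ Q (W * r)) * (ψ c - 1) = 0 := by
      rw [mul_sub, ← hshift]; ring
    exact (mul_eq_zero.1 this).resolve_right (sub_ne_zero.2 hc)

lemma sum_residues_ee (hψ : ψ ≠ 1) {F : K[X]} (hF : F.Monic) (x : K[X]) :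
    ∑ W ∈ low K F.natDegree, ee ψ F (W * x) =
      if F ∣ x then (Fintype.card K : ℂ) ^ F.natDegree else 0 := by
  rw [sum_low_ee hψ hF (n := 0) (by simp)]
  have : x %ₘ F ∈ low K 0 ↔ F ∣ x := by
    rw [mem_low, ← modByMonic_eq_zero_iff_dvd hF]
    simp
  simp only [this]

end

section
variable {K : Type} [Field K] [Fintype K]

lemma resultant_eq_norm {P : K[X]} (hP : P.Monic) (hi : Irreducible P) (a : K[X]) :
    resultant P a = Algebra.norm K (AdjoinRoot.mk P a) := by
  have : Fact (Irreducible P) := ⟨hi⟩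
  have : FiniteDimensional K (AdjoinRoot P) := (AdjoinRoot.powerBasis hi.ne_zero).finite
  let E := AlgebraicClosure K
  apply (algebraMap K E).injective
  rw [← resultant_map_map, Algebra.norm_eq_prod_embeddings K E]
  have h1 := resultant_eq_prod_eval (P.map (algebraMap K E)) (a.map (algebraMap K E)) a.natDegree
    (by simp) (IsAlgClosed.splits _)
  rw [natDegree_map] at h1
  rw [h1, (hP.map _).leadingCoeff, one_pow, one_mul]
  have hnd : (P.map (algebraMap K E)).roots.Nodup :=
    nodup_roots (PerfectField.separable_of_irreducible hi).map
  have h2 : (Multiset.map (fun x => eval x (a.map (algebraMap K E)))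
      (P.map (algebraMap K E)).roots).prod =
      ∏ x ∈ (P.map (algebraMap K E)).roots.toFinset, eval x (a.map (algebraMap K E)) := by
    rw [Finset.prod, Multiset.toFinset_val, hnd.dedup]
  rw [h2]
  symm
  refine Finset.prod_bij (fun σ _ => σ (AdjoinRoot.root P)) ?_ ?_ ?_ ?_
  · intro σ _
    rw [Multiset.mem_toFinset, mem_roots (hP.map _).ne_zero, IsRoot.def, eval_map_algebraMap,
      aeval_algHom_apply, AdjoinRoot.aeval_eq, AdjoinRoot.mk_self, map_zero]
  · intro σ _ τ _ h
    exact AdjoinRoot.algHom_ext h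
  · intro x hx
    rw [Multiset.mem_toFinset, mem_roots (hP.map _).ne_zero, IsRoot.def, eval_map_algebraMap] at hx
    exact ⟨AdjoinRoot.liftAlgHom P (Algebra.ofId K E) x hx, mem_univ _, AdjoinRoot.liftAlgHom_root ..⟩
  · intro σ _
    rw [eval_map_algebraMap, aeval_algHom_apply, AdjoinRoot.aeval_eq]

/-- The symbol `(a / F)` attached to a multiplicative character `ω` of `K`. -/
def sym (ω : MulChar K ℂ) (F a : K[X]) : ℂ := ω (resultant F a)

variable {ω : MulChar K ℂ}

lemma resultant_mul_left_of_monic {F G : K[X]} (hF : F.Monic) (hG : G.Monic) (a : K[X]) :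
    resultant (F * G) a = resultant F a * resultant G a := by
  rw [hF.natDegree_mul hG, resultant_mul_left _ _ _ _ le_rfl]

lemma resultant_eq_of_natDegree_le {F : K[X]} (hF : F.Monic) {a : K[X]} {n : ℕ}
    (hn : a.natDegree ≤ n) : resultant F a F.natDegree n = resultant F a := by
  obtain ⟨k, rfl⟩ := Nat.exists_eq_add_of_le hn
  rw [resultant_add_right_deg _ _ _ _ _ le_rfl, hF.coeff_natDegree, one_pow, one_mul]

lemma resultant_mul_right_of_monic {F : K[X]} (hF : F.Monic) (a b : K[X]) :
    resultant F (a * b) = resultant F a * resultant F b := by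
  rw [← resultant_mul_right _ _ _ _ le_rfl, resultant_eq_of_natDegree_le hF natDegree_mul_le]

lemma resultant_periodic {F : K[X]} (hF : F.Monic) : PeriodicMod F (fun a => resultant F a) := by
  rintro a b ⟨p, hp⟩
  have : a = b + F * p := by linear_combination hp
  set n := max (max a.natDegree b.natDegree) (p.natDegree + F.natDegree) with hn
  show resultant F a = resultant F b
  rw [← resultant_eq_of_natDegree_le hF (n := n) (a := a) (by omega),
    ← resultant_eq_of_natDegree_le hF (n := n) (a := b) (by omega), this,
    resultant_add_mul_right _ _ _ _ _ (by omega) le_rfl]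

lemma sym_one_left (a : K[X]) : sym ω 1 a = 1 := by
  simp [sym]

lemma sym_mul_left {F G : K[X]} (hF : F.Monic) (hG : G.Monic) (a : K[X]) :
    sym ω (F * G) a = sym ω F a * sym ω G a := by
  rw [sym, resultant_mul_left_of_monic hF hG, map_mul]; rfl

lemma sym_mul_right {F : K[X]} (hF : F.Monic) (a b : K[X]) :
    sym ω F (a * b) = sym ω F a * sym ω F b := by
  rw [sym, resultant_mul_right_of_monic hF, map_mul]; rfl

lemma sym_periodic {F : K[X]} (hF : F.Monic) : PeriodicMod F (sym ω F) := by
  intro a b h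
  rw [sym, sym]
  exact congrArg _ (resultant_periodic hF a b h)

lemma sym_C (F : K[X]) (c : K) : sym ω F (C c) = ω c ^ F.natDegree := by
  rw [sym, natDegree_C, resultant_C_zero_right, map_pow]

lemma sym_one_right (F : K[X]) : sym ω F 1 = 1 := by
  rw [← C_1, sym_C]; simp

lemma sym_eq_zero_iff {F : K[X]} (hF : F.Monic) (a : K[X]) :
    sym ω F a = 0 ↔ ¬ IsCoprime F a := by
  rw [sym, ← isUnit_resultant_iff_isCoprime hF]
  constructor
  · intro h hu
    exact (hu.map ω).ne_zero h
  · exact ω.map_nonunit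

lemma sym_pow_left {F : K[X]} (hF : F.Monic) (n : ℕ) (a : K[X]) :
    sym ω (F ^ n) a = sym ω F a ^ n := by
  induction n with
  | zero => simp [sym_one_left]
  | succ n ih => rw [pow_succ, sym_mul_left (hF.pow n) hF, ih, pow_succ]

lemma sym_pow_right {F : K[X]} (hF : F.Monic) (n : ℕ) (a : K[X]) :
    sym ω F (a ^ n) = sym ω F a ^ n := by
  induction n with
  | zero => simp [sym_one_right]
  | succ n ih => rw [pow_succ, sym_mul_right hF, ih, pow_succ]

lemma omega_cube_eq_one (hω : ω ^ 3 = 1) {c : K} (hc : c ≠ 0) : ω c ^ 3 = 1 := by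
  rw [← MulChar.pow_apply' _ (by norm_num), hω, MulChar.one_apply (isUnit_iff_ne_zero.2 hc)]

lemma omega_neg_one (hω : ω ^ 3 = 1) : ω (-1) = 1 := by
  rw [← omega_cube_eq_one hω (c := -1) (by simp), ← map_pow]
  norm_num

lemma sym_cube (hω : ω ^ 3 = 1) {F a : K[X]} (hF : F.Monic) (h : IsCoprime F a) :
    sym ω F a ^ 3 = 1 :=
  omega_cube_eq_one hω ((isUnit_resultant_iff_isCoprime hF).2 h).ne_zero

lemma norm_sym (hω : ω ^ 3 = 1) {F a : K[X]} (hF : F.Monic) (h : IsCoprime F a) :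
    ‖sym ω F a‖ = 1 := by
  have := congrArg norm (sym_cube hω hF h)
  rw [norm_pow, norm_one] at this
  exact (pow_eq_one_iff_of_nonneg (norm_nonneg _) (by norm_num)).1 this

/-- Cubic reciprocity. -/
lemma sym_reciprocity (hω : ω ^ 3 = 1) (F G : K[X]) : sym ω F G = sym ω G F := by
  rw [sym, resultant_comm, map_mul, map_pow, omega_neg_one hω, one_pow, one_mul]; rfl

lemma exists_sym_ne_one (hω1 : ω ≠ 1) {P : K[X]} (hP : P.Monic) (hi : Irreducible P) :
    ∃ a, IsCoprime P a ∧ sym ω P a ≠ 1 := by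
  have : Fact (Irreducible P) := ⟨hi⟩
  have : FiniteDimensional K (AdjoinRoot P) := (AdjoinRoot.powerBasis hi.ne_zero).finite
  have : Finite (AdjoinRoot P) := Module.finite_of_finite K
  obtain ⟨c, hc⟩ : ∃ c : Kˣ, ω c ≠ 1 := by
    by_contra hc
    push Not at hc
    exact hω1 (MulChar.ext fun a => by rw [hc a, MulChar.one_apply_coe])
  obtain ⟨x, hx⟩ := FiniteField.norm_surjective K (AdjoinRoot P) (c : K)
  obtain ⟨a, rfl⟩ := AdjoinRoot.mk_surjective x
  rw [← resultant_eq_norm hP hi] at hx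
  refine ⟨a, (isUnit_resultant_iff_isCoprime hP).1 (hx ▸ c.isUnit), ?_⟩
  rwa [sym, hx]

end

section
variable {K : Type} [Field K] [Fintype K]

/-- The cubic character of `K` determined by `Ω`. -/
lemma exists_cubic_mulChar {Ω : K → ℂ} {chi : K[X] → K[X] → ℂ}
    (h6 : Fintype.card K % 6 = 1) (hchi : IsCubicSymbol (Fintype.card K) Ω chi) :
    ∃ ω : MulChar K ℂ, ω ^ 3 = 1 ∧ ω ≠ 1 ∧
      ∀ c : K, c ≠ 0 → ω c = Ω (c ^ ((Fintype.card K - 1) / 3)) := by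
  have h3 : (Fintype.card K - 1) / 3 * 3 = Fintype.card K - 1 := by omega
  have hcube : ∀ c : K, c ≠ 0 → (c ^ ((Fintype.card K - 1) / 3)) ^ 3 = 1 := by
    intro c hc
    rw [← pow_mul, h3, FiniteField.pow_card_sub_one_eq_one c hc]
  have hO1 : Ω 1 = 1 := by
    have h1 := hchi.omega_mul 1 1 (by simp) (by simp)
    have h2 := hchi.omega_cube 1 (by simp)
    have h0 : Ω 1 ≠ 0 := by
      intro h; rw [h] at h2; norm_num at h2
    rw [mul_one] at h1
    exact (mul_left_cancel₀ h0 (by rw [mul_one, ← h1])).symm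
  let ω : MulChar K ℂ :=
    { toFun := fun c => if c = 0 then 0 else Ω (c ^ ((Fintype.card K - 1) / 3))
      map_one' := by simp [hO1]
      map_mul' := by
        intro a b
        by_cases ha : a = 0
        · simp [ha]
        by_cases hb : b = 0
        · simp [hb]
        simp only [ha, hb, mul_eq_zero, or_self, if_false, mul_pow]
        exact hchi.omega_mul _ _ (hcube a ha) (hcube b hb)
      map_nonunit' := by
        intro a ha
        rw [isUnit_iff_ne_zero, not_not] at ha
        simp [ha] }
  have hω : ∀ c : K, c ≠ 0 → ω c = Ω (c ^ ((Fintype.card K - 1) / 3)) :=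
    fun c hc => if_neg hc
  refine ⟨ω, ?_, ?_, hω⟩
  · ext c
    rw [MulChar.pow_apply_coe, hω _ c.ne_zero, MulChar.one_apply_coe]
    exact hchi.omega_cube _ (hcube _ c.ne_zero)
  · intro h1
    obtain ⟨g, hg⟩ := IsCyclic.exists_generator (α := Kˣ)
    have h := hω g g.ne_zero
    rw [h1, MulChar.one_apply_coe, ← hO1] at h
    have h' := hchi.omega_inj _ _ (by simp) (hcube _ g.ne_zero) h
    have h'' : g ^ ((Fintype.card K - 1) / 3) = 1 := by
      ext; push_cast; exact h'.symm
    have hord := orderOf_dvd_of_pow_eq_one h''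
    rw [orderOf_eq_card_of_forall_mem_zpowers hg, Nat.card_units, Nat.card_eq_fintype_card] at hord
    have h1c : 1 < Fintype.card K := Fintype.one_lt_card
    have := Nat.le_of_dvd (by omega) hord
    omega

lemma chi_prime_eq_sym {Ω : K → ℂ} {chi : K[X] → K[X] → ℂ} {ω : MulChar K ℂ}
    (h6 : Fintype.card K % 6 = 1) (hchi : IsCubicSymbol (Fintype.card K) Ω chi)
    (hω : ∀ c : K, c ≠ 0 → ω c = Ω (c ^ ((Fintype.card K - 1) / 3)))
    {P : K[X]} (hP : P.Monic) (hi : Irreducible P) (a : K[X]) : chi P a = sym ω P a := by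
  by_cases hd : P ∣ a
  · rw [hchi.chi_prime_dvd P a hP hi hd, eq_comm, sym_eq_zero_iff hP,
      hi.coprime_iff_not_dvd, not_not]
    exact hd
  obtain ⟨c, hc3, hcΩ, hcd⟩ := hchi.chi_prime_not_dvd P a hP hi hd
  have hcop : IsCoprime P a := hi.coprime_iff_not_dvd.2 hd
  have hr : resultant P a ≠ 0 := ((isUnit_resultant_iff_isCoprime hP).2 hcop).ne_zero
  rw [sym, hω _ hr, ← hcΩ]
  congr 1
  have : Fact (Irreducible P) := ⟨hi⟩
  have : FiniteDimensional K (AdjoinRoot P) := (AdjoinRoot.powerBasis hi.ne_zero).finite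
  have : Finite (AdjoinRoot P) := Module.finite_of_finite K
  have hfr : Module.finrank K (AdjoinRoot P) = P.natDegree := by
    rw [(AdjoinRoot.powerBasis hi.ne_zero).finrank, AdjoinRoot.powerBasis_dim]
  have hcd' : Nat.card (AdjoinRoot P) = Fintype.card K ^ P.natDegree := by
    rw [Module.natCard_eq_pow_finrank (K := K), hfr, Nat.card_eq_fintype_card]
  apply (algebraMap K (AdjoinRoot P)).injective
  rw [map_pow, resultant_eq_norm hP hi, FiniteField.algebraMap_norm_eq_pow, hcd',
    Nat.card_eq_fintype_card, ← pow_mul]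
  have hdiv : Fintype.card K - 1 ∣ Fintype.card K ^ P.natDegree - 1 := by
    simpa using Nat.sub_dvd_pow_sub_pow (Fintype.card K) 1 P.natDegree
  have hexp : (Fintype.card K ^ P.natDegree - 1) / (Fintype.card K - 1) *
      ((Fintype.card K - 1) / 3) = (Fintype.card K ^ P.natDegree - 1) / 3 := by
    obtain ⟨k, hk⟩ := hdiv
    have h1c : 1 < Fintype.card K := Fintype.one_lt_card
    have h3 : (Fintype.card K - 1) = 3 * ((Fintype.card K - 1) / 3) := by omega
    rw [hk, Nat.mul_div_cancel_left _ (by omega)]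
    conv_rhs => rw [h3, mul_assoc, Nat.mul_div_cancel_left _ (by norm_num)]
    ring
  rw [hexp, ← map_pow, AdjoinRoot.algebraMap_eq, AdjoinRoot.of]
  rw [← AdjoinRoot.mk_eq_mk] at hcd
  exact hcd.symm

lemma monic_induction {p : K[X] → Prop} (h1 : p 1)
    (hmul : ∀ P G : K[X], P.Monic → Irreducible P → G.Monic → p G → p (P * G)) :
    ∀ F : K[X], F.Monic → p F := by
  intro F
  induction hn : F.natDegree using Nat.strong_induction_on generalizing F with
  | _ n ih =>
    intro hF
    by_cases h0 : F.natDegree = 0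
    · rwa [eq_one_of_monic_natDegree_zero hF h0]
    · obtain ⟨P, hP, hi, G, rfl⟩ := exists_monic_irreducible_factor F
        (fun hu => h0 (natDegree_eq_zero_of_isUnit hu))
      have hG : G.Monic := hP.of_mul_monic_left hF
      have := hi.natDegree_pos
      rw [hP.natDegree_mul hG] at hn
      exact hmul P G hP hi hG (ih _ (by omega) G rfl hG)

lemma chi_eq_sym {Ω : K → ℂ} {chi : K[X] → K[X] → ℂ} {ω : MulChar K ℂ}
    (h6 : Fintype.card K % 6 = 1) (hchi : IsCubicSymbol (Fintype.card K) Ω chi)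
    (hω : ∀ c : K, c ≠ 0 → ω c = Ω (c ^ ((Fintype.card K - 1) / 3)))
    {F : K[X]} (hF : F.Monic) (a : K[X]) : chi F a = sym ω F a := by
  refine monic_induction (p := fun F => chi F a = sym ω F a) ?_ ?_ F hF
  · rw [hchi.chi_one, sym_one_left]
  · intro P G hP hi hG ih
    rw [hchi.chi_mul_left P G a hP hG, sym_mul_left hP hG, ih, chi_prime_eq_sym h6 hchi hω hP hi]
end

section
variable {K : Type} [Field K] [Fintype K]

/-- `φ` is a character of the unit group modulo `F`, extended by zero. -/
structure IsUnitChar (F : K[X]) (φ : K[X] → ℂ) : Prop where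
  periodic : PeriodicMod F φ
  map_mul : ∀ a b, φ (a * b) = φ a * φ b
  norm_eq_one : ∀ a, IsCoprime F a → ‖φ a‖ = 1
  eq_zero : ∀ a, ¬ IsCoprime F a → φ a = 0

lemma isUnitChar_sym {ω : MulChar K ℂ} (hω : ω ^ 3 = 1) {F : K[X]} (hF : F.Monic) :
    IsUnitChar F (sym ω F) where
  periodic := sym_periodic hF
  map_mul := sym_mul_right hF
  norm_eq_one := fun _ h => norm_sym hω hF h
  eq_zero := fun a h => (sym_eq_zero_iff hF a).2 h

/-- The Gauss sum attached to `φ` modulo `F` with shift `V`. -/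
def gs (ψ : AddChar K ℂ) (φ : K[X] → ℂ) (F V : K[X]) : ℂ :=
  ∑ x ∈ low K F.natDegree, φ x * ee ψ F (x * V)

variable {ψ : AddChar K ℂ}

lemma ee_mul_periodic {F : K[X]} (hF : F.Monic) (V : K[X]) :
    PeriodicMod F (fun x => ee ψ F (x * V)) := by
  intro a b h
  refine ee_periodic hF _ _ ?_
  rw [← sub_mul]
  exact h.mul_right _

lemma PeriodicMod.mul {F : K[X]} {φ χ : K[X] → ℂ} (h : PeriodicMod F φ) (h' : PeriodicMod F χ) :
    PeriodicMod F (fun x => φ x * χ x) := fun a b hab => by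
  simp only [h a b hab, h' a b hab]

lemma gs_one {φ : K[X] → ℂ} (V : K[X]) : gs ψ φ 1 V = φ 0 := by
  have : low K 0 = {0} := by
    ext x; simp [mem_low]
  simp [gs, this, ee_one]

lemma gs_scale {F : K[X]} (hF : F.Monic) {φ : K[X] → ℂ} (hφ : IsUnitChar F φ) {c : K[X]}
    (hc : IsCoprime F c) (V : K[X]) : φ c * gs ψ φ F (c * V) = gs ψ φ F V := by
  have hper : PeriodicMod F (fun x => φ x * ee ψ F (x * V)) :=
    hφ.periodic.mul (ee_mul_periodic hF V)
  rw [gs, gs, ← sum_residues_mul hF hper hc, Finset.mul_sum]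
  refine Finset.sum_congr rfl fun x _ => ?_
  rw [hφ.map_mul, ← mul_assoc, ← mul_assoc, mul_comm x c]

lemma exists_gcd_factorization {F : K[X]} (hF : F.Monic) (V : K[X]) :
    ∃ E F₀ V₀ : K[X], E.Monic ∧ F₀.Monic ∧ F = E * F₀ ∧ V = E * V₀ ∧ IsCoprime F₀ V₀ := by
  have hg : gcd F V ≠ 0 := fun h => hF.ne_zero ((gcd_eq_zero_iff F V).1 h).1
  have hgm : (gcd F V).Monic := by
    have := normalize_gcd F V
    rw [← this]
    exact Polynomial.monic_normalize hg
  obtain ⟨F₀, hF₀⟩ := gcd_dvd_left F V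
  obtain ⟨V₀, hV₀⟩ := gcd_dvd_right F V
  refine ⟨gcd F V, F₀, V₀, hgm, ?_, hF₀, hV₀, ?_⟩
  · refine hgm.of_mul_monic_left (q := F₀) ?_
    rwa [← hF₀]
  · obtain ⟨u, v, huv⟩ := exists_gcd_eq_mul_add_mul F V
    refine ⟨u, v, mul_left_cancel₀ hg ?_⟩
    rw [mul_one]
    linear_combination (-1 : K[X]) * huv - u * hF₀ - v * hV₀

lemma gs_norm_sq_le (hψ : ψ ≠ 1) {F E F₀ V₀ V : K[X]} {φ : K[X] → ℂ} (hφ : IsUnitChar F φ)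
    (hE : E.Monic) (hF₀ : F₀.Monic) (hF : F = E * F₀) (hV : V = E * V₀)
    (hcop : IsCoprime F₀ V₀) :
    ‖gs ψ φ F V‖ ^ 2 ≤ (Fintype.card K : ℝ) ^ F.natDegree * (Fintype.card K : ℝ) ^ E.natDegree := by
  have hFm : F.Monic := hF ▸ hE.mul hF₀
  have hdeg : F.natDegree = E.natDegree + F₀.natDegree := by rw [hF, hE.natDegree_mul hF₀]
  set U := (low K F.natDegree).filter (IsCoprime F) with hU
  have hUpos : 0 < (U.card : ℝ) := by
    have : 1 %ₘ F ∈ U := by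
      rw [hU, Finset.mem_filter]
      exact ⟨modByMonic_mem_low hFm 1,
        (isCoprime_congr (dvd_modByMonic_sub 1 F)).2 isCoprime_one_right⟩
    exact_mod_cast Finset.card_pos.2 ⟨_, this⟩
  have hsum : ∑ c ∈ low K F.natDegree, gs ψ φ F (c * V) * (starRingEnd ℂ) (gs ψ φ F (c * V)) =
      ∑ x ∈ low K F.natDegree, ∑ y ∈ low K F.natDegree, φ x * (starRingEnd ℂ) (φ y) *
        (if F ∣ (x - y) * V then (Fintype.card K : ℂ) ^ F.natDegree else 0) := by
    simp only [gs, map_sum, Finset.sum_mul_sum]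
    rw [Finset.sum_comm]
    refine Finset.sum_congr rfl fun x _ => ?_
    rw [Finset.sum_comm]
    refine Finset.sum_congr rfl fun y _ => ?_
    rw [← sum_residues_ee hψ hFm, Finset.mul_sum]
    refine Finset.sum_congr rfl fun c _ => ?_
    rw [map_mul, conj_ee, show c * ((x - y) * V) = x * (c * V) + -(y * (c * V)) by ring, ee_add]
    ring
  have hle1 : (U.card : ℝ) * ‖gs ψ φ F V‖ ^ 2 ≤
      ∑ c ∈ low K F.natDegree, ‖gs ψ φ F (c * V)‖ ^ 2 := by
    have h1 : ∑ c ∈ U, ‖gs ψ φ F (c * V)‖ ^ 2 = (U.card : ℝ) * ‖gs ψ φ F V‖ ^ 2 := by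
      rw [Finset.sum_eq_card_nsmul (b := ‖gs ψ φ F V‖ ^ 2), nsmul_eq_mul]
      intro c hc
      rw [hU, Finset.mem_filter] at hc
      rw [← gs_scale hFm hφ hc.2 V, norm_mul, hφ.norm_eq_one c hc.2, one_mul]
    rw [← h1]
    exact Finset.sum_le_sum_of_subset_of_nonneg (Finset.filter_subset _ _)
      (fun _ _ _ => by positivity)
  have hcount : ∀ x : K[X], (((low K F.natDegree).filter (fun y => F ∣ (x - y) * V)).card : ℝ) ≤
      (Fintype.card K : ℝ) ^ E.natDegree := by
    intro x
    have hiff : ∀ y, F ∣ (x - y) * V ↔ F₀ ∣ x - y := by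
      intro y
      rw [hF, hV, show (x - y) * (E * V₀) = E * ((x - y) * V₀) by ring,
        mul_dvd_mul_iff_left hE.ne_zero]
      exact ⟨fun h => hcop.dvd_of_dvd_mul_right h, fun h => h.mul_right _⟩
    simp only [hiff]
    have hper : PeriodicMod F₀ (fun y => if F₀ ∣ x - y then 1 else 0 : K[X] → ℕ) := by
      intro a b h
      have : F₀ ∣ x - a ↔ F₀ ∣ x - b := by
        rw [show x - b = (x - a) + (a - b) by ring, dvd_add_left h]
      simp only [this]
    have h1 := sum_low_residues hF₀ hper (n := F.natDegree) (by omega) 0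
    simp only [zero_add, Finset.sum_boole, Nat.cast_id] at h1
    rw [h1, hdeg, Nat.add_sub_cancel, smul_eq_mul]
    push_cast
    refine mul_le_of_le_one_right (by positivity) ?_
    exact_mod_cast Finset.card_le_one.2 fun a ha b hb => by
      rw [Finset.mem_filter] at ha hb
      refine eq_of_mem_low_of_dvd hF₀ le_rfl ha.1 hb.1 ?_
      have := dvd_sub hb.2 ha.2
      rwa [sub_sub_sub_cancel_left] at this
  have hφle : ∀ x, ‖φ x‖ ≤ if IsCoprime F x then 1 else 0 := by
    intro x
    split_ifs with h
    · exact (hφ.norm_eq_one x h).le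
    · rw [hφ.eq_zero x h, norm_zero]
  have hle2 : ∑ c ∈ low K F.natDegree, ‖gs ψ φ F (c * V)‖ ^ 2 ≤
      (U.card : ℝ) * ((Fintype.card K : ℝ) ^ F.natDegree * (Fintype.card K : ℝ) ^ E.natDegree) := by
    have h1 : ∑ c ∈ low K F.natDegree, ‖gs ψ φ F (c * V)‖ ^ 2 =
        ‖∑ c ∈ low K F.natDegree, gs ψ φ F (c * V) * (starRingEnd ℂ) (gs ψ φ F (c * V))‖ := by
      have : ∀ z : ℂ, z * (starRingEnd ℂ) z = ((‖z‖ ^ 2 : ℝ) : ℂ) := fun z => by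
        rw [Complex.mul_conj, Complex.normSq_eq_norm_sq]
      simp only [this]
      rw [← Complex.ofReal_sum, Complex.norm_of_nonneg]
      exact Finset.sum_nonneg fun _ _ => by positivity
    rw [h1, hsum]
    refine (norm_sum_le _ _).trans ?_
    have h2 : ∀ x ∈ low K F.natDegree, ‖∑ y ∈ low K F.natDegree, φ x * (starRingEnd ℂ) (φ y) *
        (if F ∣ (x - y) * V then (Fintype.card K : ℂ) ^ F.natDegree else 0)‖ ≤
        (if IsCoprime F x then 1 else 0) *
          ((Fintype.card K : ℝ) ^ F.natDegree * (Fintype.card K : ℝ) ^ E.natDegree) := by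
      intro x _
      refine (norm_sum_le _ _).trans ?_
      have h3 : ∀ y ∈ low K F.natDegree, ‖φ x * (starRingEnd ℂ) (φ y) *
          (if F ∣ (x - y) * V then (Fintype.card K : ℂ) ^ F.natDegree else 0)‖ ≤
          (if IsCoprime F x then 1 else 0) * (Fintype.card K : ℝ) ^ F.natDegree *
            (if F ∣ (x - y) * V then 1 else 0) := by
        intro y _
        have hy : ‖φ y‖ ≤ 1 := (hφle y).trans (by split_ifs <;> norm_num)
        have hx := hφle x
        rw [norm_mul, norm_mul, RCLike.norm_conj]
        split_ifs at hx ⊢ <;> simp at hx ⊢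
        · have := mul_le_mul hx hy (norm_nonneg _) zero_le_one
          rw [mul_one] at this
          exact mul_le_of_le_one_left (by positivity) this
        · simp [hx]
      refine (Finset.sum_le_sum h3).trans ?_
      rw [← Finset.mul_sum, Finset.sum_boole, mul_assoc]
      refine mul_le_mul_of_nonneg_left ?_ (by split_ifs <;> norm_num)
      exact mul_le_mul_of_nonneg_left (hcount x) (by positivity)
    refine (Finset.sum_le_sum h2).trans ?_
    rw [← Finset.sum_mul, Finset.sum_boole]
  have := hle1.trans hle2
  exact le_of_mul_le_mul_left this hUpos

lemma exists_gs_norm_le (hψ : ψ ≠ 1) {F : K[X]} (hF : F.Monic) {φ : K[X] → ℂ}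
    (hφ : IsUnitChar F φ) (V : K[X]) :
    ∃ E : K[X], E.Monic ∧ E ∣ F ∧ E ∣ V ∧
      ‖gs ψ φ F V‖ ^ 2 ≤
        (Fintype.card K : ℝ) ^ F.natDegree * (Fintype.card K : ℝ) ^ E.natDegree := by
  obtain ⟨E, F₀, V₀, hE, hF₀, h1, h2, hc⟩ := exists_gcd_factorization hF V
  exact ⟨E, hE, ⟨F₀, h1⟩, ⟨V₀, h2⟩, gs_norm_sq_le hψ hφ hE hF₀ h1 h2 hc⟩

lemma gs_crt {A B : K[X]} (hA : A.Monic) (hB : B.Monic) (hAB : IsCoprime A B)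
    {φ χ : K[X] → ℂ} (hφ : IsUnitChar A φ) (hχ : IsUnitChar B χ) (W : K[X]) :
    gs ψ (fun x => φ x * χ x) (A * B) W = φ B * χ A * (gs ψ φ A W * gs ψ χ B W) := by
  have hper : PeriodicMod (A * B) (fun x => φ x * χ x * ee ψ (A * B) (x * W)) :=
    ((hφ.periodic.of_dvd (dvd_mul_right _ _)).mul (hχ.periodic.of_dvd (dvd_mul_left _ _))).mul
      (ee_mul_periodic (hA.mul hB) W)
  have h := sum_residues (hA.mul hB) hper (low K A.natDegree ×ˢ low K B.natDegree)
    (fun p => p.1 * B + p.2 * A) (by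
      rw [Finset.card_product, card_low, card_low, hA.natDegree_mul hB, pow_add]) (by
      rintro ⟨y, z⟩ h ⟨y', z'⟩ h' hd
      rw [Finset.mem_product] at h h'
      simp only at h h' hd
      have e1 : y = y' := by
        refine eq_of_mem_low_of_dvd hA le_rfl h.1 h'.1 (hAB.dvd_of_dvd_mul_right ?_)
        have := (dvd_mul_right A B).trans hd
        rw [show y * B + z * A - (y' * B + z' * A) = (y - y') * B + A * (z - z') by ring] at this
        exact (dvd_add_left (dvd_mul_right _ _)).1 this
      have e2 : z = z' := by
        refine eq_of_mem_low_of_dvd hB le_rfl h.2 h'.2 (hAB.symm.dvd_of_dvd_mul_right ?_)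
        have := (dvd_mul_left B A).trans hd
        rw [show y * B + z * A - (y' * B + z' * A) = (z - z') * A + B * (y - y') by ring] at this
        exact (dvd_add_left (dvd_mul_right _ _)).1 this
      rw [e1, e2])
  rw [gs, ← h, Finset.sum_product, gs, gs, Finset.sum_mul_sum, Finset.mul_sum]
  refine Finset.sum_congr rfl fun y _ => ?_
  rw [Finset.mul_sum]
  refine Finset.sum_congr rfl fun z _ => ?_
  have e1 : φ (y * B + z * A) = φ y * φ B := by
    rw [← hφ.map_mul]
    exact hφ.periodic _ _ ⟨z, by ring⟩
  have e2 : χ (y * B + z * A) = χ z * χ A := by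
    rw [← hχ.map_mul]
    exact hχ.periodic _ _ ⟨y, by ring⟩
  have e3 : ee ψ (A * B) ((y * B + z * A) * W) = ee ψ A (y * W) * ee ψ B (z * W) := by
    rw [show (y * B + z * A) * W = y * W * B + z * W * A by ring, ee_add]
    congr 1
    · rw [ee, rs_mul_mul hA hB]; rfl
    · rw [ee, mul_comm A B, rs_mul_mul hB hA]; rfl
  rw [e1, e2, e3]
  ring

lemma gs_mul_of_periodic (hψ : ψ ≠ 1) {A B : K[X]} (hA : A.Monic) (hB : B.Monic)
    {φ : K[X] → ℂ} (hφ : PeriodicMod A φ) {V : K[X]} (hV : ¬ B ∣ V) :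
    gs ψ φ (A * B) V = 0 := by
  have hper : PeriodicMod (A * B) (fun x => φ x * ee ψ (A * B) (x * V)) :=
    (hφ.of_dvd (dvd_mul_right _ _)).mul (ee_mul_periodic (hA.mul hB) V)
  have h := sum_residues (hA.mul hB) hper (low K A.natDegree ×ˢ low K B.natDegree)
    (fun p => p.1 + p.2 * A) (by
      rw [Finset.card_product, card_low, card_low, hA.natDegree_mul hB, pow_add]) (by
      rintro ⟨y, z⟩ h ⟨y', z'⟩ h' hd
      rw [Finset.mem_product] at h h'
      simp only at h h' hd
      have e1 : y = y' := by
        refine eq_of_mem_low_of_dvd hA le_rfl h.1 h'.1 ?_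
        have := (dvd_mul_right A B).trans hd
        rw [show y + z * A - (y' + z' * A) = (y - y') + A * (z - z') by ring] at this
        exact (dvd_add_left (dvd_mul_right _ _)).1 this
      subst e1
      have e2 : z = z' := by
        refine eq_of_mem_low_of_dvd hB le_rfl h.2 h'.2 ?_
        rw [show y + z * A - (y + z' * A) = A * (z - z') by ring,
          mul_dvd_mul_iff_left hA.ne_zero] at hd
        exact hd
      rw [e2])
  rw [gs, ← h, Finset.sum_product]
  refine Finset.sum_eq_zero fun y _ => ?_
  have e : ∀ z, φ (y + z * A) * ee ψ (A * B) ((y + z * A) * V) =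
      φ y * ee ψ (A * B) (y * V) * ee ψ B (z * V) := by
    intro z
    have e1 : φ (y + z * A) = φ y := hφ _ _ ⟨z, by ring⟩
    have e2 : ee ψ (A * B) (z * V * A) = ee ψ B (z * V) := by
      rw [ee, mul_comm A B, rs_mul_mul hB hA]; rfl
    rw [e1, show (y + z * A) * V = y * V + z * V * A by ring, ee_add, e2]
    ring
  simp only [e]
  rw [← Finset.mul_sum, sum_residues_ee hψ hB, if_neg hV, mul_zero]

end

section
variable {K : Type} [Field K] [Fintype K]

/-- The cubic Gauss sum modulo `F` with shift `V`. -/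
def cgs (ψ : AddChar K ℂ) (ω : MulChar K ℂ) (V F : K[X]) : ℂ := gs ψ (sym ω F) F V

variable {ψ : AddChar K ℂ} {ω : MulChar K ℂ}

lemma cgs_one (V : K[X]) : cgs ψ ω V 1 = 1 := by
  rw [cgs, gs_one, sym_one_left]

lemma cgs_scale (hω : ω ^ 3 = 1) {F c : K[X]} (hF : F.Monic) (hc : IsCoprime F c) (V : K[X]) :
    sym ω F c * cgs ψ ω (c * V) F = cgs ψ ω V F :=
  gs_scale hF (isUnitChar_sym hω hF) hc V

lemma cgs_cube_mul (hω : ω ^ 3 = 1) {F c : K[X]} (hF : F.Monic) (hc : IsCoprime F c) (V : K[X]) :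
    cgs ψ ω (c ^ 3 * V) F = cgs ψ ω V F := by
  rw [← cgs_scale hω hF (hc.pow_right (n := 3)) V, sym_pow_right hF, sym_cube hω hF hc, one_mul]

lemma cgs_mul (hω : ω ^ 3 = 1) {F G : K[X]} (hF : F.Monic) (hG : G.Monic) (hFG : IsCoprime F G)
    (V : K[X]) : cgs ψ ω V (F * G) = cgs ψ ω (G * V) F * cgs ψ ω V G := by
  have h := gs_crt (ψ := ψ) hF hG hFG (isUnitChar_sym hω hF) (isUnitChar_sym hω hG) V
  have h1 : sym ω (F * G) = fun x => sym ω F x * sym ω G x := by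
    funext x; exact sym_mul_left hF hG x
  have h3 := sym_cube hω hF hFG
  rw [cgs, h1, h, sym_reciprocity hω G F]
  have h2 := cgs_scale (ψ := ψ) hω hF hFG V
  rw [cgs, cgs] at h2
  rw [← h2, cgs, cgs]
  linear_combination (gs ψ (sym ω F) F (G * V) * gs ψ (sym ω G) G V) * h3

lemma cgs_prime_pow_eq_zero (hψ : ψ ≠ 1) {P : K[X]} (hP : P.Monic) {i : ℕ} {V : K[X]}
    (hV : ¬ P ^ i ∣ V) : cgs ψ ω V (P ^ (i + 1)) = 0 := by
  rw [cgs, pow_succ']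
  refine gs_mul_of_periodic hψ hP (hP.pow i) ?_ hV
  intro a b h
  rw [← pow_succ', sym_pow_left hP, sym_pow_left hP, sym_periodic hP a b h]

lemma sum_sym_eq_zero {F a : K[X]} (hF : F.Monic) {φ : K[X] → ℂ} (hφ : IsUnitChar F φ)
    (ha : IsCoprime F a) (h1 : φ a ≠ 1) : ∑ x ∈ low K F.natDegree, φ x = 0 := by
  have h := sum_residues_mul hF hφ.periodic ha
  simp only [hφ.map_mul] at h
  rw [← Finset.mul_sum] at h
  have : (φ a - 1) * ∑ x ∈ low K F.natDegree, φ x = 0 := by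
    rw [sub_mul, h]; ring
  exact (mul_eq_zero.1 this).resolve_left (sub_ne_zero.2 h1)

lemma pow_ne_one_of_cube {z : ℂ} (h3 : z ^ 3 = 1) (h1 : z ≠ 1) {i : ℕ} (hi : ¬ 3 ∣ i) :
    z ^ i ≠ 1 := by
  intro h
  have hd := orderOf_dvd_of_pow_eq_one h3
  rcases (Nat.dvd_prime Nat.prime_three).1 hd with h' | h'
  · exact h1 (orderOf_eq_one_iff.1 h')
  · exact hi (h' ▸ orderOf_dvd_of_pow_eq_one h)

lemma cgs_prime_pow_eq_zero' (hω : ω ^ 3 = 1) (hω1 : ω ≠ 1) {P : K[X]}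
    (hP : P.Monic) (hi : Irreducible P) {i : ℕ} (h3 : ¬ 3 ∣ i) {V : K[X]} (hV : P ^ i ∣ V) :
    cgs ψ ω V (P ^ i) = 0 := by
  obtain ⟨a, ha, ha1⟩ := exists_sym_ne_one hω1 hP hi
  have he : ∀ x, ee ψ (P ^ i) (x * V) = 1 := by
    intro x
    rw [ee_periodic (hP.pow i) _ 0 (by simpa using hV.mul_left x), ee_zero]
  rw [cgs, gs]
  simp only [he, mul_one]
  refine sum_sym_eq_zero (hP.pow i) (isUnitChar_sym hω (hP.pow i)) (ha.pow_left) ?_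
  rw [sym_pow_left hP]
  exact pow_ne_one_of_cube (sym_cube hω hP ha) ha1 h3

lemma sum_low_succ {M : Type*} [AddCommMonoid M] (n : ℕ) (f : K[X] → M) :
    ∑ x ∈ low K (n + 1), f x =
      ∑ x ∈ low K n, f x + ∑ c : Kˣ, ∑ a ∈ monics K n, f (C (c : K) * a) := by
  have hsub : low K n ⊆ low K (n + 1) := fun x hx => low_mono (Nat.le_succ n) hx
  rw [← Finset.sum_sdiff hsub, add_comm]
  congr 1
  have hmem : ∀ x ∈ low K (n + 1) \ low K n, x ≠ 0 ∧ x.natDegree = n := by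
    intro x hx
    rw [Finset.mem_sdiff, mem_low, mem_low] at hx
    have hx0 : x ≠ 0 := by
      rintro rfl
      exact hx.2 (by simp)
    refine ⟨hx0, ?_⟩
    rw [degree_eq_natDegree hx0] at hx
    have h1 : x.natDegree < n + 1 := by exact_mod_cast hx.1
    have h2 : ¬ x.natDegree < n := fun h => hx.2 (by exact_mod_cast h)
    omega
  rw [← Finset.sum_product']
  symm
  refine Finset.sum_bij (fun p _ => C (p.1 : K) * p.2) ?_ ?_ ?_ ?_
  · rintro ⟨c, a⟩ h
    have ha := (Finset.mem_product.1 h).2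
    rw [mem_monics] at ha
    have hd : (C (c : K) * a).degree = n := by
      rw [degree_C_mul c.ne_zero, degree_eq_natDegree ha.1.ne_zero, ha.2]
    rw [Finset.mem_sdiff, mem_low, mem_low, hd]
    exact ⟨by exact_mod_cast Nat.lt_succ_self n, lt_irrefl _⟩
  · rintro ⟨c, a⟩ h ⟨c', a'⟩ h' he
    have ha := (Finset.mem_product.1 h).2
    have ha' := (Finset.mem_product.1 h').2
    rw [mem_monics] at ha ha'
    simp only at he ha ha'
    have hl := congrArg leadingCoeff he
    rw [leadingCoeff_mul, leadingCoeff_mul, ha.1.leadingCoeff, ha'.1.leadingCoeff, leadingCoeff_C,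
      leadingCoeff_C, mul_one, mul_one] at hl
    have hcc : c = c' := Units.ext hl
    subst hcc
    have := mul_left_cancel₀ (C_ne_zero.2 c.ne_zero) he
    rw [this]
  · intro x hx
    obtain ⟨hx0, hxn⟩ := hmem x hx
    have hl : x.leadingCoeff ≠ 0 := leadingCoeff_ne_zero.2 hx0
    refine ⟨(Units.mk0 _ hl, C (x.leadingCoeff⁻¹) * x), ?_, ?_⟩
    · rw [Finset.mem_product, mem_monics]
      refine ⟨mem_univ _, ?_, ?_⟩
      · rw [Monic, leadingCoeff_mul, leadingCoeff_C, inv_mul_cancel₀ hl]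
      · rw [natDegree_C_mul (inv_ne_zero hl), hxn]
    · simp only [Units.val_mk0]
      rw [← mul_assoc, ← C_mul, mul_inv_cancel₀ hl, C_1, one_mul]
  · intro _ _; rfl

lemma sum_low_eq {M : Type*} [AddCommMonoid M] (n : ℕ) (f : K[X] → M) :
    ∑ x ∈ low K n, f x =
      f 0 + ∑ m ∈ range n, ∑ c : Kˣ, ∑ a ∈ monics K m, f (C (c : K) * a) := by
  induction n with
  | zero =>
    have : low K 0 = {0} := by
      ext x; simp [mem_low]
    simp [this]
  | succ n ih => rw [sum_low_succ, ih, Finset.sum_range_succ, add_assoc]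

lemma sum_units_omega_pow (hω : ω ^ 3 = 1) (hω1 : ω ≠ 1) (k : ℕ) :
    ∑ c : Kˣ, ω (c : K) ^ k = if 3 ∣ k then (Fintype.card K : ℂ) - 1 else 0 := by
  split_ifs with h
  · obtain ⟨j, rfl⟩ := h
    have : ∀ c : Kˣ, ω (c : K) ^ (3 * j) = 1 := fun c => by
      rw [pow_mul, omega_cube_eq_one hω c.ne_zero, one_pow]
    simp only [this]
    rw [Finset.sum_const, nsmul_eq_mul, mul_one, Finset.card_univ, Fintype.card_units,
      Nat.cast_sub Fintype.card_pos, Nat.cast_one]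
  · obtain ⟨d, hd⟩ : ∃ d : Kˣ, ω (d : K) ≠ 1 := by
      by_contra hc
      push Not at hc
      exact hω1 (MulChar.ext fun a => by rw [hc a, MulChar.one_apply_coe])
    have hdk := pow_ne_one_of_cube (omega_cube_eq_one hω d.ne_zero) hd h
    have hs : ∑ c : Kˣ, ω ((d * c : Kˣ) : K) ^ k = ∑ c : Kˣ, ω (c : K) ^ k :=
      Equiv.sum_comp (Equiv.mulLeft d) (fun c : Kˣ => ω (c : K) ^ k)
    simp only [Units.val_mul, map_mul, mul_pow] at hs
    rw [← Finset.mul_sum] at hs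
    have : (ω (d : K) ^ k - 1) * ∑ c : Kˣ, ω (c : K) ^ k = 0 := by
      rw [sub_mul, hs]; ring
    exact (mul_eq_zero.1 this).resolve_left (sub_ne_zero.2 hdk)

/-- The sum of cubic Gauss sums over moduli of degree `n`. -/
def cgsSum (ψ : AddChar K ℂ) (ω : MulChar K ℂ) (V : K[X]) (n : ℕ) : ℂ :=
  ∑ F ∈ monics K n, cgs ψ ω V F

lemma cgs_eq_sum_inv {F : K[X]} (hF : F.Monic) (V : K[X]) :
    cgs ψ ω V F = ∑ x ∈ low K F.natDegree,
      if IsCoprime F x then sym ω F (invMod F x) * ee ψ F (invMod F x * V) else 0 := by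
  have hper : PeriodicMod F (fun x => sym ω F x * ee ψ F (x * V)) :=
    (sym_periodic hF).mul (ee_mul_periodic hF V)
  rw [← Finset.sum_filter, sum_residues_inv hF hper, Finset.sum_filter, cgs, gs]
  refine Finset.sum_congr rfl fun x _ => ?_
  split_ifs with h
  · rfl
  · rw [(sym_eq_zero_iff hF x).2 h, zero_mul]

lemma invMod_congr {F a b x : K[X]} (h : IsCoprime F a) (hab : F ∣ a * b - x) :
    F ∣ b - x * invMod F a := by
  obtain ⟨u, hu⟩ := invMod_spec h
  obtain ⟨w, hw⟩ := hab
  exact ⟨invMod F a * w - b * u, by linear_combination invMod F a * hw - b * hu⟩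

lemma sym_invMod (hω : ω ^ 3 = 1) {F a : K[X]} (hF : F.Monic) (h : IsCoprime F a) :
    sym ω F (invMod F a) = sym ω F a ^ 2 := by
  have h1 : sym ω F a * sym ω F (invMod F a) = 1 := by
    rw [← sym_mul_right hF, sym_periodic hF _ 1 (invMod_spec h), sym_one_right]
  have h3 := sym_cube hω hF h
  linear_combination sym ω F a ^ 2 * h1 - sym ω F (invMod F a) * h3

lemma flip_term (hω : ω ^ 3 = 1) {F a V : K[X]} (hF : F.Monic) (ha : a.Monic)
    (hFa : IsCoprime F a) (c : Kˣ) (hV : V ∈ low K (F.natDegree - 1)) :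
    sym ω F (invMod F (C (c : K) * a)) * ee ψ F (invMod F (C (c : K) * a) * V) =
      ω c ^ (2 * F.natDegree) *
        (sym ω a (invMod a F) * ee ψ a (invMod a F * (C (-(c : K)⁻¹) * V))) := by
  have hcu : C (c : K) * C (c : K)⁻¹ = (1 : K[X]) := by
    rw [← C_mul, mul_inv_cancel₀ c.ne_zero, C_1]
  have hcop : IsCoprime F (C (c : K) * a) := by
    refine IsCoprime.mul_right ⟨0, C (c : K)⁻¹, ?_⟩ hFa
    linear_combination hcu
  have e1 : sym ω F (invMod F (C (c : K) * a)) = ω c ^ (2 * F.natDegree) * sym ω a (invMod a F) := by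
    rw [sym_invMod hω hF hcop, sym_invMod hω ha hFa.symm, sym_mul_right hF, sym_C,
      sym_reciprocity hω F a]
    ring
  have e2 : ee ψ F (invMod F (C (c : K) * a) * V) =
      ee ψ a (invMod a F * (C (-(c : K)⁻¹) * V)) := by
    have hU : rs (F * a) (C (c : K)⁻¹ * V) = 0 := by
      refine rs_eq_zero_of_mem_low (hF.mul ha) ?_
      rw [hF.natDegree_mul ha, mem_low]
      rw [mem_low] at hV
      rw [degree_C_mul (inv_ne_zero c.ne_zero)]
      refine hV.trans_le ?_
      exact_mod_cast (by omega : F.natDegree - 1 ≤ F.natDegree + a.natDegree - 1)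
    rw [rs_mul_eq hF ha (dvd_inv_combination hFa)] at hU
    have h1 : ee ψ F (invMod F (C (c : K) * a) * V) =
        ee ψ F (C (c : K)⁻¹ * V * invMod F a) := by
      refine ee_periodic hF _ _ ?_
      have := invMod_congr hFa (b := C (c : K) * invMod F (C (c : K) * a)) (x := 1) (by
        convert invMod_spec hcop using 1; ring)
      obtain ⟨w, hw⟩ := this
      refine ⟨C (c : K)⁻¹ * V * w, ?_⟩
      linear_combination (C (c : K)⁻¹ * V) * hw - invMod F (C (c : K) * a) * V * hcu
    rw [h1, ee, ee]
    congr 1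
    rw [eq_neg_of_add_eq_zero_left hU, neg_eq_iff_add_eq_zero, ← rs_add]
    have : C (c : K)⁻¹ * V * invMod a F + invMod a F * (C (-(c : K)⁻¹) * V) = 0 := by
      rw [C_neg]; ring
    rw [this, rs]; simp
  rw [e1, e2]
  ring

lemma sum_flip (hω : ω ^ 3 = 1) {a V : K[X]} {n : ℕ} (ha : a.Monic) (han : a.natDegree ≤ n)
    (c : Kˣ) (hV : V ∈ low K (n - 1)) :
    ∑ F ∈ monics K n, (if IsCoprime F (C (c : K) * a) then
      sym ω F (invMod F (C (c : K) * a)) * ee ψ F (invMod F (C (c : K) * a) * V) else 0) =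
    (Fintype.card K : ℂ) ^ (n - a.natDegree) * (ω c ^ (2 * n + a.natDegree) * cgs ψ ω V a) := by
  have hcu : C (c : K) * C (c : K)⁻¹ = (1 : K[X]) := by
    rw [← C_mul, mul_inv_cancel₀ c.ne_zero, C_1]
  have hunit : IsUnit (C (c : K) : K[X]) := IsUnit.of_mul_eq_one _ hcu
  have hiff : ∀ F, IsCoprime F (C (c : K) * a) ↔ IsCoprime a F := by
    intro F
    rw [isCoprime_mul_unit_left_right hunit, isCoprime_comm]
  set W := C (-(c : K)⁻¹) * V with hW
  have hperΘ : PeriodicMod a (fun z => sym ω a z * ee ψ a (z * W)) :=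
    (sym_periodic ha).mul (ee_mul_periodic ha W)
  have hper : PeriodicMod a (fun F => if IsCoprime a F then
      sym ω a (invMod a F) * ee ψ a (invMod a F * W) else 0) := by
    intro x y hxy
    simp only [isCoprime_congr hxy]
    split_ifs with hy
    · refine hperΘ _ _ ?_
      have hx : IsCoprime a x := (isCoprime_congr hxy).2 hy
      have := invMod_congr hy (b := invMod a x) (x := 1) (by
        obtain ⟨u, hu⟩ := invMod_spec hx
        obtain ⟨w, hw⟩ := hxy
        exact ⟨u - w * invMod a x, by linear_combination hu - invMod a x * hw⟩)
      simpa using this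
    · rfl
  have h1 : ∀ F ∈ monics K n, (if IsCoprime F (C (c : K) * a) then
      sym ω F (invMod F (C (c : K) * a)) * ee ψ F (invMod F (C (c : K) * a) * V) else 0) =
      ω c ^ (2 * n) * (if IsCoprime a F then
      sym ω a (invMod a F) * ee ψ a (invMod a F * W) else 0) := by
    intro F hF
    rw [mem_monics] at hF
    simp only [hiff]
    split_ifs with h
    · rw [flip_term hω hF.1 ha h.symm c (by rwa [hF.2]), hF.2]
    · simp
  rw [Finset.sum_congr rfl h1, ← Finset.mul_sum, sum_monics_residues ha hper han,
    ← Finset.sum_filter, sum_residues_inv ha hperΘ, Finset.sum_filter]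
  have h2 : ∑ x ∈ low K a.natDegree, (if IsCoprime a x then sym ω a x * ee ψ a (x * W) else 0) =
      cgs ψ ω W a := by
    rw [cgs, gs]
    refine Finset.sum_congr rfl fun x _ => ?_
    split_ifs with h
    · rfl
    · rw [(sym_eq_zero_iff ha x).2 h, zero_mul]
  have h3 : cgs ψ ω W a = ω c ^ a.natDegree * cgs ψ ω V a := by
    have hcop : IsCoprime a (C (-(c : K)⁻¹)) := by
      refine ⟨0, -C (c : K), ?_⟩
      rw [C_neg]; linear_combination hcu
    rw [← cgs_scale (ψ := ψ) hω ha hcop V, sym_C, ← mul_assoc, ← mul_pow, ← map_mul]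
    have : (c : K) * -(c : K)⁻¹ = -1 := by
      rw [mul_neg, mul_inv_cancel₀ c.ne_zero]
    rw [this, omega_neg_one hω, one_pow, one_mul]
  rw [h2, h3, nsmul_eq_mul, pow_add]
  push_cast
  ring

lemma cgsSum_eq (hω : ω ^ 3 = 1) {V : K[X]} {n : ℕ} (hn : 1 ≤ n) (hV : V ∈ low K (n - 1)) :
    cgsSum ψ ω V n = ∑ m ∈ range n, (Fintype.card K : ℂ) ^ (n - m) *
      (∑ c : Kˣ, ω (c : K) ^ (2 * n + m)) * cgsSum ψ ω V m := by
  have h1 : ∀ F ∈ monics K n, cgs ψ ω V F = ∑ m ∈ range n, ∑ c : Kˣ, ∑ a ∈ monics K m,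
      (if IsCoprime F (C (c : K) * a) then
      sym ω F (invMod F (C (c : K) * a)) * ee ψ F (invMod F (C (c : K) * a) * V) else 0) := by
    intro F hF
    rw [mem_monics] at hF
    rw [cgs_eq_sum_inv hF.1, hF.2, sum_low_eq, if_neg, zero_add]
    intro h
    rw [isCoprime_zero_right] at h
    have := natDegree_eq_zero_of_isUnit h
    omega
  rw [cgsSum, Finset.sum_congr rfl h1, Finset.sum_comm]
  refine Finset.sum_congr rfl fun m hm => ?_
  rw [Finset.sum_comm, Finset.mul_sum, Finset.sum_mul]
  refine Finset.sum_congr rfl fun c _ => ?_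
  rw [Finset.sum_comm, cgsSum, Finset.mul_sum]
  refine Finset.sum_congr rfl fun a ha => ?_
  rw [mem_monics] at ha
  rw [Finset.mem_range] at hm
  rw [sum_flip hω ha.1 (by omega) c hV, ha.2]
  ring

lemma cgsSum_add_three (hω : ω ^ 3 = 1) (hω1 : ω ≠ 1) {V : K[X]} {n : ℕ} (hn : 1 ≤ n)
    (hV : V ∈ low K (n - 1)) :
    cgsSum ψ ω V (n + 3) = (Fintype.card K : ℂ) ^ 4 * cgsSum ψ ω V n := by
  have hr := cgsSum_eq (ψ := ψ) hω hn hV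
  rw [cgsSum_eq hω (by omega) (low_mono (by omega) hV), Finset.sum_range_succ,
    Finset.sum_range_succ, Finset.sum_range_succ]
  simp only [sum_units_omega_pow hω hω1] at hr ⊢
  rw [if_pos (by omega), if_neg (by omega), if_neg (by omega)]
  have : ∑ m ∈ range n, (Fintype.card K : ℂ) ^ (n + 3 - m) *
      (if 3 ∣ 2 * (n + 3) + m then (Fintype.card K : ℂ) - 1 else 0) * cgsSum ψ ω V m =
      (Fintype.card K : ℂ) ^ 3 * cgsSum ψ ω V n := by
    rw [hr, Finset.mul_sum]
    refine Finset.sum_congr rfl fun m hm => ?_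
    rw [Finset.mem_range] at hm
    have hiff : 3 ∣ 2 * (n + 3) + m ↔ 3 ∣ 2 * n + m := by omega
    simp only [hiff]
    rw [show n + 3 - m = 3 + (n - m) by omega, pow_add]
    ring
  rw [this, show n + 3 - n = 3 by omega]
  ring

end

section
variable {K : Type} [Field K] [Fintype K]

/-- The real power `|f|^x` of the norm `|f| = q ^ deg f`. -/
def pw (x : ℝ) (f : K[X]) : ℝ := (Fintype.card K : ℝ) ^ (x * (f.natDegree : ℝ))

lemma one_lt_card_real : (1 : ℝ) < Fintype.card K := by
  exact_mod_cast Fintype.one_lt_card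

lemma card_pos_real : (0 : ℝ) < Fintype.card K := zero_lt_one.trans one_lt_card_real

lemma pw_pos (x : ℝ) (f : K[X]) : 0 < pw x f := Real.rpow_pos_of_pos card_pos_real _

lemma pw_one_right (x : ℝ) : pw x (1 : K[X]) = 1 := by simp [pw]

lemma pw_mul (x : ℝ) {f g : K[X]} (hf : f ≠ 0) (hg : g ≠ 0) : pw x (f * g) = pw x f * pw x g := by
  rw [pw, pw, pw, natDegree_mul hf hg, ← Real.rpow_add card_pos_real]
  push_cast
  ring_nf

lemma pw_pow (x : ℝ) (f : K[X]) (n : ℕ) : pw x (f ^ n) = pw x f ^ n := by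
  rw [pw, pw, natDegree_pow, ← Real.rpow_natCast, ← Real.rpow_mul card_pos_real.le]
  push_cast
  ring_nf

lemma pw_add (x y : ℝ) (f : K[X]) : pw (x + y) f = pw x f * pw y f := by
  rw [pw, pw, pw, ← Real.rpow_add card_pos_real]
  ring_nf

lemma pw_le_of_dvd {x : ℝ} (hx : 0 ≤ x) {f g : K[X]} (hg : g ≠ 0) (h : f ∣ g) : pw x f ≤ pw x g := by
  refine Real.rpow_le_rpow_of_exponent_le one_lt_card_real.le ?_
  have := natDegree_le_of_dvd h hg
  gcongr

lemma one_le_pw {x : ℝ} (hx : 0 ≤ x) (f : K[X]) : 1 ≤ pw x f :=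
  Real.one_le_rpow one_lt_card_real.le (by positivity)

lemma pw_prod {ι : Type*} (x : ℝ) (s : Finset ι) (f : ι → K[X]) (hf : ∀ i ∈ s, f i ≠ 0) :
    pw x (∏ i ∈ s, f i) = ∏ i ∈ s, pw x (f i) := by
  induction s using Finset.induction_on with
  | empty => simp [pw_one_right]
  | insert i s hi ih =>
    rw [prod_insert hi, prod_insert hi, pw_mul x (hf i (mem_insert_self _ _)), ih]
    · exact fun j hj => hf j (mem_insert_of_mem hj)
    · exact prod_ne_zero_iff.2 fun j hj => hf j (mem_insert_of_mem hj)

/-- The product of a finite set of monic irreducibles. -/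
def sqf (s : Finset (MonicIrred K)) : K[X] := ∏ P ∈ s, P.1

lemma sqf_monic (s : Finset (MonicIrred K)) : (sqf s).Monic :=
  monic_prod_of_monic _ _ fun P _ => P.2.1

lemma MonicIrred.eq_of_dvd {P Q : MonicIrred K} (h : P.1 ∣ Q.1) : P = Q :=
  Subtype.ext (eq_of_monic_of_associated P.2.1 Q.2.1 (P.2.2.associated_of_dvd Q.2.2 h))

lemma isCoprime_of_forall_not_dvd {F G : K[X]} (hF : F ≠ 0)
    (h : ∀ P : MonicIrred K, P.1 ∣ F → ¬ P.1 ∣ G) : IsCoprime F G := by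
  refine isCoprime_of_irreducible_dvd (fun h0 => hF h0.1) fun z hz hzF hzG => ?_
  have ha : Associated z (normalize z) := (normalize_associated z).symm
  exact h ⟨normalize z, monic_normalize hz.ne_zero, ha.irreducible hz⟩ (ha.dvd_iff_dvd_left.1 hzF)
    (ha.dvd_iff_dvd_left.1 hzG)

lemma MonicIrred.isCoprime_iff (P : MonicIrred K) (F : K[X]) : IsCoprime P.1 F ↔ ¬ P.1 ∣ F :=
  P.2.2.coprime_iff_not_dvd

lemma dvd_sqf_iff {s : Finset (MonicIrred K)} {P : MonicIrred K} : P.1 ∣ sqf s ↔ P ∈ s := by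
  refine ⟨fun h => ?_, fun h => Finset.dvd_prod_of_mem _ h⟩
  obtain ⟨Q, hQ, hPQ⟩ := (Prime.dvd_finsetProd_iff P.2.2.prime _).1 h
  exact MonicIrred.eq_of_dvd hPQ ▸ hQ

lemma sqf_dvd {s : Finset (MonicIrred K)} {F : K[X]} (h : ∀ P ∈ s, P.1 ∣ F) : sqf s ∣ F := by
  refine Finset.prod_dvd_of_coprime (fun P _ Q _ hPQ => ?_) h
  exact (P.isCoprime_iff _).2 fun hd => hPQ (MonicIrred.eq_of_dvd hd)

lemma isCoprime_sqf_iff {s : Finset (MonicIrred K)} {F : K[X]} :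
    IsCoprime F (sqf s) ↔ ∀ P ∈ s, ¬ P.1 ∣ F := by
  rw [sqf, IsCoprime.prod_right_iff]
  exact forall₂_congr fun P _ => by rw [isCoprime_comm, P.isCoprime_iff]

/-- All monic divisors of a nonzero polynomial. -/
def mdiv (V : K[X]) : Finset K[X] :=
  ((range (V.natDegree + 1)).biUnion (monics K)).filter (· ∣ V)

lemma mem_mdiv {V : K[X]} (hV : V ≠ 0) {E : K[X]} : E ∈ mdiv V ↔ E.Monic ∧ E ∣ V := by
  simp only [mdiv, mem_filter, mem_biUnion, mem_range, mem_monics]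
  constructor
  · rintro ⟨⟨_, _, hm, _⟩, hd⟩; exact ⟨hm, hd⟩
  · rintro ⟨hm, hd⟩
    exact ⟨⟨_, Nat.lt_succ_of_le (natDegree_le_of_dvd hd hV), hm, rfl⟩, hd⟩

/-- The monic irreducible divisors of a nonzero polynomial. -/
def mprimes (V : K[X]) : Finset (MonicIrred K) :=
  Finset.subtype (fun P : K[X] => P.Monic ∧ Irreducible P) (mdiv V)

lemma mem_mprimes {V : K[X]} (hV : V ≠ 0) {P : MonicIrred K} : P ∈ mprimes V ↔ P.1 ∣ V := by
  refine (Finset.mem_subtype (p := fun P : K[X] => P.Monic ∧ Irreducible P)).trans ?_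
  rw [mem_mdiv hV]
  exact ⟨fun h => h.2, fun h => ⟨P.2.1, h⟩⟩

/-- `E` is monic and all its irreducible factors lie in `s`. -/
def SuppIn (s : Finset (MonicIrred K)) (E : K[X]) : Prop :=
  E.Monic ∧ ∀ P : MonicIrred K, P.1 ∣ E → P ∈ s

lemma exists_eq_pow_mul (P : MonicIrred K) {E : K[X]} (hE : E.Monic) :
    ∃ i : ℕ, ∃ R : K[X], E = P.1 ^ i * R ∧ R.Monic ∧ ¬ P.1 ∣ R := by
  obtain ⟨R, hR, hd⟩ := (FiniteMultiplicity.of_not_isUnit P.2.2.not_isUnit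
    hE.ne_zero).exists_eq_pow_mul_and_not_dvd
  refine ⟨_, R, hR, ?_, hd⟩
  exact (P.2.1.pow _).of_mul_monic_left (hR ▸ hE)

lemma MonicIrred.natDegree_pos (P : MonicIrred K) : 0 < P.1.natDegree := P.2.2.natDegree_pos

lemma pw_neg_half_le (hq : 7 ≤ Fintype.card K) (P : MonicIrred K) :
    pw (-(1 / 2)) P.1 ≤ 1 / 2 := by
  have h4 : (4 : ℝ) ≤ Fintype.card K := by exact_mod_cast (by omega : 4 ≤ Fintype.card K)
  have h1 : pw (-(1 / 2)) P.1 ≤ (Fintype.card K : ℝ) ^ (-(1 / 2) : ℝ) := by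
    refine Real.rpow_le_rpow_of_exponent_le one_lt_card_real.le ?_
    have : (1 : ℝ) ≤ P.1.natDegree := by exact_mod_cast P.natDegree_pos
    linarith
  refine h1.trans ((Real.rpow_le_rpow_of_nonpos (by norm_num) h4 (by norm_num)).trans ?_)
  rw [show (4 : ℝ) = 2 ^ (2 : ℝ) by norm_num, ← Real.rpow_mul (by norm_num)]
  norm_num [Real.rpow_neg_one]

lemma sum_geometric_le_two {a : ℝ} (h0 : 0 ≤ a) (h1 : a ≤ 1 / 2) (n : ℕ) :
    ∑ i ∈ range n, a ^ i ≤ 2 := by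
  calc ∑ i ∈ range n, a ^ i ≤ ∑ i ∈ range n, (1 / 2 : ℝ) ^ i :=
        sum_le_sum fun i _ => pow_le_pow_left₀ h0 h1 i
    _ ≤ 2 := sum_geometric_two_le n

lemma sum_pw_neg_half_le (hq : 7 ≤ Fintype.card K) (s : Finset (MonicIrred K)) :
    ∀ T : Finset K[X], (∀ E ∈ T, SuppIn s E) → ∑ E ∈ T, pw (-(1 / 2)) E ≤ 2 ^ s.card := by
  induction s using Finset.induction_on with
  | empty =>
    intro T hT
    have hsub : T ⊆ {1} := fun E hE => by
      obtain ⟨hm, h⟩ := hT E hE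
      rw [mem_singleton]
      by_contra h1
      obtain ⟨P, hP, hi, hd⟩ := exists_monic_irreducible_factor E
        (fun hu => h1 (hm.eq_one_of_isUnit hu))
      exact absurd (h ⟨P, hP, hi⟩ hd) (notMem_empty _)
    refine (sum_le_sum_of_subset_of_nonneg hsub fun E _ _ => (pw_pos _ E).le).trans ?_
    simp [pw_one_right]
  | insert P s hPs ih =>
    intro T hT
    choose! i R hR hRm hRd using fun E (hE : E ∈ T) => exists_eq_pow_mul P (hT E hE).1
    set T' := T.image R
    have hT' : ∀ E ∈ T', SuppIn s E := by
      intro E' hE'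
      obtain ⟨E, hE, rfl⟩ := mem_image.1 hE'
      refine ⟨hRm E hE, fun Q hQ => ?_⟩
      have h1 : Q.1 ∣ E := hQ.trans ⟨P.1 ^ i E, by rw [mul_comm]; exact hR E hE⟩
      refine (mem_insert.1 ((hT E hE).2 Q h1)).resolve_left fun h => ?_
      exact hRd E hE (h ▸ hQ)
    set n := (T.sup i) + 1
    have hinj : Set.InjOn (fun E => (i E, R E)) (T : Set K[X]) := by
      intro E hE E' hE' h
      simp only [Prod.mk.injEq] at h
      rw [hR E hE, hR E' hE', h.1, h.2]
    have hval : ∀ E ∈ T, pw (-(1 / 2)) E = pw (-(1 / 2)) P.1 ^ i E * pw (-(1 / 2)) (R E) := by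
      intro E hE
      rw [← pw_pow, ← pw_mul _ (P.2.1.pow _).ne_zero (hRm E hE).ne_zero, ← hR E hE]
    rw [sum_congr rfl hval, ← sum_image (f := fun x : ℕ × K[X] =>
      pw (-(1 / 2)) P.1 ^ x.1 * pw (-(1 / 2)) x.2) hinj]
    have hsub : T.image (fun E => (i E, R E)) ⊆ range n ×ˢ T' := by
      intro x hx
      obtain ⟨E, hE, rfl⟩ := mem_image.1 hx
      exact mem_product.2 ⟨mem_range.2 (Nat.lt_succ_of_le (le_sup (f := i) hE)),
        mem_image_of_mem R hE⟩
    refine (sum_le_sum_of_subset_of_nonneg hsub fun x _ _ =>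
      mul_nonneg (pow_nonneg (pw_pos _ _).le _) (pw_pos _ _).le).trans ?_
    rw [sum_product, card_insert_of_notMem hPs, pow_succ', ← sum_mul_sum]
    exact mul_le_mul (sum_geometric_le_two (pw_pos _ _).le (pw_neg_half_le hq P) n) (ih T' hT')
      (sum_nonneg fun E _ => (pw_pos _ E).le) (by norm_num)

lemma finite_degree_lt (B : ℕ) : {P : MonicIrred K | P.1.natDegree < B}.Finite := by
  have h : Set.InjOn (fun P : MonicIrred K => P.1) {P | P.1.natDegree < B} :=
    fun P _ Q _ h => Subtype.ext h
  refine Set.Finite.of_finite_image ?_ h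
  refine ((range B).biUnion (monics K)).finite_toSet.subset ?_
  rintro _ ⟨P, hP, rfl⟩
  simp only [coe_biUnion, Set.mem_iUnion]
  exact ⟨_, mem_coe.2 (mem_range.2 hP), mem_coe.2 (mem_monics.2 ⟨P.2.1, rfl⟩)⟩

lemma exists_pow_card_le {c ε : ℝ} (hc : 1 ≤ c) (hε : 0 < ε) :
    ∃ A : ℝ, 1 ≤ A ∧ ∀ s : Finset (MonicIrred K), c ^ s.card ≤ A * pw ε (sqf s) := by
  obtain ⟨B, hB⟩ : ∃ B : ℕ, c ≤ ((Fintype.card K : ℝ) ^ ε) ^ B :=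
    (pow_unbounded_of_one_lt c (Real.one_lt_rpow one_lt_card_real hε)).imp fun _ h => h.le
  set T := (finite_degree_lt (K := K) B).toFinset
  refine ⟨c ^ T.card, one_le_pow₀ hc, fun s => ?_⟩
  have hle : ∀ P ∈ s, c ≤ pw ε P.1 * (if P ∈ T then c else 1) := by
    intro P _
    split_ifs with h
    · exact le_mul_of_one_le_left (by linarith) (one_le_pw hε.le _)
    · rw [mul_one]
      have h' : B ≤ P.1.natDegree := by simpa [T] using h
      refine hB.trans ?_
      rw [← Real.rpow_natCast, ← Real.rpow_mul card_pos_real.le]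
      refine Real.rpow_le_rpow_of_exponent_le one_lt_card_real.le ?_
      gcongr
  have h1 : ∏ P ∈ s, (if P ∈ T then c else 1) ≤ c ^ T.card := by
    rw [← prod_filter, prod_const]
    refine pow_le_pow_right₀ hc (card_le_card ?_)
    intro P hP
    exact (mem_filter.1 hP).2
  calc c ^ s.card = ∏ _P ∈ s, c := (prod_const c).symm
    _ ≤ ∏ P ∈ s, (pw ε P.1 * if P ∈ T then c else 1) := prod_le_prod (fun _ _ => by linarith) hle
    _ = pw ε (sqf s) * ∏ P ∈ s, (if P ∈ T then c else 1) := by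
      rw [prod_mul_distrib, sqf, pw_prod _ _ _ fun P _ => P.2.1.ne_zero]
    _ ≤ _ := by
      rw [mul_comm]
      exact mul_le_mul_of_nonneg_right h1 (pw_pos _ _).le

lemma sqf_mprimes_dvd {V : K[X]} (hV : V ≠ 0) : sqf (mprimes V) ∣ V :=
  sqf_dvd fun _ hP => (mem_mprimes hV).1 hP

lemma suppIn_mprimes {V E : K[X]} (hV : V ≠ 0) (hE : E ∈ mdiv V) : SuppIn (mprimes V) E :=
  ⟨((mem_mdiv hV).1 hE).1, fun _ hP => (mem_mprimes hV).2 (hP.trans ((mem_mdiv hV).1 hE).2)⟩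

lemma card_monics_filter_dvd {E : K[X]} (hE : E.Monic) (n : ℕ) :
    ((monics K n).filter (E ∣ ·)).card ≤ if E.natDegree ≤ n then Fintype.card K ^ (n - E.natDegree)
      else 0 := by
  split_ifs with h
  · rw [← card_monics (K := K) (n - E.natDegree)]
    refine (card_le_card (t := (monics K (n - E.natDegree)).image (E * ·)) ?_).trans card_image_le
    intro F hF
    obtain ⟨hF, G, rfl⟩ := mem_filter.1 hF
    obtain ⟨hm, hd⟩ := mem_monics.1 hF
    have hG : G.Monic := hE.of_mul_monic_left hm
    refine mem_image.2 ⟨G, mem_monics.2 ⟨hG, ?_⟩, rfl⟩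
    rw [hE.natDegree_mul hG] at hd
    omega
  · refine Nat.le_of_eq (card_eq_zero.2 (filter_eq_empty_iff.2 fun F hF hd => h ?_))
    obtain ⟨hm, hd'⟩ := mem_monics.1 hF
    exact hd' ▸ natDegree_le_of_dvd hd hm.ne_zero

variable {ψ : AddChar K ℂ} {ω : MulChar K ℂ}

lemma norm_gs_le_sum (hψ : ψ ≠ 1) {F V : K[X]} (hF : F.Monic) {φ : K[X] → ℂ}
    (hφ : IsUnitChar F φ) {T : Finset K[X]} (hT : ∀ E : K[X], E.Monic → E ∣ F → E ∣ V → E ∈ T) :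
    ‖gs ψ φ F V‖ ≤ pw (1 / 2) F * ∑ E ∈ T, if E ∣ F ∧ E ∣ V then pw (1 / 2) E else 0 := by
  obtain ⟨E, hE, hEF, hEV, h⟩ := exists_gs_norm_le hψ hF hφ V
  have hsq : ∀ f : K[X], pw (1 / 2) f ^ 2 = (Fintype.card K : ℝ) ^ f.natDegree := by
    intro f
    rw [pw, ← Real.rpow_natCast, ← Real.rpow_mul card_pos_real.le, ← Real.rpow_natCast]
    congr 1
    push_cast
    ring
  have h1 : ‖gs ψ φ F V‖ ≤ pw (1 / 2) F * pw (1 / 2) E := by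
    refine abs_le_of_sq_le_sq' ?_ (mul_pos (pw_pos _ _) (pw_pos _ _)).le |>.2
    rw [mul_pow, hsq, hsq]
    exact h
  refine h1.trans (mul_le_mul_of_nonneg_left ?_ (pw_pos _ _).le)
  refine le_trans ?_ (single_le_sum (f := fun E => if E ∣ F ∧ E ∣ V then pw (1 / 2) E else 0)
    (fun E _ => ?_) (hT E hE hEF hEV))
  · simp [hEF, hEV]
  · split_ifs
    exacts [(pw_pos _ _).le, le_rfl]

lemma pw_half_mul_card_le {E : K[X]} (hE : E.Monic) (n : ℕ) :
    pw (1 / 2) E * ((monics K n).filter (E ∣ ·)).card ≤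
      (Fintype.card K : ℝ) ^ (n : ℝ) * pw (-(1 / 2)) E := by
  have h : (((monics K n).filter (E ∣ ·)).card : ℝ) ≤
      (Fintype.card K : ℝ) ^ ((n : ℝ) - E.natDegree) := by
    have h1 := card_monics_filter_dvd hE n
    split_ifs at h1 with hd
    · refine (Nat.cast_le.2 h1).trans (le_of_eq ?_)
      rw [← Nat.cast_sub hd, Real.rpow_natCast]
      push_cast
      rfl
    · rw [Nat.le_zero.1 h1, Nat.cast_zero]
      exact (Real.rpow_pos_of_pos card_pos_real _).le
  refine (mul_le_mul_of_nonneg_left h (pw_pos _ _).le).trans (le_of_eq ?_)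
  rw [pw, pw, ← Real.rpow_add card_pos_real, ← Real.rpow_add card_pos_real]
  ring_nf

lemma norm_cgsSum_le (hq : 7 ≤ Fintype.card K) (hψ : ψ ≠ 1) (hω : ω ^ 3 = 1) {V : K[X]}
    (hV : V ≠ 0) (M : ℕ) :
    ‖cgsSum ψ ω V M‖ ≤ (Fintype.card K : ℝ) ^ (3 / 2 * (M : ℝ)) * 2 ^ (mprimes V).card := by
  set q : ℝ := (Fintype.card K : ℝ)
  have h1 : ∀ F ∈ monics K M, ‖cgs ψ ω V F‖ ≤
      q ^ (1 / 2 * (M : ℝ)) * ∑ E ∈ mdiv V, if E ∣ F then pw (1 / 2) E else 0 := by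
    intro F hF
    obtain ⟨hm, hd⟩ := mem_monics.1 hF
    refine (norm_gs_le_sum hψ hm (isUnitChar_sym hω hm) (T := mdiv V)
      fun E hE _ h => (mem_mdiv hV).2 ⟨hE, h⟩).trans (le_of_eq ?_)
    rw [pw, hd]
    congr 1
    refine sum_congr rfl fun E hE => ?_
    simp [((mem_mdiv hV).1 hE).2]
  calc ‖cgsSum ψ ω V M‖ ≤ ∑ F ∈ monics K M, ‖cgs ψ ω V F‖ := norm_sum_le _ _
    _ ≤ ∑ F ∈ monics K M, q ^ (1 / 2 * (M : ℝ)) *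
        ∑ E ∈ mdiv V, (if E ∣ F then pw (1 / 2) E else 0) := sum_le_sum h1
    _ = q ^ (1 / 2 * (M : ℝ)) * ∑ E ∈ mdiv V,
        pw (1 / 2) E * ((monics K M).filter (E ∣ ·)).card := by
      rw [← mul_sum, sum_comm]
      congr 1
      refine sum_congr rfl fun E _ => ?_
      rw [← sum_filter, sum_const, nsmul_eq_mul, mul_comm]
    _ ≤ q ^ (1 / 2 * (M : ℝ)) * ∑ E ∈ mdiv V, q ^ (M : ℝ) * pw (-(1 / 2)) E := by
      refine mul_le_mul_of_nonneg_left (sum_le_sum fun E hE => ?_)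
        (Real.rpow_pos_of_pos card_pos_real _).le
      exact pw_half_mul_card_le ((mem_mdiv hV).1 hE).1 M
    _ = q ^ (3 / 2 * (M : ℝ)) * ∑ E ∈ mdiv V, pw (-(1 / 2)) E := by
      rw [← mul_sum, ← mul_assoc, ← Real.rpow_add card_pos_real,
        show 1 / 2 * (M : ℝ) + M = 3 / 2 * M by ring]
    _ ≤ _ := by
      gcongr
      exact sum_pw_neg_half_le hq _ _ fun E hE => suppIn_mprimes hV hE

lemma exists_norm_cgsSum_le (hq : 7 ≤ Fintype.card K) (hψ : ψ ≠ 1) (hω : ω ^ 3 = 1)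
    (hω1 : ω ≠ 1) : ∃ A : ℝ, 0 < A ∧ ∀ V : K[X], V ≠ 0 → ∀ M : ℕ,
      ‖cgsSum ψ ω V M‖ ≤ A * (Fintype.card K : ℝ) ^ (4 / 3 * (M : ℝ)) * pw (1 / 3) V := by
  obtain ⟨A, hA1, hA⟩ := exists_pow_card_le (K := K) (c := 2) (ε := 1 / 6) (by norm_num)
    (by norm_num)
  set q : ℝ := (Fintype.card K : ℝ) with hqdef
  have hq0 : 0 < q := card_pos_real
  refine ⟨A * q ^ (2 / 3 : ℝ), by positivity, fun V hV M => ?_⟩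
  induction M using Nat.strong_induction_on with
  | _ M ih =>
    by_cases hM : M ≤ V.natDegree + 4
    · have h2 : (2 : ℝ) ^ (mprimes V).card ≤ A * pw (1 / 6) V :=
        (hA _).trans (mul_le_mul_of_nonneg_left
          (pw_le_of_dvd (by norm_num) hV (sqf_mprimes_dvd hV)) (by linarith))
      calc ‖cgsSum ψ ω V M‖ ≤ q ^ (3 / 2 * (M : ℝ)) * (A * pw (1 / 6) V) :=
            (norm_cgsSum_le hq hψ hω hV M).trans
              (mul_le_mul_of_nonneg_left h2 (Real.rpow_pos_of_pos hq0 _).le)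
        _ = A * q ^ (3 / 2 * (M : ℝ) + 1 / 6 * (V.natDegree : ℝ)) := by
            rw [pw, Real.rpow_add hq0]; ring
        _ ≤ A * q ^ (2 / 3 + 4 / 3 * (M : ℝ) + 1 / 3 * (V.natDegree : ℝ)) := by
            have : (M : ℝ) ≤ V.natDegree + 4 := by exact_mod_cast hM
            refine mul_le_mul_of_nonneg_left (Real.rpow_le_rpow_of_exponent_le
              one_lt_card_real.le ?_) (by linarith)
            linarith
        _ = _ := by
            rw [pw, Real.rpow_add hq0, Real.rpow_add hq0]; ring
    · obtain ⟨n, rfl⟩ : ∃ n, M = n + 3 := ⟨M - 3, by omega⟩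
      have hlow : V ∈ low K (n - 1) := by
        rw [mem_low, degree_eq_natDegree hV]
        exact_mod_cast (by omega : V.natDegree < n - 1)
      rw [cgsSum_add_three hω hω1 (by omega) hlow, norm_mul, norm_pow, Complex.norm_natCast]
      calc q ^ 4 * ‖cgsSum ψ ω V n‖
          ≤ q ^ 4 * (A * q ^ (2 / 3 : ℝ) * q ^ (4 / 3 * (n : ℝ)) * pw (1 / 3) V) := by
            gcongr
            exact ih n (by omega)
        _ = _ := by
            have : q ^ (4 / 3 * ((n + 3 : ℕ) : ℝ)) = q ^ 4 * q ^ (4 / 3 * (n : ℝ)) := by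
              rw [← Real.rpow_natCast q 4, ← Real.rpow_add hq0]
              push_cast
              ring_nf
            rw [this]; ring
end

section
variable {K : Type} [Field K] [Fintype K]

/-- The monic polynomials of degree `n` without irreducible factor in `s`. -/
def cop (s : Finset (MonicIrred K)) (n : ℕ) : Finset K[X] :=
  (monics K n).filter (fun F => ∀ P ∈ s, ¬ P.1 ∣ F)

/-- The monic polynomials of degree at most `n` with all irreducible factors in `s`. -/
def smooth (s : Finset (MonicIrred K)) (n : ℕ) : Finset K[X] :=
  ((range (n + 1)).biUnion (monics K)).filter (SuppIn s)

lemma mem_cop {s : Finset (MonicIrred K)} {n : ℕ} {F : K[X]} :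
    F ∈ cop s n ↔ (F.Monic ∧ F.natDegree = n) ∧ ∀ P ∈ s, ¬ P.1 ∣ F := by
  rw [cop, mem_filter, mem_monics]

lemma mem_smooth {s : Finset (MonicIrred K)} {n : ℕ} {G : K[X]} :
    G ∈ smooth s n ↔ SuppIn s G ∧ G.natDegree ≤ n := by
  simp only [smooth, mem_filter, mem_biUnion, mem_range, mem_monics]
  constructor
  · rintro ⟨⟨m, hm, _, h⟩, h'⟩; exact ⟨h', by omega⟩
  · rintro ⟨h, h'⟩; exact ⟨⟨_, Nat.lt_succ_of_le h', h.1, rfl⟩, h⟩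

lemma MonicIrred.dvd_mul (P : MonicIrred K) {F G : K[X]} : P.1 ∣ F * G ↔ P.1 ∣ F ∨ P.1 ∣ G :=
  P.2.2.prime.dvd_mul

lemma isCoprime_of_suppIn {s : Finset (MonicIrred K)} {F G : K[X]} (hF : F ≠ 0)
    (h : ∀ P ∈ s, ¬ P.1 ∣ F) (hG : SuppIn s G) : IsCoprime F G :=
  isCoprime_of_forall_not_dvd hF fun P hP hPG => h P (hG.2 P hPG) hP

lemma exists_smooth_mul_cop (s : Finset (MonicIrred K)) {F : K[X]} (hF : F.Monic) :
    ∃ H G : K[X], F = H * G ∧ H.Monic ∧ (∀ P ∈ s, ¬ P.1 ∣ H) ∧ SuppIn s G := by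
  refine monic_induction (p := fun F => ∃ H G : K[X], F = H * G ∧ H.Monic ∧
    (∀ P ∈ s, ¬ P.1 ∣ H) ∧ SuppIn s G) ?_ ?_ F hF
  · exact ⟨1, 1, (one_mul 1).symm, monic_one, fun P _ h => P.2.2.not_isUnit (isUnit_of_dvd_one h),
      monic_one, fun P h => absurd (isUnit_of_dvd_one h) P.2.2.not_isUnit⟩
  · rintro P F hP hi _ ⟨H, G, rfl, hH, hHs, hG⟩
    by_cases hPs : (⟨P, hP, hi⟩ : MonicIrred K) ∈ s
    · refine ⟨H, P * G, by ring, hH, hHs, hP.mul hG.1, fun Q hQ => ?_⟩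
      rcases Q.dvd_mul.1 hQ with h | h
      · have := MonicIrred.eq_of_dvd (Q := ⟨P, hP, hi⟩) h
        exact this ▸ hPs
      · exact hG.2 Q h
    · refine ⟨P * H, G, by ring, hP.mul hH, fun Q hQ h => ?_, hG⟩
      rcases Q.dvd_mul.1 h with h | h
      · have := MonicIrred.eq_of_dvd (Q := ⟨P, hP, hi⟩) h
        exact hPs (this ▸ hQ)
      · exact hHs Q hQ h

lemma eq_of_smooth_mul_cop_eq {s : Finset (MonicIrred K)} {H G H' G' : K[X]} (hH : H.Monic)
    (hH' : H'.Monic) (hs : ∀ P ∈ s, ¬ P.1 ∣ H) (hs' : ∀ P ∈ s, ¬ P.1 ∣ H') (hG : SuppIn s G)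
    (hG' : SuppIn s G') (h : H * G = H' * G') : H = H' ∧ G = G' := by
  have h1 : H ∣ H' := (isCoprime_of_suppIn hH.ne_zero hs hG').dvd_of_dvd_mul_right
    (h ▸ dvd_mul_right H G)
  have h2 : H' ∣ H := (isCoprime_of_suppIn hH'.ne_zero hs' hG).dvd_of_dvd_mul_right
    (h ▸ dvd_mul_right H' G')
  have h3 := eq_of_monic_of_associated hH hH' (associated_of_dvd_dvd h1 h2)
  subst h3
  exact ⟨rfl, mul_left_cancel₀ hH.ne_zero h⟩

lemma sum_monics_split {M : Type*} [AddCommMonoid M] (s : Finset (MonicIrred K)) (n : ℕ)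
    (φ : K[X] → M) : ∑ F ∈ monics K n, φ F =
      ∑ G ∈ smooth s n, ∑ H ∈ cop s (n - G.natDegree), φ (H * G) := by
  rw [sum_sigma']
  symm
  refine sum_bij (fun x _ => x.2 * x.1) ?_ ?_ ?_ fun _ _ => rfl
  · rintro ⟨G, H⟩ hx
    obtain ⟨hG, hH⟩ := mem_sigma.1 hx
    obtain ⟨hG, hd⟩ := mem_smooth.1 hG
    obtain ⟨⟨hH, hd'⟩, _⟩ := mem_cop.1 hH
    refine mem_monics.2 ⟨hH.mul hG.1, ?_⟩
    dsimp only at *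
    rw [hH.natDegree_mul hG.1]
    omega
  · rintro ⟨G, H⟩ hx ⟨G', H'⟩ hx' h
    obtain ⟨hG, hH⟩ := mem_sigma.1 hx
    obtain ⟨hG', hH'⟩ := mem_sigma.1 hx'
    obtain ⟨h1, h2⟩ := eq_of_smooth_mul_cop_eq (mem_cop.1 hH).1.1 (mem_cop.1 hH').1.1
      (mem_cop.1 hH).2 (mem_cop.1 hH').2 (mem_smooth.1 hG).1 (mem_smooth.1 hG').1 h
    dsimp only at h1 h2
    rw [h1, h2]
  · intro F hF
    obtain ⟨hF, hd⟩ := mem_monics.1 hF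
    obtain ⟨H, G, rfl, hH, hHs, hG⟩ := exists_smooth_mul_cop s hF
    rw [hH.natDegree_mul hG.1] at hd
    exact ⟨⟨G, H⟩, mem_sigma.2 ⟨mem_smooth.2 ⟨hG, (by omega : G.natDegree ≤ n)⟩,
      mem_cop.2 ⟨⟨hH, (by omega : H.natDegree = n - G.natDegree)⟩, hHs⟩⟩, rfl⟩

variable {ψ : AddChar K ℂ} {ω : MulChar K ℂ}

/-- The sum of the Gauss sums `G(V, F)` over monic `F` of degree `n` coprime to `s`. -/
def psi (ψ : AddChar K ℂ) (ω : MulChar K ℂ) (s : Finset (MonicIrred K)) (V : K[X]) (n : ℕ) : ℂ :=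
  ∑ F ∈ cop s n, cgs ψ ω V F

lemma psi_split (hω : ω ^ 3 = 1) {s : Finset (MonicIrred K)} {P : MonicIrred K} (hP : P ∉ s)
    (V : K[X]) (n : ℕ) : psi ψ ω s V n = ∑ G ∈ smooth {P} n,
      cgs ψ ω V G * psi ψ ω (insert P s) (G * V) (n - G.natDegree) := by
  rw [psi, cop, sum_filter, sum_monics_split {P} n]
  refine sum_congr rfl fun G hG => ?_
  obtain ⟨hG, _⟩ := mem_smooth.1 hG
  have hfil : (cop {P} (n - G.natDegree)).filter (fun H => ∀ Q ∈ s, ¬ Q.1 ∣ H * G) =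
      cop (insert P s) (n - G.natDegree) := by
    ext H
    simp only [mem_filter, mem_cop, mem_singleton, forall_eq, mem_insert, forall_eq_or_imp,
      and_assoc]
    refine and_congr_right fun _ => and_congr_right fun _ => and_congr_right fun _ =>
      forall₂_congr fun Q hQ => not_congr ?_
    rw [Q.dvd_mul]
    refine or_iff_left fun h => ?_
    exact hP (mem_singleton.1 (hG.2 Q h) ▸ hQ)
  rw [← sum_filter, hfil, psi, mul_sum]
  refine sum_congr rfl fun H hH => ?_
  obtain ⟨⟨hH, _⟩, hHs⟩ := mem_cop.1 hH
  have hc : IsCoprime H G := isCoprime_of_suppIn hH.ne_zero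
    (s := {P}) (fun Q hQ => hHs Q (mem_insert.2 (Or.inl (mem_singleton.1 hQ)))) hG
  rw [cgs_mul hω hH hG.1 hc, mul_comm]

lemma suppIn_singleton_eq_pow {P : MonicIrred K} {G : K[X]} (hG : SuppIn {P} G) :
    ∃ i : ℕ, G = P.1 ^ i := by
  obtain ⟨i, R, hR, hRm, hRd⟩ := exists_eq_pow_mul P hG.1
  refine ⟨i, ?_⟩
  have : R = 1 := by
    by_contra h1
    obtain ⟨Q, hQ, hi, hd⟩ := exists_monic_irreducible_factor R
      (fun hu => h1 (hRm.eq_one_of_isUnit hu))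
    have := mem_singleton.1 (hG.2 ⟨Q, hQ, hi⟩ (hd.trans (hR ▸ dvd_mul_left R _)))
    subst this
    exact hRd hd
  rw [hR, this, mul_one]

lemma suppIn_pow (P : MonicIrred K) (i : ℕ) : SuppIn {P} (P.1 ^ i) :=
  ⟨P.2.1.pow i, fun Q hQ => mem_singleton.2 (MonicIrred.eq_of_dvd
    (Q.2.2.prime.dvd_of_dvd_pow hQ))⟩

lemma not_pow_dvd_mul {P : MonicIrred K} {V : K[X]} (hV : ¬ P.1 ∣ V) {a i : ℕ} (h : a < i) :
    ¬ P.1 ^ i ∣ P.1 ^ a * V := by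
  intro hd
  obtain ⟨j, rfl⟩ : ∃ j, i = a + (j + 1) := ⟨i - a - 1, by omega⟩
  rw [pow_add] at hd
  exact hV ((dvd_pow_self _ (Nat.succ_ne_zero j)).trans
    ((mul_dvd_mul_iff_left (P.2.1.pow a).ne_zero).1 hd))

lemma cgs_prime_pow_ne_zero (hψ : ψ ≠ 1) (hω : ω ^ 3 = 1) (hω1 : ω ≠ 1) {P : MonicIrred K}
    {V : K[X]} (hV : ¬ P.1 ∣ V) {a i : ℕ} (ha : a < 3)
    (h : cgs ψ ω (P.1 ^ a * V) (P.1 ^ i) ≠ 0) : i = 0 ∨ i = a + 1 := by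
  by_contra! hi
  rcases Nat.lt_or_ge a i with hai | hai
  · obtain ⟨j, rfl⟩ : ∃ j, i = j + 1 := ⟨i - 1, by omega⟩
    exact h (cgs_prime_pow_eq_zero hψ P.2.1 (not_pow_dvd_mul hV (by omega)))
  · exact h (cgs_prime_pow_eq_zero' hω hω1 P.2.1 P.2.2 (by omega)
      ((pow_dvd_pow _ hai).trans (dvd_mul_right _ _)))

lemma norm_cgs_prime_pow_le (hψ : ψ ≠ 1) (hω : ω ^ 3 = 1) {P : MonicIrred K} {V : K[X]}
    (hV : ¬ P.1 ∣ V) (a : ℕ) :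
    ‖cgs ψ ω (P.1 ^ a * V) (P.1 ^ (a + 1))‖ ≤ pw (a + 1 / 2) P.1 := by
  have h := gs_norm_sq_le hψ (isUnitChar_sym hω (P.2.1.pow (a + 1))) (P.2.1.pow a) P.2.1
    (pow_succ P.1 a) rfl ((P.isCoprime_iff V).2 hV)
  refine abs_le_of_sq_le_sq' (h.trans (le_of_eq ?_)) (pw_pos _ _).le |>.2
  rw [pw, ← Real.rpow_natCast _ 2, ← Real.rpow_mul card_pos_real.le, ← pow_add,
    ← Real.rpow_natCast]
  congr 1
  simp only [natDegree_pow]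
  push_cast
  ring

lemma norm_psi_insert_le (hψ : ψ ≠ 1) (hω : ω ^ 3 = 1) (hω1 : ω ≠ 1)
    {s : Finset (MonicIrred K)} {P : MonicIrred K} (hP : P ∉ s) {V : K[X]} (hV : ¬ P.1 ∣ V) {a : ℕ}
    (ha : a < 3) (n : ℕ) :
    ‖psi ψ ω (insert P s) (P.1 ^ a * V) n‖ ≤ ‖psi ψ ω s (P.1 ^ a * V) n‖ +
      if (a + 1) * P.1.natDegree ≤ n then pw (a + 1 / 2) P.1 *
        ‖psi ψ ω (insert P s) (P.1 ^ (a + 1) * (P.1 ^ a * V)) (n - (a + 1) * P.1.natDegree)‖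
      else 0 := by
  have hne : P.1 ^ (a + 1) ≠ 1 := fun h => by
    have := congrArg natDegree h
    rw [natDegree_pow, natDegree_one] at this
    have := P.natDegree_pos
    simp_all
  set T : K[X] → ℂ := fun G => cgs ψ ω (P.1 ^ a * V) G *
    psi ψ ω (insert P s) (G * (P.1 ^ a * V)) (n - G.natDegree) with hT
  have h1 : psi ψ ω s (P.1 ^ a * V) n = psi ψ ω (insert P s) (P.1 ^ a * V) n +
      if (a + 1) * P.1.natDegree ≤ n then T (P.1 ^ (a + 1)) else 0 := by
    have hone : (1 : K[X]) ∈ smooth {P} n := mem_smooth.2 ⟨by simpa using suppIn_pow P 0, by simp⟩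
    rw [psi_split hω hP, ← add_sum_erase _ _ hone]
    congr 1
    · simp [cgs_one]
    · change ∑ G ∈ (smooth {P} n).erase 1, T G = _
      split_ifs with hd
      · rw [sum_eq_single_of_mem (P.1 ^ (a + 1))]
        · exact mem_erase.2 ⟨hne, mem_smooth.2 ⟨suppIn_pow P _, by rwa [natDegree_pow]⟩⟩
        · intro G hG hGne
          obtain ⟨hG1, hG⟩ := mem_erase.1 hG
          obtain ⟨i, rfl⟩ := suppIn_singleton_eq_pow (mem_smooth.1 hG).1
          by_contra h0
          rcases cgs_prime_pow_ne_zero hψ hω hω1 hV ha (left_ne_zero_of_mul h0) with rfl | rfl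
          · exact hG1 (pow_zero _)
          · exact hGne rfl
      · refine sum_eq_zero fun G hG => ?_
        obtain ⟨hG1, hG⟩ := mem_erase.1 hG
        obtain ⟨i, rfl⟩ := suppIn_singleton_eq_pow (mem_smooth.1 hG).1
        by_contra h0
        rcases cgs_prime_pow_ne_zero hψ hω hω1 hV ha (left_ne_zero_of_mul h0) with rfl | rfl
        · exact hG1 (pow_zero _)
        · exact hd (by simpa [natDegree_pow] using (mem_smooth.1 hG).2)
  rw [← sub_eq_iff_eq_add] at h1
  rw [← h1]
  refine (norm_sub_le _ _).trans (add_le_add_right ?_ _)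
  split_ifs
  · rw [hT]
    simp only [norm_mul, natDegree_pow]
    exact mul_le_mul_of_nonneg_right (norm_cgs_prime_pow_le hψ hω hV a) (norm_nonneg _)
  · simp

lemma psi_cube_mul (hω : ω ^ 3 = 1) {s : Finset (MonicIrred K)} {P : MonicIrred K} (hP : P ∈ s)
    (k : ℕ) (V : K[X]) (n : ℕ) : psi ψ ω s (P.1 ^ (3 * k) * V) n = psi ψ ω s V n := by
  refine sum_congr rfl fun F hF => ?_
  obtain ⟨⟨hF, _⟩, hs⟩ := mem_cop.1 hF
  rw [mul_comm 3 k, pow_mul]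
  refine cgs_cube_mul hω hF ?_ V
  exact (isCoprime_comm.1 ((P.isCoprime_iff F).2 (hs P hP))).pow_right

lemma exists_norm_psi_le (hq : 7 ≤ Fintype.card K) (hψ : ψ ≠ 1) (hω : ω ^ 3 = 1)
    (hω1 : ω ≠ 1) : ∃ A : ℝ, 0 < A ∧ ∀ (s : Finset (MonicIrred K)) (n : ℕ) (V : K[X]), V ≠ 0 →
      ‖psi ψ ω s V n‖ ≤
        A * 2 ^ s.card * (Fintype.card K : ℝ) ^ (4 / 3 * (n : ℝ)) * pw (1 / 3) V := by
  obtain ⟨A, hA, hbase⟩ := exists_norm_cgsSum_le hq hψ hω hω1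
  refine ⟨A, hA, fun s => ?_⟩
  have hq0 : (0 : ℝ) < Fintype.card K := card_pos_real
  induction s using Finset.induction_on with
  | empty =>
    intro n V hV
    have : psi ψ ω ∅ V n = cgsSum ψ ω V n := by simp [psi, cgsSum, cop]
    simpa [this] using hbase V hV n
  | insert P s hP ih =>
    intro n
    induction n using Nat.strong_induction_on with
    | _ n ihn =>
      have key : ∀ (V : K[X]) (a : ℕ), a < 3 → ¬ P.1 ∣ V →
          ‖psi ψ ω (insert P s) (P.1 ^ a * V) n‖ ≤ A * 2 ^ (insert P s).card *
            (Fintype.card K : ℝ) ^ (4 / 3 * (n : ℝ)) * pw (1 / 3) (P.1 ^ a * V) := by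
        intro V a ha hV
        have hV0 : V ≠ 0 := fun h => hV (h ▸ dvd_zero _)
        have hW : P.1 ^ a * V ≠ 0 := mul_ne_zero (P.2.1.pow a).ne_zero hV0
        refine (norm_psi_insert_le hψ hω hω1 hP hV ha n).trans ?_
        have h1 := ih n _ hW
        set B := A * 2 ^ s.card * (Fintype.card K : ℝ) ^ (4 / 3 * (n : ℝ)) *
          pw (1 / 3) (P.1 ^ a * V) with hB
        have hB0 : 0 ≤ B := (norm_nonneg _).trans h1
        have h2 : A * 2 ^ (insert P s).card * (Fintype.card K : ℝ) ^ (4 / 3 * (n : ℝ)) *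
            pw (1 / 3) (P.1 ^ a * V) = B + B := by
          rw [card_insert_of_notMem hP, hB, pow_succ]; ring
        rw [h2]
        refine add_le_add h1 ?_
        split_ifs with hd
        · have h3 := ihn (n - (a + 1) * P.1.natDegree)
            (by have := P.natDegree_pos
                have : 0 < (a + 1) * P.1.natDegree := by positivity
                omega)
            (P.1 ^ (a + 1) * (P.1 ^ a * V)) (mul_ne_zero (P.2.1.pow _).ne_zero hW)
          refine (mul_le_mul_of_nonneg_left h3 (pw_pos _ _).le).trans ?_
          have h4 : pw (a + 1 / 2) P.1 * (A * 2 ^ (insert P s).card *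
              (Fintype.card K : ℝ) ^ (4 / 3 * ((n - (a + 1) * P.1.natDegree : ℕ) : ℝ)) *
                pw (1 / 3) (P.1 ^ (a + 1) * (P.1 ^ a * V))) =
              B * (2 * pw (-(1 / 2)) P.1) := by
            have h5 : pw (a + 1 / 2) P.1 *
                (Fintype.card K : ℝ) ^ (4 / 3 * ((n - (a + 1) * P.1.natDegree : ℕ) : ℝ)) *
                pw (1 / 3) (P.1 ^ (a + 1)) =
                (Fintype.card K : ℝ) ^ (4 / 3 * (n : ℝ)) * pw (-(1 / 2)) P.1 := by
              simp only [pw, natDegree_pow]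
              rw [← Real.rpow_add hq0, ← Real.rpow_add hq0, ← Real.rpow_add hq0]
              congr 1
              push_cast [Nat.cast_sub hd]
              ring
            rw [pw_mul _ (P.2.1.pow _).ne_zero hW, card_insert_of_notMem hP, hB, pow_succ]
            linear_combination A * 2 ^ s.card * 2 * pw (1 / 3) (P.1 ^ a * V) * h5
          rw [h4]
          have := pw_neg_half_le hq P
          exact mul_le_of_le_one_right hB0 (by linarith)
        · exact hB0
      intro V hV
      obtain ⟨V₀, hV₀, hd⟩ := (FiniteMultiplicity.of_not_isUnit P.2.2.not_isUnit
        hV).exists_eq_pow_mul_and_not_dvd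
      set b := multiplicity P.1 V
      have hb : V = P.1 ^ (3 * (b / 3)) * (P.1 ^ (b % 3) * V₀) := by
        rw [← mul_assoc, ← pow_add, Nat.div_add_mod]; exact hV₀
      have hle : pw (1 / 3) (P.1 ^ (b % 3) * V₀) ≤ pw (1 / 3) V :=
        pw_le_of_dvd (by norm_num) hV (hb ▸ dvd_mul_left _ _)
      have hpsi : psi ψ ω (insert P s) V n = psi ψ ω (insert P s) (P.1 ^ (b % 3) * V₀) n := by
        conv_lhs => rw [hb]
        exact psi_cube_mul hω (mem_insert_self P s) _ _ _
      rw [hpsi]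
      refine (key V₀ (b % 3) (Nat.mod_lt _ (by norm_num)) hd).trans ?_
      gcongr
end

section
variable {K : Type} [Field K] [Fintype K] {ψ : AddChar K ℂ} {ω : MulChar K ℂ}

lemma isUnitChar_sym_mul_sq (hω : ω ^ 3 = 1) {F D : K[X]} (hF : F.Monic) (hD : D.Monic) :
    IsUnitChar (F * D) (sym ω (F * D ^ 2)) where
  periodic := fun a b h => by
    rw [sym_mul_left hF (hD.pow 2), sym_mul_left hF (hD.pow 2), sym_pow_left hD, sym_pow_left hD,
      sym_periodic hF a b ((dvd_mul_right F D).trans h),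
      sym_periodic hD a b ((dvd_mul_left D F).trans h)]
  map_mul := sym_mul_right (hF.mul (hD.pow 2))
  norm_eq_one := fun a h => norm_sym hω (hF.mul (hD.pow 2))
    (IsCoprime.mul_left h.of_mul_left_left h.of_mul_left_right.pow_left)
  eq_zero := fun a h => (sym_eq_zero_iff (hF.mul (hD.pow 2)) a).2 fun h' =>
    h (IsCoprime.mul_left h'.of_mul_left_left
      ((IsCoprime.pow_left_iff (by norm_num)).1 h'.of_mul_left_right))

lemma sum_residues_sym_mul_sq_eq_zero (hω : ω ^ 3 = 1) (hω1 : ω ≠ 1) {F D : K[X]} (hF : F.Monic)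
    (hD : D.Monic) (h3 : ¬ 3 ∣ (F * D ^ 2).natDegree) :
    ∑ x ∈ low K (F * D).natDegree, sym ω (F * D ^ 2) x = 0 := by
  obtain ⟨c, hc⟩ := MulChar.ne_one_iff.1 hω1
  refine sum_sym_eq_zero (hF.mul hD) (isUnitChar_sym_mul_sq hω hF hD) (a := C (c : K)) ?_ ?_
  · exact isCoprime_one_right.of_isCoprime_of_dvd_right
      (isUnit_C.2 c.isUnit).dvd
  · rw [sym_C]
    exact pow_ne_one_of_cube (omega_cube_eq_one hω c.ne_zero) hc h3

lemma poisson_monics (hψ : ψ ≠ 1) {Q : K[X]} (hQ : Q.Monic) {n L : ℕ} (hL : 1 ≤ L)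
    (hd : Q.natDegree = n + L) (φ : K[X] → ℂ) :
    (Fintype.card K : ℂ) ^ L * ∑ f ∈ monics K n, φ f =
      ∑ W ∈ low K L, ψ ((-(W * X ^ n)).coeff (n + L - 1)) * gs ψ φ Q W := by
  have hX : (X : K[X]) ^ n ∈ low K (n + L) := by
    rw [mem_low, degree_X_pow]; exact_mod_cast (by omega : n < n + L)
  have h1 : ∀ y ∈ low K (n + L), (if y - X ^ n ∈ low K n then (Fintype.card K : ℂ) ^ L else 0) =
      ∑ W ∈ low K L, ee ψ Q (W * (y - X ^ n)) := by
    intro y hy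
    rw [sum_low_ee hψ hQ hd, (modByMonic_eq_self_iff hQ).2]
    rw [degree_eq_natDegree hQ.ne_zero, hd]
    exact mem_low.1 (sub_mem_low hy hX)
  have h2 : ∑ f ∈ monics K n, φ f =
      ∑ y ∈ low K (n + L), if y - X ^ n ∈ low K n then φ y else 0 := by
    rw [sum_monics, ← sum_filter]
    refine sum_bij (fun g _ => X ^ n + g) ?_ ?_ ?_ fun _ _ => rfl
    · intro g hg
      refine mem_filter.2 ⟨add_mem_low hX (low_mono (by omega) hg), by simpa using hg⟩
    · intro g _ g' _ h; simpa using h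
    · intro y hy
      exact ⟨y - X ^ n, (mem_filter.1 hy).2, by ring⟩
  have h3 : ∀ W ∈ low K L, ψ ((-(W * X ^ n)).coeff (n + L - 1)) = ee ψ Q (-(W * X ^ n)) := by
    intro W hW
    rw [ee, rs_eq_coeff hQ, hd]
    rw [hd, mem_low, degree_neg, degree_mul, degree_X_pow]
    rw [mem_low] at hW
    by_cases h0 : W = 0
    · simp [h0]
    · rw [degree_eq_natDegree h0] at hW ⊢
      have := Nat.cast_lt.1 hW
      exact_mod_cast (by omega : W.natDegree + n < n + L)
  rw [h2, mul_sum]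
  calc ∑ y ∈ low K (n + L), (Fintype.card K : ℂ) ^ L * (if y - X ^ n ∈ low K n then φ y else 0)
      = ∑ y ∈ low K (n + L), φ y * ∑ W ∈ low K L, ee ψ Q (W * (y - X ^ n)) := by
        refine sum_congr rfl fun y hy => ?_
        rw [← h1 y hy]
        split_ifs <;> ring
    _ = ∑ W ∈ low K L, ∑ y ∈ low K (n + L), φ y * ee ψ Q (W * (y - X ^ n)) := by
        simp only [mul_sum]; exact sum_comm
    _ = _ := by
        refine sum_congr rfl fun W hW => ?_
        rw [h3 W hW, gs, hd, mul_sum]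
        refine sum_congr rfl fun y _ => ?_
        rw [show W * (y - X ^ n) = -(W * X ^ n) + y * W by ring, ee_add]
        ring

lemma gs_sym_mul_sq_split (hω : ω ^ 3 = 1) {H G D : K[X]} (hH : H.Monic) (hG : G.Monic)
    (hD : D.Monic) (hHG : IsCoprime H G) (hHD : IsCoprime H D) (W : K[X]) :
    gs ψ (sym ω (H * G * D ^ 2)) (H * G * D) W =
      gs ψ (sym ω (G * D ^ 2)) (G * D) W * cgs ψ ω (G * W) H := by
  have hGD := hG.mul (hD.pow 2)
  have h1 : sym ω (H * G * D ^ 2) = fun x => sym ω H x * sym ω (G * D ^ 2) x := by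
    funext x; rw [mul_assoc, sym_mul_left hH hGD]
  rw [h1, mul_assoc H G D, gs_crt hH (hG.mul hD) (hHG.mul_right hHD) (isUnitChar_sym hω hH)
    (isUnitChar_sym_mul_sq hω hG hD) W, sym_reciprocity hω (G * D ^ 2) H]
  change _ * (cgs ψ ω W H * _) = _
  rw [← cgs_scale hω hH hHG W, sym_mul_right hH, sym_mul_right hH, sym_pow_right hH]
  have hG3 := sym_cube hω hH hHG
  have hD3 := sym_cube hω hH hHD
  have : sym ω H G ^ 3 * sym ω H D ^ 3 = 1 := by rw [hG3, hD3, one_mul]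
  linear_combination (cgs ψ ω (G * W) H * gs ψ (sym ω (G * D ^ 2)) (G * D) W) * this

lemma sum_gs_sym_mul_sq (hω : ω ^ 3 = 1) (s : Finset (MonicIrred K)) (n : ℕ) (W : K[X]) :
    ∑ F ∈ monics K n, gs ψ (sym ω (F * sqf s ^ 2)) (F * sqf s) W =
      ∑ G ∈ smooth s n, gs ψ (sym ω (G * sqf s ^ 2)) (G * sqf s) W *
        psi ψ ω s (G * W) (n - G.natDegree) := by
  rw [sum_monics_split s]
  refine sum_congr rfl fun G hG => ?_
  rw [psi, mul_sum]
  refine sum_congr rfl fun H hH => ?_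
  obtain ⟨⟨hH, _⟩, hHs⟩ := mem_cop.1 hH
  have hG := (mem_smooth.1 hG).1
  exact gs_sym_mul_sq_split hω hH hG.1 (sqf_monic s) (isCoprime_of_suppIn hH.ne_zero hHs hG)
    (isCoprime_sqf_iff.2 hHs) W

/-- The nonzero polynomials of degree less than `L`. -/
def lowNZ (K : Type) [Field K] [Fintype K] (L : ℕ) : Finset K[X] := (low K L).erase 0

lemma mem_lowNZ {L : ℕ} {W : K[X]} : W ∈ lowNZ K L ↔ W ≠ 0 ∧ W.natDegree < L := by
  rw [lowNZ, mem_erase, mem_low]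
  refine and_congr_right fun h => ?_
  rw [degree_eq_natDegree h, Nat.cast_lt]

lemma pw_half_mul_card_lowNZ_le {E : K[X]} (hE : E.Monic) (L : ℕ) :
    pw (1 / 2) E * ((lowNZ K L).filter (E ∣ ·)).card ≤
      (Fintype.card K : ℝ) ^ (L : ℝ) * pw (-(1 / 2)) E := by
  have hq0 : (0 : ℝ) < Fintype.card K := card_pos_real
  have h : (((lowNZ K L).filter (E ∣ ·)).card : ℝ) ≤
      (Fintype.card K : ℝ) ^ ((L : ℝ) - E.natDegree) := by
    by_cases hd : E.natDegree ≤ L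
    · have h1 : ((lowNZ K L).filter (E ∣ ·)).card ≤ Fintype.card K ^ (L - E.natDegree) := by
        rw [← card_low (K := K) (L - E.natDegree)]
        refine (card_le_card (t := (low K (L - E.natDegree)).image (E * ·)) ?_).trans card_image_le
        intro F hF
        obtain ⟨hF, G, rfl⟩ := mem_filter.1 hF
        obtain ⟨h0, hdeg⟩ := mem_lowNZ.1 hF
        have hG0 : G ≠ 0 := right_ne_zero_of_mul h0
        refine mem_image.2 ⟨G, ?_, rfl⟩
        rw [natDegree_mul hE.ne_zero hG0] at hdeg
        rw [mem_low, degree_eq_natDegree hG0]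
        exact_mod_cast (by omega : G.natDegree < L - E.natDegree)
      refine (Nat.cast_le.2 h1).trans (le_of_eq ?_)
      rw [← Nat.cast_sub hd, Real.rpow_natCast]
      push_cast
      rfl
    · rw [card_eq_zero.2 (filter_eq_empty_iff.2 fun F hF hd' => hd ?_), Nat.cast_zero]
      · positivity
      · obtain ⟨h0, hdeg⟩ := mem_lowNZ.1 hF
        exact (natDegree_le_of_dvd hd' h0).trans hdeg.le
  refine (mul_le_mul_of_nonneg_left h (pw_pos _ _).le).trans (le_of_eq ?_)
  rw [pw, pw, ← Real.rpow_add hq0, ← Real.rpow_add hq0]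
  ring_nf

/-- The sum of `|E|^(1/2)` over the common monic divisors `E` of `R` and `W`. -/
def gcdSum (R W : K[X]) : ℝ := ∑ E ∈ mdiv R, if E ∣ R ∧ E ∣ W then pw (1 / 2) E else 0

lemma gcdSum_nonneg (R W : K[X]) : 0 ≤ gcdSum R W := sum_nonneg fun E _ => by
  split_ifs
  exacts [(pw_pos _ _).le, le_rfl]

lemma norm_gs_le (hψ : ψ ≠ 1) {F : K[X]} (hF : F.Monic) {φ : K[X] → ℂ}
    (hφ : IsUnitChar F φ) (V : K[X]) : ‖gs ψ φ F V‖ ≤ pw (1 / 2) F * gcdSum F V :=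
  norm_gs_le_sum hψ hF hφ fun _ hE h _ => (mem_mdiv hF.ne_zero).2 ⟨hE, h⟩

lemma sum_lowNZ_gcd_le (hq : 7 ≤ Fintype.card K) {s : Finset (MonicIrred K)} {R : K[X]}
    (hR : SuppIn s R) (L : ℕ) :
    ∑ W ∈ lowNZ K L, gcdSum R W ≤ (Fintype.card K : ℝ) ^ (L : ℝ) * 2 ^ s.card := by
  have hR0 := hR.1.ne_zero
  calc _ = ∑ E ∈ mdiv R, pw (1 / 2) E * ((lowNZ K L).filter (E ∣ ·)).card := by
        simp only [gcdSum]
        rw [sum_comm]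
        refine sum_congr rfl fun E hE => ?_
        simp only [((mem_mdiv hR0).1 hE).2, true_and]
        rw [← sum_filter, sum_const, nsmul_eq_mul, mul_comm]
    _ ≤ ∑ E ∈ mdiv R, (Fintype.card K : ℝ) ^ (L : ℝ) * pw (-(1 / 2)) E :=
        sum_le_sum fun E hE => pw_half_mul_card_lowNZ_le ((mem_mdiv hR0).1 hE).1 L
    _ ≤ _ := by
        rw [← mul_sum]
        refine mul_le_mul_of_nonneg_left (sum_pw_neg_half_le hq s _ fun E hE => ?_)
          (Real.rpow_pos_of_pos card_pos_real _).le
        obtain ⟨hE, hd⟩ := (mem_mdiv hR0).1 hE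
        exact ⟨hE, fun P hP => hR.2 P (hP.trans hd)⟩

/-- The double sum of `χ_{F D²}(f)` over monic `F`, `f` of degrees `m`, `n`, with `D = sqf s`. -/
def dsum (ω : MulChar K ℂ) (s : Finset (MonicIrred K)) (m n : ℕ) : ℂ :=
  ∑ F ∈ monics K m, ∑ f ∈ monics K n, sym ω (F * sqf s ^ 2) f

lemma natDegree_mul_sqf_sq {s : Finset (MonicIrred K)} {F : K[X]} (hF : F.Monic) :
    (F * sqf s ^ 2).natDegree = F.natDegree + 2 * (sqf s).natDegree := by
  rw [hF.natDegree_mul ((sqf_monic s).pow 2), (sqf_monic s).natDegree_pow]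

lemma dsum_eq_zero (hω : ω ^ 3 = 1) (hω1 : ω ≠ 1) {s : Finset (MonicIrred K)} {m n : ℕ}
    (h3 : ¬ 3 ∣ m + 2 * (sqf s).natDegree) (hn : m + (sqf s).natDegree ≤ n) : dsum ω s m n = 0 := by
  refine sum_eq_zero fun F hF => ?_
  obtain ⟨hF, hd⟩ := mem_monics.1 hF
  have hs := sqf_monic s
  rw [sum_monics_residues (hF.mul hs) (isUnitChar_sym_mul_sq hω hF hs).periodic,
    sum_residues_sym_mul_sq_eq_zero hω hω1 hF hs, smul_zero]
  · rwa [natDegree_mul_sqf_sq hF, hd]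
  · rwa [hF.natDegree_mul hs, hd]

lemma card_pow_mul_dsum (hψ : ψ ≠ 1) (hω : ω ^ 3 = 1) (hω1 : ω ≠ 1) {s : Finset (MonicIrred K)}
    {m n L : ℕ} (h3 : ¬ 3 ∣ m + 2 * (sqf s).natDegree) (hL : 1 ≤ L)
    (hn : m + (sqf s).natDegree = n + L) :
    (Fintype.card K : ℂ) ^ L * dsum ω s m n = ∑ W ∈ lowNZ K L,
      ψ ((-(W * X ^ n)).coeff (n + L - 1)) * ∑ G ∈ smooth s m,
        gs ψ (sym ω (G * sqf s ^ 2)) (G * sqf s) W * psi ψ ω s (G * W) (m - G.natDegree) := by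
  have hs := sqf_monic s
  have h1 : ∀ F ∈ monics K m, (Fintype.card K : ℂ) ^ L *
      ∑ f ∈ monics K n, sym ω (F * sqf s ^ 2) f = ∑ W ∈ lowNZ K L,
        ψ ((-(W * X ^ n)).coeff (n + L - 1)) *
          gs ψ (sym ω (F * sqf s ^ 2)) (F * sqf s) W := by
    intro F hF
    obtain ⟨hF, hd⟩ := mem_monics.1 hF
    rw [poisson_monics hψ (hF.mul hs) hL (by rw [hF.natDegree_mul hs, hd, hn]), lowNZ]
    refine (sum_erase _ ?_).symm
    have : gs ψ (sym ω (F * sqf s ^ 2)) (F * sqf s) 0 = 0 := by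
      simp only [gs, mul_zero, ee_zero, mul_one]
      refine sum_residues_sym_mul_sq_eq_zero hω hω1 hF hs ?_
      rwa [natDegree_mul_sqf_sq hF, hd]
    rw [this, mul_zero]
  rw [dsum, mul_sum, sum_congr rfl h1, sum_comm]
  refine sum_congr rfl fun W _ => ?_
  rw [← mul_sum, sum_gs_sym_mul_sq hω]

lemma suppIn_mul_sqf {s : Finset (MonicIrred K)} {G : K[X]} (hG : SuppIn s G) :
    SuppIn s (G * sqf s) :=
  ⟨hG.1.mul (sqf_monic s), fun P hP => (P.dvd_mul.1 hP).elim (hG.2 P) dvd_sqf_iff.1⟩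

lemma exists_norm_dsum_le (hq : 7 ≤ Fintype.card K) (hω : ω ^ 3 = 1) (hω1 : ω ≠ 1)
    (hψ : ψ ≠ 1) : ∃ A : ℝ, 0 < A ∧ ∀ (s : Finset (MonicIrred K)) (m n L : ℕ),
      ¬ 3 ∣ m + 2 * (sqf s).natDegree → 1 ≤ L → m + (sqf s).natDegree = n + L →
      ‖dsum ω s m n‖ ≤ A * 8 ^ s.card *
        (Fintype.card K : ℝ) ^ (4 / 3 * (m : ℝ) + 1 / 3 * (L : ℝ)) * pw (1 / 2) (sqf s) := by
  obtain ⟨A, hA, hpsi⟩ := exists_norm_psi_le hq hψ hω hω1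
  refine ⟨A, hA, fun s m n L h3 hL hn => ?_⟩
  set q : ℝ := (Fintype.card K : ℝ) with hqdef
  have hq0 : 0 < q := card_pos_real
  have hs := sqf_monic s
  set B := A * 2 ^ s.card * q ^ (4 / 3 * (m : ℝ) + 1 / 3 * (L : ℝ)) * pw (1 / 2) (sqf s) with hB
  have hB0 : 0 ≤ B := by
    have := pw_pos (1 / 2) (sqf s)
    positivity
  have hterm : ∀ W ∈ lowNZ K L, ∀ G ∈ smooth s m,
      ‖gs ψ (sym ω (G * sqf s ^ 2)) (G * sqf s) W * psi ψ ω s (G * W) (m - G.natDegree)‖ ≤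
        B * pw (-(1 / 2)) G * gcdSum (G * sqf s) W := by
    intro W hW G hG
    obtain ⟨hW0, hWd⟩ := mem_lowNZ.1 hW
    obtain ⟨hG, hGd⟩ := mem_smooth.1 hG
    have hG0 := hG.1.ne_zero
    have h1 := norm_gs_le hψ (hG.1.mul hs) (isUnitChar_sym_mul_sq hω hG.1 hs) W
    have hT0 := gcdSum_nonneg (G * sqf s) W
    have h2 := hpsi s (m - G.natDegree) (G * W) (mul_ne_zero hG0 hW0)
    rw [norm_mul]
    refine (mul_le_mul h1 h2 (norm_nonneg _)
      (mul_nonneg (pw_pos _ _).le hT0)).trans ?_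
    have h3 : pw (1 / 3) W ≤ q ^ (1 / 3 * (L : ℝ)) := by
      refine Real.rpow_le_rpow_of_exponent_le one_lt_card_real.le ?_
      have : (W.natDegree : ℝ) ≤ L := by exact_mod_cast hWd.le
      linarith
    have h4 : pw (1 / 2) G * q ^ (4 / 3 * ((m - G.natDegree : ℕ) : ℝ)) * pw (1 / 3) G =
        q ^ (4 / 3 * (m : ℝ)) * pw (-(1 / 2)) G := by
      simp only [pw]
      rw [← hqdef, ← Real.rpow_add hq0, ← Real.rpow_add hq0, ← Real.rpow_add hq0,
        Nat.cast_sub hGd]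
      ring_nf
    rw [pw_mul _ hG0 hs.ne_zero, pw_mul _ hG0 hW0]
    calc _ = A * 2 ^ s.card * pw (1 / 2) (sqf s) * gcdSum (G * sqf s) W *
          (pw (1 / 2) G * q ^ (4 / 3 * ((m - G.natDegree : ℕ) : ℝ)) * pw (1 / 3) G) *
            pw (1 / 3) W := by ring
      _ ≤ A * 2 ^ s.card * pw (1 / 2) (sqf s) * gcdSum (G * sqf s) W *
          (q ^ (4 / 3 * (m : ℝ)) * pw (-(1 / 2)) G) * q ^ (1 / 3 * (L : ℝ)) := by
          rw [h4]
          have := pw_pos (1 / 2) (sqf s)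
          have := pw_pos (-(1 / 2)) G
          exact mul_le_mul_of_nonneg_left h3 (by positivity)
      _ = _ := by
          rw [hB, Real.rpow_add hq0]; ring
  have hmain : q ^ L * ‖dsum ω s m n‖ ≤ B * (2 ^ s.card * (q ^ (L : ℝ) * 2 ^ s.card)) := by
    have h := congrArg norm (card_pow_mul_dsum hψ hω hω1 h3 hL hn)
    rw [norm_mul, norm_pow, Complex.norm_natCast] at h
    rw [h]
    calc _ ≤ ∑ W ∈ lowNZ K L, ∑ G ∈ smooth s m, B * pw (-(1 / 2)) G * gcdSum (G * sqf s) W := by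
          refine (norm_sum_le _ _).trans (sum_le_sum fun W hW => ?_)
          rw [norm_mul, AddChar.norm_apply, one_mul]
          exact (norm_sum_le _ _).trans (sum_le_sum fun G hG => hterm W hW G hG)
      _ = ∑ G ∈ smooth s m, B * pw (-(1 / 2)) G * ∑ W ∈ lowNZ K L, gcdSum (G * sqf s) W := by
          rw [sum_comm]
          simp only [mul_sum]
      _ ≤ ∑ G ∈ smooth s m, B * pw (-(1 / 2)) G * (q ^ (L : ℝ) * 2 ^ s.card) := by
          refine sum_le_sum fun G hG => mul_le_mul_of_nonneg_left ?_
            (mul_nonneg hB0 (pw_pos _ _).le)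
          exact sum_lowNZ_gcd_le hq (suppIn_mul_sqf (mem_smooth.1 hG).1) L
      _ = B * ((∑ G ∈ smooth s m, pw (-(1 / 2)) G) * (q ^ (L : ℝ) * 2 ^ s.card)) := by
          rw [sum_mul, mul_sum]
          exact sum_congr rfl fun G _ => by ring
      _ ≤ _ := by
          refine mul_le_mul_of_nonneg_left (mul_le_mul_of_nonneg_right ?_ (by positivity)) hB0
          exact sum_pw_neg_half_le hq s _ fun E hE => (mem_smooth.1 hE).1
  rw [Real.rpow_natCast] at hmain
  have h8 : (8 : ℝ) ^ s.card = 2 ^ s.card * 2 ^ s.card * 2 ^ s.card := by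
    rw [← mul_pow, ← mul_pow]; norm_num
  refine le_of_mul_le_mul_left (hmain.trans (le_of_eq ?_)) (pow_pos hq0 L)
  rw [hB, h8]
  ring
end

section
variable {K : Type} [Field K] [Fintype K] {ω : MulChar K ℂ}

lemma exists_eq_cube {f : K[X]} (hf : f.Monic)
    (h : ∀ (P : MonicIrred K) (i : ℕ) (R : K[X]), f = P.1 ^ i * R → ¬ P.1 ∣ R → 3 ∣ i) :
    ∃ k : K[X], k.Monic ∧ f = k ^ 3 := by
  induction hn : f.natDegree using Nat.strong_induction_on generalizing f with
  | _ n ih =>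
    by_cases h1 : f = 1
    · exact ⟨1, monic_one, by rw [h1, one_pow]⟩
    obtain ⟨P, hP, hi, hd⟩ := exists_monic_irreducible_factor f
      (fun hu => h1 (hf.eq_one_of_isUnit hu))
    set P' : MonicIrred K := ⟨P, hP, hi⟩ with hP'
    obtain ⟨i, R, hR, hRm, hRd⟩ := exists_eq_pow_mul P' hf
    obtain ⟨j, rfl⟩ := h P' i R hR hRd
    have hi0 : 3 * j ≠ 0 := fun h0 => by
      rw [h0, pow_zero, one_mul] at hR
      exact hRd (hR ▸ hd)
    have hdeg : R.natDegree < n := by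
      have := P'.natDegree_pos
      rw [← hn, hR, (P'.2.1.pow _).natDegree_mul hRm, P'.2.1.natDegree_pow]
      have : 0 < 3 * j * P'.1.natDegree := Nat.mul_pos (Nat.pos_of_ne_zero hi0) this
      omega
    have hR3 : ∀ (Q : MonicIrred K) (l : ℕ) (S : K[X]), R = Q.1 ^ l * S → ¬ Q.1 ∣ S → 3 ∣ l := by
      intro Q l S hS hQS
      by_cases hQP : Q = P'
      · subst hQP
        rcases Nat.eq_zero_or_pos l with rfl | hl
        · exact dvd_zero _
        · exact absurd (hS ▸ (dvd_pow_self _ hl.ne').mul_right S) hRd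
      · refine h Q l (P'.1 ^ (3 * j) * S) (by rw [hR, hS]; ring) fun hdv => ?_
        rcases Q.dvd_mul.1 hdv with h' | h'
        · exact hQP (MonicIrred.eq_of_dvd (Q.2.2.prime.dvd_of_dvd_pow h'))
        · exact hQS h'
    obtain ⟨k, hk, hRk⟩ := ih _ hdeg hRm hR3 rfl
    exact ⟨P ^ j * k, (hP.pow j).mul hk, by rw [hR, hRk]; ring⟩

lemma exists_sym_ne_one_of_not_cube (hω : ω ^ 3 = 1) (hω1 : ω ≠ 1) {f : K[X]} (hf : f.Monic)
    (h : ∀ k : K[X], k.Monic → f ≠ k ^ 3) : ∃ a, IsCoprime f a ∧ sym ω f a ≠ 1 := by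
  by_contra! hcon
  suffices ∃ k : K[X], k.Monic ∧ f = k ^ 3 by
    obtain ⟨k, hk, hfk⟩ := this
    exact h k hk hfk
  refine exists_eq_cube hf fun P i R hR hd => ?_
  by_contra h3
  have hRm : R.Monic := (P.2.1.pow i).of_mul_monic_left (hR ▸ hf)
  obtain ⟨a, ha, ha1⟩ := exists_sym_ne_one hω1 P.2.1 P.2.2
  obtain ⟨u, v, huv⟩ := (P.isCoprime_iff R).2 hd
  set b := a * (v * R) + u * P.1 with hb
  have hbP : P.1 ∣ b - a := ⟨u - a * u, by rw [hb]; linear_combination a * huv⟩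
  have hbR : R ∣ b - 1 := ⟨a * v - v, by rw [hb]; linear_combination huv⟩
  have hcop : IsCoprime f b := by
    rw [hR]
    refine IsCoprime.mul_left (IsCoprime.pow_left ((isCoprime_congr hbP).2 ha)) ?_
    exact (isCoprime_congr hbR).2 isCoprime_one_right
  refine pow_ne_one_of_cube (sym_cube hω P.2.1 ha) ha1 h3 ?_
  rw [← hcon b hcop, hR, sym_mul_left (P.2.1.pow i) hRm, sym_pow_left P.2.1,
    sym_periodic P.2.1 b a hbP, sym_periodic hRm b 1 hbR, sym_one_right, mul_one]

/-- The Euler function of `𝔽_q[T]`. -/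
def phi (k : K[X]) : ℕ := ((low K k.natDegree).filter (IsCoprime k)).card

lemma sym_cube_left (hω : ω ^ 3 = 1) {k : K[X]} (hk : k.Monic) (x : K[X]) :
    sym ω (k ^ 3) x = if IsCoprime k x then 1 else 0 := by
  rw [sym_pow_left hk]
  split_ifs with h
  · exact sym_cube hω hk h
  · rw [(sym_eq_zero_iff hk x).2 h]; norm_num

lemma sum_monics_sym_cube (hω : ω ^ 3 = 1) {k : K[X]} (hk : k.Monic) {m : ℕ}
    (hm : k.natDegree ≤ m) :
    ∑ F ∈ monics K m, sym ω (k ^ 3) F = (Fintype.card K : ℂ) ^ (m - k.natDegree) * phi k := by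
  have hper : PeriodicMod k (sym ω (k ^ 3)) := fun a b h => by
    rw [sym_pow_left hk, sym_pow_left hk, sym_periodic hk a b h]
  rw [sum_monics_residues hk hper hm]
  simp only [sym_cube_left hω hk, nsmul_eq_mul, sum_boole, phi]
  push_cast
  rfl

lemma dsum_eq_sum_sym (hω : ω ^ 3 = 1) (s : Finset (MonicIrred K)) (m n : ℕ) :
    dsum ω s m n = ∑ f ∈ monics K n, sym ω (sqf s ^ 2) f * ∑ F ∈ monics K m, sym ω f F := by
  rw [dsum, sum_comm]
  refine sum_congr rfl fun f hf => ?_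
  rw [mul_sum]
  refine sum_congr rfl fun F hF => ?_
  rw [sym_mul_left (mem_monics.1 hF).1 ((sqf_monic s).pow 2), mul_comm, sym_reciprocity hω F f]

lemma sum_monics_sym_eq_zero (hω : ω ^ 3 = 1) (hω1 : ω ≠ 1) {f : K[X]} (hf : f.Monic)
    (h : ∀ k : K[X], k.Monic → f ≠ k ^ 3) {m : ℕ} (hm : f.natDegree ≤ m) :
    ∑ F ∈ monics K m, sym ω f F = 0 := by
  obtain ⟨a, ha, ha1⟩ := exists_sym_ne_one_of_not_cube hω hω1 hf h
  rw [sum_monics_residues hf (sym_periodic hf) hm,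
    sum_sym_eq_zero hf (isUnitChar_sym hω hf) ha ha1, smul_zero]

lemma dsum_eq_zero_of_not_three_dvd (hω : ω ^ 3 = 1) (hω1 : ω ≠ 1) (s : Finset (MonicIrred K))
    {m n : ℕ} (hn : n ≤ m) (h3 : ¬ 3 ∣ n) : dsum ω s m n = 0 := by
  rw [dsum_eq_sum_sym hω]
  refine sum_eq_zero fun f hf => ?_
  obtain ⟨hf, hd⟩ := mem_monics.1 hf
  rw [sum_monics_sym_eq_zero hω hω1 hf _ (hd ▸ hn), mul_zero]
  rintro k hk rfl
  rw [hk.natDegree_pow] at hd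
  exact h3 ⟨_, hd.symm⟩

lemma eq_of_cube_eq {k l : K[X]} (hk : k.Monic) (hl : l.Monic) (h : k ^ 3 = l ^ 3) : k = l :=
  eq_of_monic_of_associated hk hl (associated_of_dvd_dvd
    ((UniqueFactorizationMonoid.pow_dvd_pow_iff_dvd three_ne_zero).1 h.dvd)
    ((UniqueFactorizationMonoid.pow_dvd_pow_iff_dvd three_ne_zero).1 h.symm.dvd))

lemma dsum_three_mul (hω : ω ^ 3 = 1) (hω1 : ω ≠ 1) (s : Finset (MonicIrred K))
    {m l : ℕ} (hn : 3 * l ≤ m) :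
    dsum ω s m (3 * l) = ∑ k ∈ cop s l, (Fintype.card K : ℂ) ^ (m - l) * phi k := by
  rw [dsum_eq_sum_sym hω]
  have hsub : (monics K l).image (· ^ 3) ⊆ monics K (3 * l) := by
    intro f hf
    obtain ⟨k, hk, rfl⟩ := mem_image.1 hf
    obtain ⟨hkm, hd⟩ := mem_monics.1 hk
    exact mem_monics.2 ⟨hkm.pow 3, by rw [hkm.natDegree_pow, hd]⟩
  rw [← sum_subset hsub, sum_image, cop, sum_filter]
  · refine sum_congr rfl fun k hk => ?_
    obtain ⟨hk, hd⟩ := mem_monics.1 hk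
    rw [sum_monics_sym_cube hω hk (by omega), hd, sym_reciprocity hω, sym_cube_left hω hk]
    have : IsCoprime k (sqf s ^ 2) ↔ ∀ P ∈ s, ¬ P.1 ∣ k := by
      rw [IsCoprime.pow_right_iff (by norm_num), isCoprime_sqf_iff]
    simp only [this, ite_mul, one_mul, zero_mul]
  · intro k hk k' hk' h
    exact eq_of_cube_eq (mem_monics.1 hk).1 (mem_monics.1 hk').1 h
  · intro f hf hne
    obtain ⟨hf, hd⟩ := mem_monics.1 hf
    rw [sum_monics_sym_eq_zero hω hω1 hf _ (hd ▸ hn), mul_zero]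
    rintro k hk rfl
    refine hne (mem_image.2 ⟨k, mem_monics.2 ⟨hk, ?_⟩, rfl⟩)
    rw [hk.natDegree_pow] at hd
    omega

lemma sqf_injective : Function.Injective (sqf (K := K)) := fun s t h => by
  ext P
  rw [← dvd_sqf_iff, h, dvd_sqf_iff]

lemma finite_natDegree_sqf_le (d : ℕ) :
    {s : Finset (MonicIrred K) | (sqf s).natDegree ≤ d}.Finite := by
  refine Set.Finite.of_finite_image ?_ sqf_injective.injOn
  refine ((range (d + 1)).biUnion (monics K)).finite_toSet.subset ?_
  rintro _ ⟨s, hs, rfl⟩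
  refine mem_coe.2 (mem_biUnion.2 ⟨_, mem_range.2 (Nat.lt_succ_of_le hs), ?_⟩)
  exact mem_monics.2 ⟨sqf_monic s, rfl⟩

/-- The finite sets of monic irreducibles whose product has degree at most `d`. -/
def fam (K : Type) [Field K] [Fintype K] (d : ℕ) : Finset (Finset (MonicIrred K)) :=
  (finite_natDegree_sqf_le d).toFinset

lemma mem_fam {d : ℕ} {s : Finset (MonicIrred K)} : s ∈ fam K d ↔ (sqf s).natDegree ≤ d := by
  simp [fam]

lemma tendsto_fam : Tendsto (fam K) atTop atTop := by
  refine tendsto_atTop_finset_of_monotone (fun a b h s hs => ?_) fun s =>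
    ⟨(sqf s).natDegree, mem_fam.2 le_rfl⟩
  exact mem_fam.2 ((mem_fam.1 hs).trans h)

lemma sum_pw_fam_le {x : ℝ} (d : ℕ) :
    ∑ s ∈ fam K d, pw x (sqf s) ≤ ∑ i ∈ range (d + 1), ((Fintype.card K : ℝ) ^ (x + 1)) ^ i := by
  have hq0 : (0 : ℝ) < Fintype.card K := card_pos_real
  have hmaps : ∀ s ∈ fam K d, (sqf s).natDegree ∈ range (d + 1) := fun s hs =>
    mem_range.2 (Nat.lt_succ_of_le (mem_fam.1 hs))
  rw [← sum_fiberwise_of_maps_to hmaps]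
  refine sum_le_sum fun i _ => ?_
  have h1 : ∀ s ∈ (fam K d).filter (fun s => (sqf s).natDegree = i),
      pw x (sqf s) = (Fintype.card K : ℝ) ^ (x * i) := fun s hs => by
    rw [pw, (mem_filter.1 hs).2]
  have h2 : ((fam K d).filter (fun s => (sqf s).natDegree = i)).card ≤ Fintype.card K ^ i := by
    rw [← card_monics (K := K) i]
    refine card_le_card_of_injOn sqf (fun s hs => ?_) sqf_injective.injOn
    exact mem_coe.2 (mem_monics.2 ⟨sqf_monic s, (mem_filter.1 hs).2⟩)
  rw [sum_congr rfl h1, sum_const, nsmul_eq_mul]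
  have h3 : (((fam K d).filter (fun s => (sqf s).natDegree = i)).card : ℝ) ≤
      (Fintype.card K : ℝ) ^ i := by exact_mod_cast h2
  refine (mul_le_mul_of_nonneg_right h3 (Real.rpow_pos_of_pos hq0 _).le).trans (le_of_eq ?_)
  rw [← Real.rpow_natCast, ← Real.rpow_natCast, ← Real.rpow_mul hq0.le, ← Real.rpow_add hq0]
  ring_nf

lemma summable_pw_sqf {x : ℝ} (hx : x < -1) :
    Summable fun s : Finset (MonicIrred K) => pw x (sqf s) := by
  have hr0 : 0 ≤ (Fintype.card K : ℝ) ^ (x + 1) := (Real.rpow_pos_of_pos card_pos_real _).le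
  have hr1 : (Fintype.card K : ℝ) ^ (x + 1) < 1 :=
    Real.rpow_lt_one_of_one_lt_of_neg one_lt_card_real (by linarith)
  refine summable_of_sum_le (c := (1 - (Fintype.card K : ℝ) ^ (x + 1))⁻¹)
    (fun s => (pw_pos _ _).le) fun u => ?_
  obtain ⟨d, hd⟩ := (tendsto_atTop.1 (tendsto_fam (K := K)) u).exists
  refine (sum_le_sum_of_subset_of_nonneg hd fun s _ _ => (pw_pos _ _).le).trans
    ((sum_pw_fam_le d).trans ?_)
  rw [← tsum_geometric_of_lt_one hr0 hr1]
  exact (summable_geometric_of_lt_one hr0 hr1).sum_le_tsum _ fun i _ => pow_nonneg hr0 i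

lemma sum_pw_le_tsum {x : ℝ} (hx : x < -1) (u : Finset (Finset (MonicIrred K))) :
    ∑ s ∈ u, pw x (sqf s) ≤ ∑' s : Finset (MonicIrred K), pw x (sqf s) :=
  (summable_pw_sqf hx).sum_le_tsum _ fun _ _ => (pw_pos _ _).le
end

section
variable {K : Type} [Field K] [Fintype K] {ψ : AddChar K ℂ} {ω : MulChar K ℂ}

lemma sqf_sq_dvd_iff {s : Finset (MonicIrred K)} {F : K[X]} :
    sqf s ^ 2 ∣ F ↔ ∀ P ∈ s, P.1 ^ 2 ∣ F := by
  refine ⟨fun h P hP => (pow_dvd_pow_of_dvd (dvd_sqf_iff.2 hP) 2).trans h, fun h => ?_⟩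
  rw [sqf, ← prod_pow]
  refine Finset.prod_dvd_of_coprime (fun P _ Q _ hPQ => ?_) h
  exact ((P.isCoprime_iff _).2 fun hd => hPQ (MonicIrred.eq_of_dvd hd)).pow

lemma prod_neg_one {R ι : Type*} [CommRing R] (s : Finset ι) :
    ∏ _i ∈ s, (-1 : R) = (-1) ^ s.card := prod_const _

lemma sum_powerset_neg_one_pow {R ι : Type*} [CommRing R] (s : Finset ι) :
    ∑ t ∈ s.powerset, (-1 : R) ^ t.card = if s = ∅ then 1 else 0 := by
  simp_rw [← prod_neg_one]
  rw [← prod_one_add (f := fun _ => (-1 : R)), add_neg_cancel, prod_const]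
  split_ifs with h
  · simp [h]
  · exact zero_pow (card_ne_zero.2 (nonempty_iff_ne_empty.2 h))

lemma squarefree_iff_sum {F : K[X]} (hF : F.Monic) {N : ℕ} (hd : F.natDegree = N) :
    ∑ s ∈ fam K (N / 2), (if sqf s ^ 2 ∣ F then (-1 : ℂ) ^ s.card else 0) =
      if Squarefree F then 1 else 0 := by
  have hset : (fam K (N / 2)).filter (fun s => sqf s ^ 2 ∣ F) =
      ((mprimes F).filter (fun P => P.1 ^ 2 ∣ F)).powerset := by
    ext s
    rw [mem_filter, mem_powerset, sqf_sq_dvd_iff, mem_fam]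
    constructor
    · rintro ⟨_, h⟩ P hP
      exact mem_filter.2 ⟨(mem_mprimes hF.ne_zero).2 ((dvd_pow_self _ two_ne_zero).trans (h P hP)),
        h P hP⟩
    · intro h
      have h' : ∀ P ∈ s, P.1 ^ 2 ∣ F := fun P hP => (mem_filter.1 (h hP)).2
      refine ⟨?_, h'⟩
      have := natDegree_le_of_dvd (sqf_sq_dvd_iff.2 h') hF.ne_zero
      rw [(sqf_monic s).natDegree_pow, hd] at this
      omega
  rw [← sum_filter, hset, sum_powerset_neg_one_pow]
  congr 1
  rw [squarefree_iff_irreducible_sq_not_dvd_of_ne_zero hF.ne_zero, filter_eq_empty_iff, eq_iff_iff]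
  constructor
  · intro h P hP hd
    obtain ⟨c, hc⟩ : ∃ c : K, c = P.leadingCoeff⁻¹ := ⟨_, rfl⟩
    have hc0 : P.leadingCoeff ≠ 0 := leadingCoeff_ne_zero.2 hP.ne_zero
    have hu : IsUnit (C c) := isUnit_C.2 (by rw [hc]; exact (inv_ne_zero hc0).isUnit)
    have ha : Associated (P * C c) P := associated_mul_unit_left P _ hu
    have hd' : (P * C c) ^ 2 ∣ F := by
      rw [sq]
      exact (ha.mul_mul ha).dvd.trans hd
    set Q : MonicIrred K := ⟨P * C c, hc ▸ monic_mul_leadingCoeff_inv hP.ne_zero,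
      ha.symm.irreducible hP⟩
    exact h (x := Q) ((mem_mprimes hF.ne_zero).2 ((dvd_pow_self _ two_ne_zero).trans hd')) hd'
  · intro h P _ hd
    exact h P.1 P.2.2 (by rwa [← sq])

lemma sum_monics_filter_dvd {M : Type*} [AddCommMonoid M] {E : K[X]} (hE : E.Monic) {n : ℕ}
    (h : E.natDegree ≤ n) (φ : K[X] → M) :
    ∑ F ∈ (monics K n).filter (E ∣ ·), φ F = ∑ F ∈ monics K (n - E.natDegree), φ (F * E) := by
  symm
  refine sum_bij (fun F _ => F * E) (fun F hF => ?_) (fun F _ G _ h => mul_right_cancel₀ hE.ne_zero h)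
    (fun F hF => ?_) (fun _ _ => rfl)
  · obtain ⟨hm, hd⟩ := mem_monics.1 hF
    refine mem_filter.2 ⟨mem_monics.2 ⟨hm.mul hE, ?_⟩, dvd_mul_left _ _⟩
    rw [hm.natDegree_mul hE]
    omega
  · obtain ⟨hF, G, rfl⟩ := mem_filter.1 hF
    obtain ⟨hm, hd⟩ := mem_monics.1 hF
    have hG : G.Monic := hE.of_mul_monic_left hm
    refine ⟨G, mem_monics.2 ⟨hG, ?_⟩, mul_comm _ _⟩
    rw [hE.natDegree_mul hG] at hd
    omega

/-- The sum of the cubic symbols `(f / F)` over squarefree `F` of degree `N` and all monic `f`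
of degree `n`. -/
def sqfreeSum (ω : MulChar K ℂ) (N n : ℕ) : ℂ :=
  ∑ F ∈ (monics K N).filter Squarefree, ∑ f ∈ monics K n, sym ω F f

lemma sqfreeSum_eq (N n : ℕ) : sqfreeSum ω N n =
    ∑ s ∈ fam K (N / 2), (-1 : ℂ) ^ s.card * dsum ω s (N - 2 * (sqf s).natDegree) n := by
  rw [sqfreeSum, sum_filter]
  have h1 : ∀ F ∈ monics K N, (if Squarefree F then ∑ f ∈ monics K n, sym ω F f else 0) =
      ∑ s ∈ fam K (N / 2), if sqf s ^ 2 ∣ F then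
        (-1 : ℂ) ^ s.card * ∑ f ∈ monics K n, sym ω F f else 0 := fun F hF => by
    obtain ⟨hm, hd⟩ := mem_monics.1 hF
    rw [← one_mul (∑ f ∈ monics K n, sym ω F f), ← ite_zero_mul, ← squarefree_iff_sum hm hd, sum_mul]
    refine sum_congr rfl fun s _ => ?_
    rw [ite_zero_mul, one_mul]
  rw [sum_congr rfl h1, sum_comm]
  refine sum_congr rfl fun s hs => ?_
  have hd : (sqf s ^ 2).natDegree = 2 * (sqf s).natDegree := (sqf_monic s).natDegree_pow 2
  have hs' := mem_fam.1 hs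
  rw [← sum_filter, sum_monics_filter_dvd ((sqf_monic s).pow 2) (by omega), hd, dsum, mul_sum]

lemma exists_norm_tail_le (hq : 7 ≤ Fintype.card K) (hω : ω ^ 3 = 1) (hω1 : ω ≠ 1) (hψ : ψ ≠ 1) :
    ∃ C : ℝ, 0 < C ∧ ∀ n j : ℕ, ¬ 3 ∣ n + j →
      ‖∑ s ∈ (fam K ((n + j) / 2)).filter (fun s => ¬ 2 * (sqf s).natDegree ≤ j),
        (-1 : ℂ) ^ s.card * dsum ω s (n + j - 2 * (sqf s).natDegree) n‖ ≤
      C * (Fintype.card K : ℝ) ^ ((n + j : ℝ) + n / 3 - j / 48) := by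
  obtain ⟨A, hA0, hA⟩ := exists_norm_dsum_le hq hω hω1 hψ
  obtain ⟨B, hB1, hB⟩ := exists_pow_card_le (K := K) (c := 8) (ε := 1 / 12) (by norm_num) (by norm_num)
  have hq0 : (0 : ℝ) < Fintype.card K := card_pos_real
  have hx : (-(25 / 24) : ℝ) < -1 := by norm_num
  set T := ∑' s : Finset (MonicIrred K), pw (-(25 / 24)) (sqf s) with hT
  have hT0 : 0 ≤ T := tsum_nonneg fun s => (pw_pos _ _).le
  refine ⟨A * B * (T + 1), by positivity, fun n j h3 => ?_⟩
  set E := (Fintype.card K : ℝ) ^ ((n + j : ℝ) + n / 3 - j / 48) with hE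
  have hE0 : 0 < E := Real.rpow_pos_of_pos hq0 _
  have hterm : ∀ s ∈ (fam K ((n + j) / 2)).filter (fun s => ¬ 2 * (sqf s).natDegree ≤ j),
      ‖(-1 : ℂ) ^ s.card * dsum ω s (n + j - 2 * (sqf s).natDegree) n‖ ≤
        A * B * E * pw (-(25 / 24)) (sqf s) := by
    intro s hs
    obtain ⟨hs, hj⟩ := mem_filter.1 hs
    have hs := mem_fam.1 hs
    push Not at hj
    have hpos : 0 ≤ A * B * E * pw (-(25 / 24)) (sqf s) := by
      have := (pw_pos (-(25 / 24)) (sqf s)).le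
      positivity
    rw [norm_mul, norm_pow, norm_neg, norm_one, one_pow, one_mul]
    have hsum : n + j - 2 * (sqf s).natDegree + 2 * (sqf s).natDegree = n + j := by omega
    rcases le_or_gt j (sqf s).natDegree with hjd | hjd
    · rw [dsum_eq_zero hω hω1 (by rwa [hsum]) (by omega), norm_zero]
      exact hpos
    refine (hA s _ n (j - (sqf s).natDegree) (by rwa [hsum]) (by omega) (by omega)).trans ?_
    have hm : ((n + j - 2 * (sqf s).natDegree : ℕ) : ℝ) = n + j - 2 * (sqf s).natDegree := by
      rw [Nat.cast_sub (by omega)]; push_cast; ring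
    have hL : ((j - (sqf s).natDegree : ℕ) : ℝ) = j - (sqf s).natDegree := by
      rw [Nat.cast_sub (by omega)]
    have hjd' : (j : ℝ) ≤ 2 * (sqf s).natDegree := by exact_mod_cast hj.le
    rw [hm, hL]
    set d : ℝ := ((sqf s).natDegree : ℝ) with hd
    set X := (Fintype.card K : ℝ) ^ (4 / 3 * (n + j - 2 * d) + 1 / 3 * (j - d)) with hX
    have hX0 : 0 < X := Real.rpow_pos_of_pos hq0 _
    have hkey : X * pw (1 / 2) (sqf s) * pw (1 / 12) (sqf s) ≤ E * pw (-(25 / 24)) (sqf s) := by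
      rw [hX, hE, pw, pw, pw, ← hd, ← Real.rpow_add hq0, ← Real.rpow_add hq0, ← Real.rpow_add hq0]
      exact Real.rpow_le_rpow_of_exponent_le one_lt_card_real.le (by linarith)
    have hp : 0 < pw (1 / 2) (sqf s) := pw_pos _ _
    calc A * 8 ^ s.card * X * pw (1 / 2) (sqf s)
        = (A * (X * pw (1 / 2) (sqf s))) * 8 ^ s.card := by ring
      _ ≤ (A * (X * pw (1 / 2) (sqf s))) * (B * pw (1 / 12) (sqf s)) :=
        mul_le_mul_of_nonneg_left (hB s) (by positivity)
      _ = (A * B) * (X * pw (1 / 2) (sqf s) * pw (1 / 12) (sqf s)) := by ring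
      _ ≤ (A * B) * (E * pw (-(25 / 24)) (sqf s)) :=
        mul_le_mul_of_nonneg_left hkey (by positivity)
      _ = _ := by ring
  refine (norm_sum_le_of_le _ hterm).trans ?_
  rw [← mul_sum]
  have h1 := sum_pw_le_tsum hx
    ((fam K ((n + j) / 2)).filter (fun s => ¬ 2 * (sqf s).natDegree ≤ j))
  calc _ ≤ A * B * E * T := mul_le_mul_of_nonneg_left h1 (by positivity)
    _ ≤ A * B * E * (T + 1) := mul_le_mul_of_nonneg_left (by linarith) (by positivity)
    _ = _ := by ring
end

section
variable {K : Type} [Field K] [Fintype K] {ω : MulChar K ℂ}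

lemma prod_pw_eq (x : ℝ) (s : Finset (MonicIrred K)) : ∏ P ∈ s, pw x P.1 = pw x (sqf s) :=
  (pw_prod x s _ fun P _ => P.2.1.ne_zero).symm

lemma prod_neg_pw_eq (x : ℝ) (s : Finset (MonicIrred K)) :
    ∏ P ∈ s, -pw x P.1 = (-1) ^ s.card * pw x (sqf s) := by
  rw [prod_neg, prod_pw_eq]

lemma pw_lt_one {x : ℝ} (hx : x < 0) (P : MonicIrred K) : pw x P.1 < 1 :=
  Real.rpow_lt_one_of_one_lt_of_neg one_lt_card_real
    (mul_neg_of_neg_of_pos hx (by exact_mod_cast P.natDegree_pos))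

lemma pw_neg_one_of_natDegree_le {s : Finset (MonicIrred K)} {n : ℕ} (h : (sqf s).natDegree ≤ n) :
    ((Fintype.card K ^ (n - (sqf s).natDegree) : ℕ) : ℝ) =
      (Fintype.card K : ℝ) ^ n * pw (-1) (sqf s) := by
  rw [Nat.cast_pow, pw, ← Real.rpow_natCast, ← Real.rpow_natCast, ← Real.rpow_add card_pos_real,
    Nat.cast_sub h]
  ring_nf

lemma mem_powerset_mprimes {k : K[X]} (hk : k.Monic) {s : Finset (MonicIrred K)} :
    s ∈ (mprimes k).powerset ↔ sqf s ∣ k := by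
  rw [mem_powerset]
  refine ⟨fun h => sqf_dvd fun P hP => (mem_mprimes hk.ne_zero).1 (h hP), fun h P hP => ?_⟩
  exact (mem_mprimes hk.ne_zero).2 ((dvd_sqf_iff.2 hP).trans h)

lemma card_monics_filter_dvd_eq {E : K[X]} (hE : E.Monic) {n : ℕ} (h : E.natDegree ≤ n) :
    ((monics K n).filter (E ∣ ·)).card = Fintype.card K ^ (n - E.natDegree) := by
  rw [card_eq_sum_ones, sum_monics_filter_dvd hE h, ← card_eq_sum_ones, card_monics]

lemma sum_monics_sum_powerset (l : ℕ) (c : Finset (MonicIrred K) → ℝ) :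
    ∑ k ∈ monics K l, ∑ s ∈ (mprimes k).powerset, c s =
      (Fintype.card K : ℝ) ^ l * ∑ s ∈ fam K l, c s * pw (-1) (sqf s) := by
  have h1 : ∀ k ∈ monics K l, ∑ s ∈ (mprimes k).powerset, c s =
      ∑ s ∈ fam K l, if sqf s ∣ k then c s else 0 := fun k hk => by
    obtain ⟨hm, hd⟩ := mem_monics.1 hk
    rw [← sum_filter]
    refine sum_congr ?_ fun _ _ => rfl
    ext s
    rw [mem_powerset_mprimes hm, mem_filter, mem_fam]
    exact ⟨fun h => ⟨hd ▸ natDegree_le_of_dvd h hm.ne_zero, h⟩, fun h => h.2⟩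
  rw [sum_congr rfl h1, sum_comm, mul_sum]
  refine sum_congr rfl fun s hs => ?_
  rw [← sum_filter, sum_const, card_monics_filter_dvd_eq (sqf_monic s) (mem_fam.1 hs), nsmul_eq_mul,
    pw_neg_one_of_natDegree_le (mem_fam.1 hs)]
  ring

lemma mprimes_eq_empty_iff {k : K[X]} (hk : k.Monic) : mprimes k = ∅ ↔ k.natDegree = 0 := by
  rw [hk.natDegree_eq_zero]
  constructor
  · intro h
    by_contra h1
    obtain ⟨P, hP, hi, hd⟩ := exists_monic_irreducible_factor k
      (fun hu => h1 (hk.eq_one_of_isUnit hu))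
    have : (⟨P, hP, hi⟩ : MonicIrred K) ∈ mprimes k := (mem_mprimes hk.ne_zero).2 hd
    rw [h] at this
    exact notMem_empty _ this
  · rintro rfl
    refine eq_empty_of_forall_notMem fun P hP => ?_
    exact P.2.2.not_isUnit (isUnit_of_dvd_one ((mem_mprimes one_ne_zero).1 hP))

lemma sum_fam_neg_one_pow (n : ℕ) :
    ∑ s ∈ fam K n, (-1 : ℝ) ^ s.card * pw (-1) (sqf s) = if n = 0 then 1 else 0 := by
  have hq : (Fintype.card K : ℝ) ^ n ≠ 0 := pow_ne_zero _ card_pos_real.ne'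
  have h := sum_monics_sum_powerset (K := K) n fun s => (-1 : ℝ) ^ s.card
  have h1 : ∀ k ∈ monics K n, ∑ s ∈ (mprimes k).powerset, (-1 : ℝ) ^ s.card =
      if n = 0 then 1 else 0 := fun k hk => by
    obtain ⟨hm, hd⟩ := mem_monics.1 hk
    rw [sum_powerset_neg_one_pow, if_congr (mprimes_eq_empty_iff hm) rfl rfl, hd]
  rw [sum_congr rfl h1, sum_const, card_monics, nsmul_eq_mul, Nat.cast_pow] at h
  exact (mul_left_cancel₀ hq h).symm

lemma sum_fam_succ (n : ℕ) (c : Finset (MonicIrred K) → ℝ) :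
    ∑ s ∈ fam K (n + 1), c s = ∑ s ∈ fam K n, c s +
      ∑ s ∈ (fam K (n + 1)).filter (fun s => (sqf s).natDegree = n + 1), c s := by
  rw [← sum_filter_add_sum_filter_not (fam K (n + 1)) (fun s => (sqf s).natDegree ≤ n)]
  congr 1 <;> refine sum_congr ?_ fun _ _ => rfl <;> ext s <;>
    simp only [mem_filter, mem_fam] <;> omega

lemma sum_fam_pw_neg_two_succ (n : ℕ) :
    ∑ s ∈ fam K (n + 1), (-1 : ℝ) ^ s.card * pw (-2) (sqf s) = 1 - (Fintype.card K : ℝ)⁻¹ := by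
  have hq0 : (0 : ℝ) < Fintype.card K := card_pos_real
  have hstep : ∀ n : ℕ, ∑ s ∈ fam K (n + 1), (-1 : ℝ) ^ s.card * pw (-2) (sqf s) =
      ∑ s ∈ fam K n, (-1 : ℝ) ^ s.card * pw (-2) (sqf s) +
        (Fintype.card K : ℝ)⁻¹ ^ (n + 1) * ((if n + 1 = 0 then 1 else 0) - if n = 0 then 1 else 0) := by
    intro n
    have h1 := sum_fam_neg_one_pow (K := K) (n + 1)
    rw [sum_fam_succ, sum_fam_neg_one_pow n] at h1
    rw [sum_fam_succ, ← h1, add_sub_cancel_left, mul_sum]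
    congr 1
    refine sum_congr rfl fun s hs => ?_
    have hd := (mem_filter.1 hs).2
    have : pw (-2) (sqf s) = (Fintype.card K : ℝ)⁻¹ ^ (n + 1) * pw (-1) (sqf s) := by
      rw [show (-2 : ℝ) = -1 + -1 by norm_num, pw_add]
      congr 1
      rw [pw, hd, neg_one_mul, Real.rpow_neg hq0.le, Real.rpow_natCast, inv_pow]
    rw [this]
    ring
  induction n with
  | zero =>
    have h0 : ∑ s ∈ fam K 0, (-1 : ℝ) ^ s.card * pw (-2) (sqf s) = 1 := by
      refine Eq.trans (sum_congr rfl fun s hs => ?_)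
        ((sum_fam_neg_one_pow (K := K) 0).trans (if_pos rfl))
      have : (sqf s).natDegree = 0 := Nat.le_zero.1 (mem_fam.1 hs)
      simp [pw, this]
    rw [hstep, h0]
    simp
    ring
  | succ n ih => rw [hstep, ih]; simp

/-- The Euler factor at `P`, minus one, of the sum of `(-1) ^ |s| / |sqf s| ^ 2` over
the `s` prime to `k`. -/
def locFactor (k : K[X]) (P : MonicIrred K) : ℝ := if P.1 ∣ k then 0 else -pw (-2) P.1

lemma prod_locFactor (k : K[X]) (s : Finset (MonicIrred K)) : ∏ P ∈ s, locFactor k P =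
    if ∀ P ∈ s, ¬ P.1 ∣ k then (-1) ^ s.card * pw (-2) (sqf s) else 0 := by
  split_ifs with h
  · rw [← prod_neg_pw_eq]
    exact prod_congr rfl fun P hP => if_neg (h P hP)
  · push Not at h
    obtain ⟨P, hP, hd⟩ := h
    exact prod_eq_zero hP (if_pos hd)

lemma norm_prod_locFactor_le (k : K[X]) (s : Finset (MonicIrred K)) :
    ‖∏ P ∈ s, locFactor k P‖ ≤ pw (-2) (sqf s) := by
  rw [prod_locFactor]
  split_ifs
  · rw [norm_mul, norm_pow, norm_neg, norm_one, one_pow, one_mul, Real.norm_of_nonneg (pw_pos _ _).le]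
  · rw [norm_zero]
    exact (pw_pos _ _).le

lemma summable_prod_locFactor (k : K[X]) :
    Summable fun s : Finset (MonicIrred K) => ∏ P ∈ s, locFactor k P :=
  .of_norm_bounded (summable_pw_sqf (by norm_num)) (norm_prod_locFactor_le k)

lemma tprod_one_add_locFactor_one :
    ∏' P : MonicIrred K, (1 + locFactor 1 P) = 1 - (Fintype.card K : ℝ)⁻¹ := by
  rw [tprod_one_add (summable_prod_locFactor 1)]
  have h := ((summable_prod_locFactor (1 : K[X])).hasSum.comp tendsto_fam).comp (tendsto_add_atTop_nat 1)
  refine tendsto_nhds_unique h (tendsto_const_nhds.congr fun n => ?_)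
  rw [Function.comp_apply, Function.comp_apply, ← sum_fam_pw_neg_two_succ (K := K) n]
  refine sum_congr rfl fun s _ => ?_
  refine ((prod_locFactor 1 s).trans (if_pos ?_)).symm
  exact fun P _ hd => P.2.2.not_isUnit (isUnit_of_dvd_one hd)

lemma tprod_one_add_locFactor_mul {k : K[X]} (hk : k.Monic) :
    (∏ P ∈ mprimes k, (1 - pw (-2) P.1)) * ∏' P : MonicIrred K, (1 + locFactor k P) =
      1 - (Fintype.card K : ℝ)⁻¹ := by
  have h1 : ∀ P : MonicIrred K, P ∉ mprimes k → (if P ∈ mprimes k then 1 - pw (-2) P.1 else 1) = 1 :=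
    fun P hP => if_neg hP
  have h2 : ∏ P ∈ mprimes k, (1 - pw (-2) P.1) =
      ∏' P : MonicIrred K, (if P ∈ mprimes k then 1 - pw (-2) P.1 else 1) := by
    rw [tprod_eq_prod h1]
    exact prod_congr rfl fun P hP => (if_pos hP).symm
  rw [← tprod_one_add_locFactor_one, h2,
    ← Multipliable.tprod_mul (multipliable_of_ne_finset_one h1)
      (multipliable_one_add_of_summable_prod (summable_prod_locFactor k))]
  refine tprod_congr fun P => ?_
  have hP1 : ¬ P.1 ∣ 1 := fun hd => P.2.2.not_isUnit (isUnit_of_dvd_one hd)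
  simp only [mem_mprimes hk.ne_zero, locFactor, if_neg hP1]
  split_ifs <;> ring

lemma norm_sum_fam_locFactor_sub_le (k : K[X]) (J : ℕ) :
    |∑ s ∈ fam K J, ∏ P ∈ s, locFactor k P - ∏' P : MonicIrred K, (1 + locFactor k P)| ≤
      (∑' s : Finset (MonicIrred K), pw (-(3 / 2)) (sqf s)) *
        (Fintype.card K : ℝ) ^ (-((J : ℝ) + 1) / 2) := by
  have hq0 : (0 : ℝ) < Fintype.card K := card_pos_real
  have hs := summable_prod_locFactor k
  rw [tprod_one_add hs, ← hs.sum_add_tsum_subtype_compl (fam K J), abs_sub_comm, add_sub_cancel_left,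
    ← Real.norm_eq_abs]
  have hsum := (summable_pw_sqf (K := K) (x := -(3 / 2)) (by norm_num))
  set c := (Fintype.card K : ℝ) ^ (-((J : ℝ) + 1) / 2) with hc
  have hb : ∀ s : {s // s ∉ fam K J}, ‖∏ P ∈ s.1, locFactor k P‖ ≤ pw (-(3 / 2)) (sqf s.1) * c := by
    rintro ⟨s, hs⟩
    refine (norm_prod_locFactor_le k s).trans ?_
    rw [mem_fam] at hs
    push Not at hs
    rw [pw, pw, hc, ← Real.rpow_add hq0]
    refine Real.rpow_le_rpow_of_exponent_le one_lt_card_real.le ?_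
    have : (J : ℝ) + 1 ≤ (sqf s).natDegree := by exact_mod_cast hs
    linarith
  have hsub := (hsum.subtype (fun s => s ∉ fam K J)).mul_right c
  refine (tsum_of_norm_bounded hsub.hasSum hb).trans ?_
  rw [tsum_mul_right]
  refine mul_le_mul_of_nonneg_right ?_ (Real.rpow_pos_of_pos hq0 _).le
  exact hsum.tsum_subtype_le _ _ (fun s => (pw_pos _ _).le)
end

section
variable {K : Type} [Field K] [Fintype K] {ω : MulChar K ℂ}

lemma card_low_filter_dvd_eq {E : K[X]} (hE : E.Monic) {n : ℕ} (h : E.natDegree ≤ n) :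
    ((low K n).filter (E ∣ ·)).card = Fintype.card K ^ (n - E.natDegree) := by
  rw [← card_low (K := K) (n - E.natDegree)]
  have hdeg : ∀ G : K[X], G.degree < (n - E.natDegree : ℕ) ↔ (E * G).degree < n := by
    intro G
    by_cases hG : G = 0
    · simp [hG]
    rw [degree_mul, degree_eq_natDegree hE.ne_zero, degree_eq_natDegree hG]
    norm_cast
    omega
  symm
  refine card_bij (fun G _ => E * G) (fun G hG => ?_) (fun F _ G _ h => mul_left_cancel₀ hE.ne_zero h)
    (fun F hF => ?_)
  · exact mem_filter.2 ⟨mem_low.2 ((hdeg G).1 (mem_low.1 hG)), dvd_mul_right _ _⟩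
  · obtain ⟨hF, G, rfl⟩ := mem_filter.1 hF
    exact ⟨G, mem_low.2 ((hdeg G).2 (mem_low.1 hF)), rfl⟩

lemma phi_eq {k : K[X]} (hk : k.Monic) :
    (phi k : ℝ) = (Fintype.card K : ℝ) ^ k.natDegree * ∏ P ∈ mprimes k, (1 - pw (-1) P.1) := by
  have h1 : ∀ a ∈ low K k.natDegree, (if IsCoprime k a then (1 : ℝ) else 0) =
      ∑ s ∈ (mprimes k).powerset, if sqf s ∣ a then (-1) ^ s.card else 0 := fun a _ => by
    have hset : (mprimes k).powerset.filter (fun s => sqf s ∣ a) =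
        ((mprimes k).filter (fun P => P.1 ∣ a)).powerset := by
      ext s
      rw [mem_filter, mem_powerset, mem_powerset]
      refine ⟨fun h P hP => mem_filter.2 ⟨h.1 hP, (dvd_sqf_iff.2 hP).trans h.2⟩, fun h => ?_⟩
      exact ⟨h.trans (filter_subset _ _), sqf_dvd fun P hP => (mem_filter.1 (h hP)).2⟩
    rw [← sum_filter, hset, sum_powerset_neg_one_pow]
    refine if_congr ?_ rfl rfl
    rw [filter_eq_empty_iff]
    constructor
    · intro h P hP hd
      exact P.2.2.not_isUnit (h.isUnit_of_dvd' ((mem_mprimes hk.ne_zero).1 hP) hd)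
    · intro h
      exact isCoprime_of_forall_not_dvd hk.ne_zero fun P hP => h ((mem_mprimes hk.ne_zero).2 hP)
  have h2 : (phi k : ℝ) = ∑ a ∈ low K k.natDegree, if IsCoprime k a then (1 : ℝ) else 0 := by
    rw [sum_boole, phi]
  have h3 : ∏ P ∈ mprimes k, (1 - pw (-1) P.1) =
      ∑ s ∈ (mprimes k).powerset, (-1) ^ s.card * pw (-1) (sqf s) := by
    simp_rw [← prod_neg_pw_eq, sub_eq_add_neg, prod_one_add]
  rw [h2, sum_congr rfl h1, sum_comm, h3, mul_sum]
  refine sum_congr rfl fun s hs => ?_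
  have hd : (sqf s).natDegree ≤ k.natDegree :=
    natDegree_le_of_dvd ((mem_powerset_mprimes hk).1 hs) hk.ne_zero
  rw [← sum_filter, sum_const, card_low_filter_dvd_eq (sqf_monic s) hd, nsmul_eq_mul,
    pw_neg_one_of_natDegree_le hd]
  ring

/-- The Euler factor of `C_q` at `P`, relative to the local density of multiples of `P`,
minus one. -/
def lam (P : MonicIrred K) : ℝ := -(pw 1 P.1 + 1)⁻¹

lemma one_sub_pw_neg_one (P : MonicIrred K) :
    1 - pw (-1) P.1 = (1 + lam P) * (1 - pw (-2) P.1) := by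
  have hp : 0 < pw 1 P.1 := pw_pos _ _
  have h1 : pw (-1) P.1 = (pw 1 P.1)⁻¹ := by
    rw [pw, pw, ← Real.rpow_neg card_pos_real.le]; ring_nf
  have h2 : pw (-2) P.1 = (pw 1 P.1)⁻¹ * (pw 1 P.1)⁻¹ := by
    rw [← h1, ← pw_add]; norm_num
  rw [lam, h1, h2]
  have : pw 1 P.1 + 1 ≠ 0 := by positivity
  field_simp
  ring

lemma prod_one_sub_pw_mul_tprod {k : K[X]} (hk : k.Monic) :
    (∏ P ∈ mprimes k, (1 - pw (-1) P.1)) * ∏' P : MonicIrred K, (1 + locFactor k P) =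
      (1 - (Fintype.card K : ℝ)⁻¹) * ∏ P ∈ mprimes k, (1 + lam P) := by
  rw [← tprod_one_add_locFactor_mul hk, prod_congr rfl fun P _ => one_sub_pw_neg_one P,
    prod_mul_distrib]
  ring

/-- The mean over monic `k` of degree `l` of `∏_{P ∣ k} (1 + 1 / |P|)⁻¹`. -/
def avg (K : Type) [Field K] [Fintype K] (l : ℕ) : ℝ :=
  ((Fintype.card K : ℝ) ^ l)⁻¹ * ∑ k ∈ monics K l, ∏ P ∈ mprimes k, (1 + lam P)

lemma avg_eq (l : ℕ) : avg K l = ∑ s ∈ fam K l, ∏ P ∈ s, lam P * pw (-1) P.1 := by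
  have hq : (Fintype.card K : ℝ) ^ l ≠ 0 := pow_ne_zero _ card_pos_real.ne'
  simp_rw [avg, prod_one_add, sum_monics_sum_powerset]
  rw [inv_mul_cancel_left₀ hq]
  refine sum_congr rfl fun s _ => ?_
  rw [prod_mul_distrib, prod_pw_eq]

lemma lam_mul_pw (P : MonicIrred K) :
    lam P * pw (-1) P.1 = -(pw 1 P.1 * (pw 1 P.1 + 1))⁻¹ := by
  have h1 : pw (-1) P.1 = (pw 1 P.1)⁻¹ := by
    rw [pw, pw, ← Real.rpow_neg card_pos_real.le]; ring_nf
  rw [lam, h1, mul_inv]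
  ring

lemma abs_lam_mul_pw_le (P : MonicIrred K) : |lam P * pw (-1) P.1| ≤ pw (-2) P.1 := by
  have hp : 0 < pw 1 P.1 := pw_pos _ _
  have h2 : pw (-2) P.1 = (pw 1 P.1 * pw 1 P.1)⁻¹ := by
    rw [← pw_add, pw, pw, ← Real.rpow_neg card_pos_real.le]; ring_nf
  rw [lam_mul_pw, abs_neg, abs_of_pos (by positivity), h2]
  exact inv_anti₀ (by positivity) (by nlinarith)

lemma summable_prod_lam :
    Summable fun s : Finset (MonicIrred K) => ∏ P ∈ s, lam P * pw (-1) P.1 := by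
  refine .of_norm_bounded (summable_pw_sqf (x := -2) (by norm_num)) fun s => ?_
  rw [Real.norm_eq_abs, abs_prod, ← prod_pw_eq]
  exact prod_le_prod (fun P _ => abs_nonneg _) fun P _ => abs_lam_mul_pw_le P

lemma normP_eq_pw (P : MonicIrred K) : normP (Fintype.card K) P = pw 1 P.1 := by
  rw [normP, pw, one_mul, Real.rpow_natCast]

lemma Cq_eq : Cq (Fintype.card K) K = ∏' P : MonicIrred K, (1 + lam P * pw (-1) P.1) :=
  tprod_congr fun P => by rw [normP_eq_pw, lam_mul_pw, sub_eq_add_neg]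

lemma tendsto_avg : Tendsto (avg K) atTop (nhds (Cq (Fintype.card K) K)) := by
  rw [Cq_eq, tprod_one_add summable_prod_lam]
  exact (summable_prod_lam.hasSum.comp tendsto_fam).congr fun l => (avg_eq l).symm

lemma summable_lam_mul_pw : Summable fun P : MonicIrred K => |lam P * pw (-1) P.1| := by
  have hinj : Function.Injective (fun P : MonicIrred K => ({P} : Finset (MonicIrred K))) :=
    fun P Q h => by simpa using h
  have h := (summable_pw_sqf (K := K) (x := -2) (by norm_num)).comp_injective hinj
  refine .of_nonneg_of_le (fun _ => abs_nonneg _) (fun P => ?_) h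
  refine (abs_lam_mul_pw_le P).trans (le_of_eq ?_)
  simp [sqf]

lemma Cq_ne_zero : Cq (Fintype.card K) K ≠ 0 := by
  rw [Cq_eq]
  refine tprod_one_add_ne_zero_of_summable (fun P => ?_) summable_lam_mul_pw
  have h := (abs_lam_mul_pw_le P).trans_lt (pw_lt_one (by norm_num) P)
  have := (abs_lt.1 h).1
  linarith

lemma prod_one_sub_pw_mem {k : K[X]} : 0 ≤ ∏ P ∈ mprimes k, (1 - pw (-1) P.1) ∧
    ∏ P ∈ mprimes k, (1 - pw (-1) P.1) ≤ 1 := by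
  have h : ∀ P : MonicIrred K, 0 ≤ 1 - pw (-1) P.1 := fun P => by
    have := pw_lt_one (x := -1) (by norm_num) P
    linarith
  refine ⟨prod_nonneg fun P _ => h P, prod_le_one (fun P _ => h P) fun P _ => ?_⟩
  have := pw_pos (-1) P.1
  linarith

lemma filter_fam_eq (n j : ℕ) :
    (fam K ((n + j) / 2)).filter (fun s => 2 * (sqf s).natDegree ≤ j) = fam K (j / 2) := by
  ext s
  simp only [mem_filter, mem_fam]
  omega

lemma sum_fam_dsum_eq_zero (hω : ω ^ 3 = 1) (hω1 : ω ≠ 1) {n : ℕ} (j : ℕ) (h3 : ¬ 3 ∣ n) :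
    ∑ s ∈ fam K (j / 2), (-1 : ℂ) ^ s.card * dsum ω s (n + j - 2 * (sqf s).natDegree) n = 0 := by
  refine sum_eq_zero fun s hs => ?_
  have := mem_fam.1 hs
  rw [dsum_eq_zero_of_not_three_dvd hω hω1 s (by omega) h3, mul_zero]

lemma sum_fam_dsum_three_mul (hω : ω ^ 3 = 1) (hω1 : ω ≠ 1) (l j : ℕ) :
    ∑ s ∈ fam K (j / 2),
      (-1 : ℂ) ^ s.card * dsum ω s (3 * l + j - 2 * (sqf s).natDegree) (3 * l) =
    (((Fintype.card K : ℝ) ^ (3 * l + j) * ∑ k ∈ monics K l, (∏ P ∈ mprimes k, (1 - pw (-1) P.1)) *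
      ∑ s ∈ fam K (j / 2), ∏ P ∈ s, locFactor k P : ℝ) : ℂ) := by
  have hq0 : (0 : ℝ) < Fintype.card K := card_pos_real
  have h1 : ∀ s ∈ fam K (j / 2),
      (-1 : ℂ) ^ s.card * dsum ω s (3 * l + j - 2 * (sqf s).natDegree) (3 * l) =
      ((∑ k ∈ monics K l, (Fintype.card K : ℝ) ^ (3 * l + j) *
        ((∏ P ∈ mprimes k, (1 - pw (-1) P.1)) * ∏ P ∈ s, locFactor k P) : ℝ) : ℂ) := by
    intro s hs
    have hd := mem_fam.1 hs
    rw [dsum_three_mul hω hω1 s (by omega), cop, sum_filter, mul_sum, Complex.ofReal_sum]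
    refine sum_congr rfl fun k hk => ?_
    obtain ⟨hm, hk⟩ := mem_monics.1 hk
    rw [prod_locFactor]
    split_ifs with hc
    · have hpow : (Fintype.card K : ℝ) ^ (3 * l + j - 2 * (sqf s).natDegree - l) *
          (Fintype.card K : ℝ) ^ l = (Fintype.card K : ℝ) ^ (3 * l + j) * pw (-2) (sqf s) := by
        rw [← pow_add, show 3 * l + j - 2 * (sqf s).natDegree - l + l =
          3 * l + j - 2 * (sqf s).natDegree by omega, pw, ← Real.rpow_natCast,
          ← Real.rpow_natCast _ (3 * l + j), ← Real.rpow_add hq0, Nat.cast_sub (by omega)]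
        push_cast
        ring_nf
      have hreal : (-1) ^ s.card *
          ((Fintype.card K : ℝ) ^ (3 * l + j - 2 * (sqf s).natDegree - l) * (phi k : ℝ)) =
          (Fintype.card K : ℝ) ^ (3 * l + j) * ((∏ P ∈ mprimes k, (1 - pw (-1) P.1)) *
            ((-1) ^ s.card * pw (-2) (sqf s))) := by
        rw [phi_eq hm, hk]
        linear_combination (-1) ^ s.card * (∏ P ∈ mprimes k, (1 - pw (-1) P.1)) * hpow
      rw [← hreal]
      push_cast
      rfl
    · simp
  rw [sum_congr rfl h1, ← Complex.ofReal_sum, sum_comm, mul_sum]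
  simp_rw [← mul_sum]
end

section
variable {K : Type} [Field K] [Fintype K] {ψ : AddChar K ℂ} {ω : MulChar K ℂ}

lemma abs_sum_monics_sub_avg_le (l J : ℕ) :
    |((Fintype.card K : ℝ) ^ l)⁻¹ * (∑ k ∈ monics K l, (∏ P ∈ mprimes k, (1 - pw (-1) P.1)) *
      ∑ s ∈ fam K J, ∏ P ∈ s, locFactor k P) - (1 - (Fintype.card K : ℝ)⁻¹) * avg K l| ≤
      (∑' s : Finset (MonicIrred K), pw (-(3 / 2)) (sqf s)) *
        (Fintype.card K : ℝ) ^ (-((J : ℝ) + 1) / 2) := by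
  have hq : (0 : ℝ) < (Fintype.card K : ℝ) ^ l := pow_pos card_pos_real _
  set B := (∑' s : Finset (MonicIrred K), pw (-(3 / 2)) (sqf s)) *
        (Fintype.card K : ℝ) ^ (-((J : ℝ) + 1) / 2) with hB
  have h1 : (1 - (Fintype.card K : ℝ)⁻¹) * avg K l = ((Fintype.card K : ℝ) ^ l)⁻¹ *
      ∑ k ∈ monics K l, (∏ P ∈ mprimes k, (1 - pw (-1) P.1)) *
        ∏' P : MonicIrred K, (1 + locFactor k P) := by
    rw [sum_congr rfl fun k hk => prod_one_sub_pw_mul_tprod (mem_monics.1 hk).1, ← mul_sum, avg]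
    ring
  rw [h1, ← mul_sub, ← sum_sub_distrib, abs_mul, abs_of_pos (inv_pos.2 hq)]
  have h2 : |∑ k ∈ monics K l, ((∏ P ∈ mprimes k, (1 - pw (-1) P.1)) *
      (∑ s ∈ fam K J, ∏ P ∈ s, locFactor k P) - (∏ P ∈ mprimes k, (1 - pw (-1) P.1)) *
        ∏' P : MonicIrred K, (1 + locFactor k P))| ≤ (Fintype.card K : ℝ) ^ l * B := by
    refine (abs_sum_le_sum_abs _ _).trans ?_
    have h3 : ∀ k ∈ monics K l, |(∏ P ∈ mprimes k, (1 - pw (-1) P.1)) *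
        (∑ s ∈ fam K J, ∏ P ∈ s, locFactor k P) - (∏ P ∈ mprimes k, (1 - pw (-1) P.1)) *
          ∏' P : MonicIrred K, (1 + locFactor k P)| ≤ B := fun k _ => by
      obtain ⟨h0, h1⟩ := prod_one_sub_pw_mem (k := k)
      rw [← mul_sub, abs_mul, abs_of_nonneg h0]
      exact (mul_le_of_le_one_left (abs_nonneg _) h1).trans (norm_sum_fam_locFactor_sub_le k J)
    refine (sum_le_card_nsmul _ _ _ h3).trans (le_of_eq ?_)
    rw [card_monics, nsmul_eq_mul, Nat.cast_pow]
  calc _ ≤ ((Fintype.card K : ℝ) ^ l)⁻¹ * ((Fintype.card K : ℝ) ^ l * B) :=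
        mul_le_mul_of_nonneg_left h2 (inv_pos.2 hq).le
    _ = B := by field_simp

/-- The main term of the normalised `sqfreeSum`. -/
def mainTerm (K : Type) [Field K] [Fintype K] (n : ℕ) : ℝ :=
  if 3 ∣ n then avg K (n / 3) else 0

lemma exists_norm_sqfreeSum_sub_le (hq : 7 ≤ Fintype.card K) (hω : ω ^ 3 = 1) (hω1 : ω ≠ 1)
    (hψ : ψ ≠ 1) : ∃ C : ℝ, 0 < C ∧ ∀ n j : ℕ, ¬ 3 ∣ n + j →
      ‖(((Fintype.card K : ℝ) ^ (-((n + j : ℝ) + n / 3)) : ℝ) : ℂ) * sqfreeSum ω (n + j) n -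
        (((1 - (Fintype.card K : ℝ)⁻¹) * mainTerm K n : ℝ) : ℂ)‖ ≤
      C * (Fintype.card K : ℝ) ^ (-(j : ℝ) / 48) := by
  obtain ⟨C, hC0, hC⟩ := exists_norm_tail_le hq hω hω1 hψ
  have hq0 : (0 : ℝ) < Fintype.card K := card_pos_real
  set T := ∑' s : Finset (MonicIrred K), pw (-(3 / 2)) (sqf s) with hT
  have hT0 : 0 ≤ T := tsum_nonneg fun s => (pw_pos _ _).le
  refine ⟨C + T, by positivity, fun n j h3 => ?_⟩
  set R := (Fintype.card K : ℝ) ^ (-((n + j : ℝ) + n / 3)) with hR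
  have hR0 : 0 < R := Real.rpow_pos_of_pos hq0 _
  set H := ∑ s ∈ fam K (j / 2), (-1 : ℂ) ^ s.card * dsum ω s (n + j - 2 * (sqf s).natDegree) n with hH
  have hsplit : sqfreeSum ω (n + j) n = H +
      ∑ s ∈ (fam K ((n + j) / 2)).filter (fun s => ¬ 2 * (sqf s).natDegree ≤ j),
        (-1 : ℂ) ^ s.card * dsum ω s (n + j - 2 * (sqf s).natDegree) n := by
    rw [sqfreeSum_eq, ← sum_filter_add_sum_filter_not _ (fun s => 2 * (sqf s).natDegree ≤ j),
      filter_fam_eq]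
  have hhead : ‖(R : ℂ) * H - (((1 - (Fintype.card K : ℝ)⁻¹) * mainTerm K n : ℝ) : ℂ)‖ ≤
      T * (Fintype.card K : ℝ) ^ (-(j : ℝ) / 48) := by
    by_cases hn : 3 ∣ n
    · obtain ⟨l, rfl⟩ := hn
      have hRl : R * (Fintype.card K : ℝ) ^ (3 * l + j) = ((Fintype.card K : ℝ) ^ l)⁻¹ := by
        rw [hR, ← Real.rpow_natCast, ← Real.rpow_natCast, ← Real.rpow_neg hq0.le,
          ← Real.rpow_add hq0]
        push_cast
        ring_nf
      rw [hH, sum_fam_dsum_three_mul hω hω1, ← Complex.ofReal_mul, ← Complex.ofReal_sub,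
        Complex.norm_real, Real.norm_eq_abs, ← mul_assoc, hRl, mainTerm, if_pos (dvd_mul_right 3 l),
        Nat.mul_div_cancel_left l (by norm_num)]
      refine (abs_sum_monics_sub_avg_le l (j / 2)).trans (mul_le_mul_of_nonneg_left ?_ hT0)
      refine Real.rpow_le_rpow_of_exponent_le one_lt_card_real.le ?_
      have h2 : (j : ℝ) ≤ 2 * ((j / 2 : ℕ) + 1) := by
        exact_mod_cast (by omega : j ≤ 2 * (j / 2 + 1))
      have : (0 : ℝ) ≤ j := Nat.cast_nonneg j
      linarith
    · rw [hH, sum_fam_dsum_eq_zero hω hω1 j hn, mainTerm, if_neg hn, mul_zero, mul_zero,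
        Complex.ofReal_zero, sub_zero, norm_zero]
      exact mul_nonneg hT0 (Real.rpow_pos_of_pos hq0 _).le
  rw [hsplit, mul_add, add_sub_right_comm]
  refine (norm_add_le _ _).trans ?_
  rw [add_mul, add_comm (C * _)]
  refine add_le_add hhead ?_
  rw [norm_mul, Complex.norm_real, Real.norm_of_nonneg hR0.le]
  refine (mul_le_mul_of_nonneg_left (hC n j h3) hR0.le).trans (le_of_eq ?_)
  rw [hR, mul_left_comm, ← Real.rpow_add hq0]
  ring_nf

lemma Lval_eq_sum (hω : ω ^ 3 = 1) (hω1 : ω ≠ 1) {F : K[X]} (hF : F.Monic)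
    (h3 : ¬ 3 ∣ F.natDegree) {χ : K[X] → ℂ} (hχ : ∀ a, χ a = sym ω F a) (q : ℕ) (s : ℝ) :
    Lval q s χ = ∑ n ∈ range F.natDegree,
      (∑ f ∈ monics K n, sym ω F f) * ((q : ℝ) ^ (-s * (n : ℝ)) : ℝ) := by
  obtain rfl : χ = sym ω F := funext hχ
  rw [Lval, tsum_eq_sum (s := range F.natDegree)]
  · exact sum_congr rfl fun n _ => by rw [sumMonic_eq]
  · intro n hn
    have hz := sum_residues_sym_mul_sq_eq_zero hω hω1 hF monic_one (by simpa using h3)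
    rw [mul_one, one_pow, mul_one] at hz
    rw [sumMonic_eq, sum_monics_residues hF (sym_periodic hF) (by simpa using hn), hz, smul_zero,
      zero_mul]

lemma sumSqfree_Lval_eq (hω : ω ^ 3 = 1) (hω1 : ω ≠ 1) {chi : K[X] → K[X] → ℂ}
    (hchi : ∀ F : K[X], F.Monic → ∀ a, chi F a = sym ω F a) {N : ℕ} (h3 : ¬ 3 ∣ N) (q : ℕ) (s : ℝ) :
    sumSqfree N (fun F => Lval q s (chi F)) =
      ∑ n ∈ range N, ((q : ℝ) ^ (-s * (n : ℝ)) : ℝ) * sqfreeSum ω N n := by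
  have h1 : ∀ F ∈ (monics K N).filter Squarefree, Lval q s (chi F) = ∑ n ∈ range N,
      (∑ f ∈ monics K n, sym ω F f) * ((q : ℝ) ^ (-s * (n : ℝ)) : ℝ) := fun F hF => by
    obtain ⟨hm, hd⟩ := mem_monics.1 (mem_filter.1 hF).1
    rw [Lval_eq_sum hω hω1 hm (hd ▸ h3) (hchi F hm), hd]
  rw [sumSqfree_eq, sum_congr rfl h1, sum_comm]
  refine sum_congr rfl fun n _ => ?_
  rw [← sum_mul, mul_comm, sqfreeSum]

lemma sum_mainTerm (g : ℕ) :
    ∑ n ∈ range (3 * g + 1), mainTerm K n = ∑ l ∈ range (g + 1), avg K l := by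
  induction g with
  | zero => simp [mainTerm]
  | succ g ih =>
    rw [show 3 * (g + 1) + 1 = 3 * g + 1 + 1 + 1 + 1 by ring, sum_range_succ, sum_range_succ,
      sum_range_succ, ih, sum_range_succ _ (g + 1), mainTerm, mainTerm, mainTerm,
      if_neg (by omega), if_neg (by omega), if_pos (by omega), add_zero, add_zero,
      show (3 * g + 1 + 1 + 1) / 3 = g + 1 by omega]

lemma exists_norm_mean_sub_le (hq : 7 ≤ Fintype.card K) (hω : ω ^ 3 = 1) (hω1 : ω ≠ 1)
    (hψ : ψ ≠ 1) {chi : K[X] → K[X] → ℂ}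
    (hchi : ∀ F : K[X], F.Monic → ∀ a, chi F a = sym ω F a) : ∃ C : ℝ, ∀ g : ℕ,
      ‖((Fintype.card K : ℂ) ^ (3 * g + 1) - (Fintype.card K : ℂ) ^ (3 * g))⁻¹ *
        sumSqfree (3 * g + 1) (fun F => Lval (Fintype.card K) (1 / 3) (chi F)) -
          ((∑ l ∈ range (g + 1), avg K l : ℝ) : ℂ)‖ ≤ C := by
  obtain ⟨C, hC0, hC⟩ := exists_norm_sqfreeSum_sub_le hq hω hω1 hψ
  have hq0 : (0 : ℝ) < Fintype.card K := card_pos_real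
  have hq1 : (1 : ℝ) < Fintype.card K := one_lt_card_real
  set c : ℝ := 1 - (Fintype.card K : ℝ)⁻¹ with hc
  have hc0 : 0 < c := sub_pos.2 (inv_lt_one_of_one_lt₀ hq1)
  set r := (Fintype.card K : ℝ) ^ (-(1 : ℝ) / 48) with hr
  have hr0 : 0 ≤ r := (Real.rpow_pos_of_pos hq0 _).le
  have hr1 : r < 1 := Real.rpow_lt_one_of_one_lt_of_neg hq1 (by norm_num)
  refine ⟨c⁻¹ * (C * (1 - r)⁻¹), fun g => ?_⟩
  set N := 3 * g + 1 with hN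
  have hN3 : ¬ 3 ∣ N := by omega
  have hfac : (Fintype.card K : ℂ) ^ N - (Fintype.card K : ℂ) ^ (3 * g) =
      ((c * (Fintype.card K : ℝ) ^ N : ℝ) : ℂ) := by
    have : (Fintype.card K : ℝ) ^ N - (Fintype.card K : ℝ) ^ (3 * g) =
        c * (Fintype.card K : ℝ) ^ N := by
      rw [hc, hN, pow_succ]
      field_simp
    rw [← this]
    push_cast
    rfl
  have hterm : ∀ n ∈ range N, ‖(((Fintype.card K : ℝ) ^ (-((N : ℝ) + n / 3)) : ℝ) : ℂ) *
      sqfreeSum ω N n - ((c * mainTerm K n : ℝ) : ℂ)‖ ≤ C * r ^ (N - 1 - n) := by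
    intro n hn
    have hn' : n + (N - n) = N := by have := mem_range.1 hn; omega
    have h := hC n (N - n) (by rwa [hn'])
    rw [← Nat.cast_add, hn'] at h
    refine h.trans (mul_le_mul_of_nonneg_left ?_ hC0.le)
    rw [hr, ← Real.rpow_natCast, ← Real.rpow_mul hq0.le]
    refine Real.rpow_le_rpow_of_exponent_le hq1.le ?_
    have : ((N - 1 - n : ℕ) : ℝ) ≤ (N - n : ℕ) := by exact_mod_cast (by omega)
    linarith
  have hsum : ((Fintype.card K : ℂ) ^ N - (Fintype.card K : ℂ) ^ (3 * g))⁻¹ *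
        sumSqfree N (fun F => Lval (Fintype.card K) (1 / 3) (chi F)) -
          ((∑ l ∈ range (g + 1), avg K l : ℝ) : ℂ) =
      ((c⁻¹ : ℝ) : ℂ) * ∑ n ∈ range N, ((((Fintype.card K : ℝ) ^ (-((N : ℝ) + n / 3)) : ℝ) : ℂ) *
        sqfreeSum ω N n - ((c * mainTerm K n : ℝ) : ℂ)) := by
    have hm : ((∑ l ∈ range (g + 1), avg K l : ℝ) : ℂ) =
        ((c⁻¹ : ℝ) : ℂ) * ∑ n ∈ range N, ((c * mainTerm K n : ℝ) : ℂ) := by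
      rw [← Complex.ofReal_sum, ← Complex.ofReal_mul, ← mul_sum, inv_mul_cancel_left₀ hc0.ne',
        sum_mainTerm]
    rw [hm, sumSqfree_Lval_eq hω hω1 hchi hN3, hfac, sum_sub_distrib, mul_sub]
    congr 1
    rw [mul_sum, mul_sum]
    refine sum_congr rfl fun n _ => ?_
    have hexp : (c * (Fintype.card K : ℝ) ^ N)⁻¹ * (Fintype.card K : ℝ) ^ (-(1 / 3) * (n : ℝ)) =
        c⁻¹ * (Fintype.card K : ℝ) ^ (-((N : ℝ) + n / 3)) := by
      rw [mul_inv, mul_assoc, ← Real.rpow_natCast, ← Real.rpow_neg hq0.le, ← Real.rpow_add hq0]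
      ring_nf
    rw [← mul_assoc, ← mul_assoc, ← Complex.ofReal_inv, ← Complex.ofReal_mul, ← Complex.ofReal_mul,
      hexp]
  rw [hsum, norm_mul, Complex.norm_real, Real.norm_of_nonneg (inv_pos.2 hc0).le]
  refine mul_le_mul_of_nonneg_left ?_ (inv_pos.2 hc0).le
  refine (norm_sum_le_of_le _ hterm).trans ?_
  rw [← mul_sum, sum_range_reflect (fun i => r ^ i) N, ← tsum_geometric_of_lt_one hr0 hr1]
  refine mul_le_mul_of_nonneg_left ?_ hC0.le
  exact (summable_geometric_of_lt_one hr0 hr1).sum_le_tsum _ fun i _ => pow_nonneg hr0 i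

lemma isLittleO_sum_avg_sub :
    (fun g : ℕ => ∑ l ∈ range (g + 1), avg K l - Cq (Fintype.card K) K * g) =o[atTop]
      fun g : ℕ => (g : ℝ) := by
  have h0 : Tendsto (fun l => avg K l - Cq (Fintype.card K) K) atTop (nhds 0) := by
    simpa using (tendsto_avg (K := K)).sub_const (Cq (Fintype.card K) K)
  have h1 := Asymptotics.isLittleO_sum_range_of_tendsto_zero h0
  have hcast : Tendsto (fun g : ℕ => ‖(g : ℝ)‖) atTop atTop :=
    tendsto_norm_atTop_atTop.comp tendsto_natCast_atTop_atTop
  have h2 : (avg K) =o[atTop] fun g : ℕ => (g : ℝ) :=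
    (tendsto_avg.isBigO_one ℝ).trans_isLittleO (Asymptotics.isLittleO_const_left.2 (Or.inr hcast))
  refine (h1.add h2).congr_left fun g => ?_
  rw [sum_sub_distrib, sum_const, card_range, nsmul_eq_mul, sum_range_succ]
  ring
end

/-- **Corollary 1.2 (second part).** For fixed `q ≡ 1 (mod 6)` a prime power, the expected
value of `L(1/3,χ)` over the family `𝔥(3g)` is asymptotic to `C_q · g` as `g → ∞`. -/
theorem expected_value_cubic_L_at_one_third_asymptotic
    (q : ℕ) (Fq : Type) [Field Fq] [Fintype Fq]
    (hq : IsPrimePow q) (hq6 : q % 6 = 1) (hcard : Fintype.card Fq = q)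
    (Ω : Fq → ℂ) (chi : Polynomial Fq → Polynomial Fq → ℂ)
    (hchi : IsCubicSymbol q Ω chi) :
    Asymptotics.IsEquivalent Filter.atTop
      (fun g : ℕ =>
        ((q : ℂ) ^ (3 * g + 1) - (q : ℂ) ^ (3 * g))⁻¹ *
          sumSqfree (3 * g + 1) (fun F => Lval q (1 / 3) (chi F)))
      (fun g : ℕ => ((Cq q Fq * (g : ℝ) : ℝ) : ℂ)) := by
  subst hcard
  have hq7 : 7 ≤ Fintype.card Fq := by
    have := hq.one_lt
    omega
  obtain ⟨ω, hω, hω1, hωΩ⟩ := exists_cubic_mulChar hq6 hchi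
  obtain ⟨ψ, hψ⟩ := AddChar.exists_apply_ne_zero.2 (one_ne_zero (α := Fq))
  have hψ1 : ψ ≠ 1 := fun h => hψ (by rw [h, AddChar.one_apply])
  obtain ⟨C, hC⟩ := exists_norm_mean_sub_le hq7 hω hω1 hψ1
    (fun F hF a => chi_eq_sym hq6 hchi hωΩ hF a)
  have hcast : Tendsto (fun g : ℕ => ‖(g : ℝ)‖) atTop atTop :=
    tendsto_norm_atTop_atTop.comp tendsto_natCast_atTop_atTop
  have hle : ∀ g : ℕ, ‖((Fintype.card Fq : ℂ) ^ (3 * g + 1) - (Fintype.card Fq : ℂ) ^ (3 * g))⁻¹ *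
      sumSqfree (3 * g + 1) (fun F => Lval (Fintype.card Fq) (1 / 3) (chi F)) -
        ((∑ l ∈ range (g + 1), avg Fq l : ℝ) : ℂ)‖ ≤ C * ‖(1 : ℝ)‖ := fun g => by
    rw [norm_one, mul_one]
    exact hC g
  have hbdd := (Asymptotics.IsBigO.of_bound C (Eventually.of_forall hle)).trans_isLittleO
    (Asymptotics.isLittleO_const_left.2 (Or.inr hcast))
  have hmain := (Complex.isLittleO_ofReal_left).2 (isLittleO_sum_avg_sub (K := Fq))
  refine Asymptotics.IsLittleO.trans_isBigO ((hbdd.add hmain).congr_left fun g => ?_)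
    (g := fun g : ℕ => (g : ℝ)) ?_
  · rw [Pi.sub_apply, Complex.ofReal_sub]
    ring
  · refine Complex.isBigO_ofReal_right.2 ?_
    exact Asymptotics.isBigO_self_const_mul Cq_ne_zero _ _
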